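/- For every integer α ≥ 1 there exist integers d(3,0) and d(n,0), d(n,1), d(n,2) for n ≥ 4 such that, in the d_5 tower, L_{2α−1} = 7·d(3,0)·(p_0 + p_1)·t^3 + p_0·∑_{n≥4} d(n,0)·7^{⌊(7n−20)/4⌋}·t^n + p_1·∑_{n≥4} d(n,1)·7^{⌊(7n−24)/4⌋}·t^n + ∑_{n≥4} d(n,2)·7^{⌊(7n−24)/4⌋}·t^n, where the infinite sums converge coefficientwise since t^n has q-order n. -/

import Mathlib

noncomputable section

/-- `J b = ∏_{k=1}^∞ (1 - q^{b·k})` as a formal power series with integer coefficients. -/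
def J (b : ℕ) : PowerSeries ℤ :=
  PowerSeries.mk fun n =>
    PowerSeries.coeff n
      (∏ k ∈ Finset.range (n + 1), (1 - (PowerSeries.X : PowerSeries ℤ) ^ (b * (k + 1))))

/-- The coefficientwise-convergent sum `∑_{n≥0} c(n)·t^n`: since `t` has q-order 1, the
coefficient of `q^m` only receives contributions from `n ≤ m`. -/
def tpowSum (t : PowerSeries ℤ) (c : ℕ → ℤ) : PowerSeries ℤ :=
  PowerSeries.mk fun m =>
    ∑ n ∈ Finset.range (m + 1), c n * PowerSeries.coeff m (t ^ n)

/-!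
Write `V` for `q ↦ q⁷`, so that `U₇ (V x * z) = x * U₇ z`. The 7-dissection of `J₁ / (q² J₄₉)` is
`α + β + γ - 1`. Comparing residue classes modulo 7 in its cube (Jacobi) and in its square
(`J₁² = φ J₂`, with `φ` a theta series) shows that the dissections of `J₁`, `J₂` and `φ` are all
governed by three series `λ, μ, ν` with `λμν = 1` and `λ + μ + ν + λμ + μν + νλ = -1`. The functions
`1/t`, `p₁/t` and `(1 + 7 p₀) / p₁²` are explicit rotation-invariant polynomials in `λ, μ, ν`; for
`1/t` this holds because `V (1/t²)` is the product of the conjugates of `α + β + γ - 1` under the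
substitutions `q ↦ ζ q` with `ζ⁷ = 1`.

The inverse `y` of `α + β + γ - 1` satisfies an equation of degree 7 over `V ℤ[t]` whose
coefficients are divisible by high powers of 7. Up to factors in the image of `V`, multiplication by
`t` is multiplication by `y⁴`. Hence the 7-adic estimates for the expansions of `U₇ (x tʳ)` and
`U₇ (A₅ x tʳ)`, with `x` one of `p₀`, `p₁`, `1`, follow by recurrence from seven consecutive cases,
which are finite identities in the ring of rotation invariants. These estimates say that the two
steps of the tower exchange the divisibility conditions for `L_{2α}` and `L_{2α+1}`.
-/

namespace D5Tower

/-! ### Kernel-computable polynomials -/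

/-- An integer polynomial as the list of its coefficients, constant term first. In contrast to
`Polynomial ℤ`, the kernel can compute with it. -/
abbrev CoeffList : Type := List ℤ

namespace CoeffList

/-- Prepends a coefficient, dropping it when it would be a trailing zero; the lists of the
certificates below stay short only because of this. -/
def cons (c : ℤ) : CoeffList → CoeffList
  | [] => if c = 0 then [] else [c]
  | d :: p => c :: d :: p

/-- The sum of two polynomials. -/
def add : CoeffList → CoeffList → CoeffList
  | [] => fun q => q
  | c :: p => fun
    | [] => c :: p
    | d :: q => cons (c + d) (add p q)

/-- The multiple of a polynomial by an integer. -/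
def scale (c : ℤ) (p : CoeffList) : CoeffList := p.map (c * ·)

/-- The product of two polynomials. -/
def mul : CoeffList → CoeffList → CoeffList
  | [], _ => []
  | c :: p, q => add (scale c q) (cons 0 (mul p q))

scoped instance : Add CoeffList := ⟨add⟩
scoped instance : Neg CoeffList := ⟨scale (-1)⟩
scoped instance : Sub CoeffList := ⟨fun p q => p + -q⟩
scoped instance : Mul CoeffList := ⟨mul⟩

/-- Multiplication by the variable. -/
def shift (p : CoeffList) : CoeffList := cons 0 p

/-- Multiplication by the variable plus one. -/
def shiftAdd (p : CoeffList) : CoeffList := p + shift p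

/-- The test that all coefficients vanish. -/
def isZero (p : CoeffList) : Bool := p.all (· == 0)

/-- The value of a polynomial at a point, by Horner's rule. -/
def eval {R : Type*} [CommRing R] (x : R) : CoeffList → R
  | [] => 0
  | c :: p => c + x * eval x p

variable {R : Type*} [CommRing R] (x : R) (p q : CoeffList)

@[simp] theorem eval_nil : eval x [] = 0 := rfl

@[simp] theorem eval_list_cons (c : ℤ) : eval x (c :: p : List ℤ) = c + x * eval x p := rfl

@[simp] theorem eval_cons (c : ℤ) : eval x (cons c p) = c + x * eval x p := by
  rcases p with _ | ⟨d, p⟩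
  · by_cases h : c = 0 <;> simp [cons, h]
  · rfl

@[simp] theorem eval_add : eval x (p + q) = eval x p + eval x q := by
  change eval x (add p q) = _
  induction p generalizing q with
  | nil => simp [add]
  | cons c p ih =>
    rcases q with _ | ⟨d, q⟩
    · simp [add]
    · simp only [add, eval_cons, ih, eval_list_cons, Int.cast_add]
      ring

@[simp] theorem eval_scale (c : ℤ) : eval x (scale c p) = c * eval x p := by
  induction p with
  | nil => simp [scale]
  | cons d p ih =>
    change ((c * d : ℤ) : R) + x * eval x (scale c p) = c * (d + x * eval x p)
    rw [ih]
    push_cast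
    ring

@[simp] theorem eval_neg : eval x (-p) = -eval x p :=
  (eval_scale x p (-1)).trans (by push_cast; ring)

@[simp] theorem eval_sub : eval x (p - q) = eval x p - eval x q :=
  (eval_add x p (-q)).trans (by rw [eval_neg, sub_eq_add_neg])

@[simp] theorem eval_mul : eval x (p * q) = eval x p * eval x q := by
  change eval x (mul p q) = _
  induction p with
  | nil => simp [mul]
  | cons c p ih =>
    change eval x (scale c q + cons 0 (mul p q)) = _
    simp only [eval_add, eval_scale, eval_cons, ih, eval_list_cons, Int.cast_zero]
    ring

@[simp] theorem eval_shift : eval x (shift p) = x * eval x p := by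
  simp [shift]

@[simp] theorem eval_shiftAdd : eval x (shiftAdd p) = (1 + x) * eval x p := by
  simp only [shiftAdd, eval_add, eval_shift]
  ring

theorem eval_eq_zero (hp : p.isZero = true) : eval x p = 0 := by
  induction p with
  | nil => rfl
  | cons c p ih =>
    obtain ⟨hc, hp⟩ : c = 0 ∧ ∀ d ∈ p, d = 0 := by simpa [isZero] using hp
    rw [eval_list_cons, ih (by simpa [isZero] using hp), hc]
    simp

theorem map_eval {S : Type*} [CommRing S] (f : R →+* S) : f (eval x p) = eval (f x) p := by
  induction p with
  | nil => simp
  | cons c p ih => simp [ih]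

theorem eval_eq_sum_range {N : ℕ} (hN : p.length ≤ N) :
    eval x p = ∑ i ∈ Finset.range N, (p.getD i 0 : ℤ) * x ^ i := by
  induction p generalizing N with
  | nil => simp
  | cons c p ih =>
    obtain ⟨N, rfl⟩ : ∃ M, N = M + 1 := Nat.exists_eq_add_of_le' (Nat.one_le_of_lt hN)
    rw [Finset.sum_range_succ', eval_list_cons, ih (by simpa using hN), Finset.mul_sum, add_comm]
    congr 1
    · exact Finset.sum_congr rfl fun i _ => by simp only [List.getD_cons_succ]; ring
    · simp

end CoeffList

open scoped CoeffList

/-! ### The cubic cover and the 7-dissection -/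

/-- The relations between the three quotients `l`, `m`, `n` of theta functions that parametrise
the 7-dissection. They are invariant under the rotation `l → m → n → l`. -/
structure CyclicTriple {R : Type*} [CommRing R] (l m n : R) : Prop where
  prod_eq : l * m * n = 1
  sum_eq : l + m + n + l * m + m * n + n * l = -1

section Invariants

variable {R : Type*} [CommRing R] (l m n : R)

/-- The second generator, besides `l + m + n`, of the rotation invariants. -/
def tau : R := l ^ 2 * m + m ^ 2 * n + n ^ 2 * l

/-- The value of `1 / t`. -/
def hInv : R := l + m + n - 7 - (l ^ 2 * n + m ^ 2 * l + n ^ 2 * m)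

/-- The value of `1 / t` at `q²`. -/
def hInvTwo : R := -(l ^ 2 * m + m ^ 2 * n + n ^ 2 * l) - (l + m + n) - 8

/-- The value of `(1 + 7 p₀) / p₁²`. -/
def vInv : R := (-1 - l - l * m) * (-1 - n - l * n) * (-1 - m - m * n)

end Invariants

namespace CyclicTriple

variable {R : Type*} [CommRing R] {l m n : R}

theorem rotate (h : CyclicTriple l m n) : CyclicTriple m n l where
  prod_eq := by linear_combination h.prod_eq
  sum_eq := by linear_combination h.sum_eq

-- `τ` and its mirror image `l² n + m² l + n² m` are the roots of a quadratic over `ℤ[l + m + n]`.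
theorem tau_sq (h : CyclicTriple l m n) :
    tau l m n ^ 2 = -((l + m + n) ^ 2 + (l + m + n) + 3) * tau l m n
      - (3 * (l + m + n) ^ 2 + 3 * (l + m + n) + 8) := by
  unfold tau
  linear_combination ((l + m + n) * (l ^ 2 * m + m ^ 2 * n + n ^ 2 * l)
      - ((l * m + m * n + n * l) ^ 2 - (l * m + m * n + n * l) * (1 + l + m + n)
        + (1 + l + m + n) ^ 2 - 6 * (l + m + n))) * h.sum_eq
    - (3 * (l ^ 2 * m + m ^ 2 * n + n ^ 2 * l) + (l + m + n) ^ 3 + 9 * (l * m * n + 1)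
        - 6 * (l + m + n) * (l * m + m * n + n * l)) * h.prod_eq

end CyclicTriple

/-- An element `u(s) + w(s) τ` of the ring of rotation invariants, where `s = l + m + n`. -/
structure Invariant where
  u : CoeffList
  w : CoeffList

namespace Invariant

instance : Add Invariant := ⟨fun x y => ⟨x.u + y.u, x.w + y.w⟩⟩
instance : Neg Invariant := ⟨fun x => ⟨-x.u, -x.w⟩⟩
instance : Sub Invariant := ⟨fun x y => x + -y⟩

/-- Multiplication uses `τ² = -(s² + s + 3) τ - (3 s² + 3 s + 8)`. -/
instance : Mul Invariant where
  mul x y :=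
    ⟨x.u * y.u - [8, 3, 3] * (x.w * y.w), x.u * y.w + x.w * y.u - [3, 1, 1] * (x.w * y.w)⟩

/-- The test that both coordinates vanish. -/
def isZero (x : Invariant) : Bool := x.u.isZero && x.w.isZero

/-- The value of an invariant at a given triple. -/
def eval {R : Type*} [CommRing R] (l m n : R) (x : Invariant) : R :=
  x.u.eval (l + m + n) + x.w.eval (l + m + n) * tau l m n

/-- The constant invariants. -/
def const (c : ℤ) : Invariant := ⟨[c], []⟩

/-- The invariant with value `hInv`. -/
def h : Invariant := ⟨[-4, 2, 1], [1]⟩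

/-- The invariant with value `hInvTwo`. -/
def hTwo : Invariant := ⟨[-8, -1], [-1]⟩

/-- The invariant with value `vInv`. -/
def v : Invariant := ⟨[0, 1, 1], [1]⟩

/-- The value of a polynomial at the invariant `h`. -/
def ofPolyH : CoeffList → Invariant
  | [] => const 0
  | c :: p => const c + h * ofPolyH p

section Eval

variable {R : Type*} [CommRing R] {l m n : R} (x y : Invariant)

@[simp] theorem eval_add : (x + y).eval l m n = x.eval l m n + y.eval l m n := by
  change (x.u + y.u).eval _ + (x.w + y.w).eval _ * _ = _
  simp only [CoeffList.eval_add, eval]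
  ring

@[simp] theorem eval_neg : (-x).eval l m n = -x.eval l m n := by
  change (-x.u).eval _ + (-x.w).eval _ * _ = _
  simp only [CoeffList.eval_neg, eval]
  ring

@[simp] theorem eval_sub : (x - y).eval l m n = x.eval l m n - y.eval l m n :=
  (eval_add x (-y)).trans (by rw [eval_neg, sub_eq_add_neg])

@[simp] theorem eval_const (c : ℤ) : (const c).eval l m n = c := by
  simp [const, eval]

theorem eval_eq_zero (hx : x.isZero = true) : x.eval l m n = 0 := by
  obtain ⟨hu, hw⟩ : x.u.isZero = true ∧ x.w.isZero = true := by simpa [isZero] using hx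
  simp [eval, CoeffList.eval_eq_zero _ _ hu, CoeffList.eval_eq_zero _ _ hw]

theorem eval_rotate : x.eval m n l = x.eval l m n := by
  rw [eval, eval, show m + n + l = l + m + n by ring, show tau m n l = tau l m n by
    unfold tau; ring]

theorem map_eval {S : Type*} [CommRing S] (f : R →+* S) :
    f (x.eval l m n) = x.eval (f l) (f m) (f n) := by
  simp [eval, tau, CoeffList.map_eval]

theorem eval_hTwo : hTwo.eval l m n = hInvTwo l m n := by
  simp only [hTwo, eval, hInvTwo, tau, CoeffList.eval_list_cons, CoeffList.eval_nil]
  push_cast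
  ring

theorem eval_mul (H : CyclicTriple l m n) : (x * y).eval l m n = x.eval l m n * y.eval l m n := by
  have tau_sq := H.tau_sq
  change (x.u * y.u - [8, 3, 3] * (x.w * y.w)).eval _
    + (x.u * y.w + x.w * y.u - [3, 1, 1] * (x.w * y.w)).eval _ * _ = _
  simp only [CoeffList.eval_sub, CoeffList.eval_add, CoeffList.eval_mul, CoeffList.eval_list_cons,
    CoeffList.eval_nil, eval]
  push_cast
  linear_combination -(x.w.eval (l + m + n) * y.w.eval (l + m + n)) * tau_sq

theorem eval_h (H : CyclicTriple l m n) : h.eval l m n = hInv l m n := by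
  simp only [h, eval, hInv, tau, CoeffList.eval_list_cons, CoeffList.eval_nil]
  push_cast
  linear_combination (l + m + n) * H.sum_eq - 3 * H.prod_eq

theorem eval_v (H : CyclicTriple l m n) : v.eval l m n = vInv l m n := by
  simp only [v, eval, vInv, tau, CoeffList.eval_list_cons, CoeffList.eval_nil]
  push_cast
  linear_combination (l + m + n + 3) * H.sum_eq
    + ((1 + l) * (1 + m + m * n) + 1 + l + 2 * n + l * n + m) * H.prod_eq

theorem eval_ofPolyH (H : CyclicTriple l m n) (p : CoeffList) :
    (ofPolyH p).eval l m n = p.eval (hInv l m n) := by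
  induction p with
  | nil => simp [ofPolyH]
  | cons c p ih => simp [ofPolyH, eval_mul _ _ H, eval_h H, ih]

end Eval

end Invariant

/-- An element `a₀ + a₁ l + a₂ l² + (a₃ + a₄ l + a₅ l²) m` of the cubic cover, with coefficients
in `ℤ[s]` for `s = l + m + n`. -/
structure CubicElem where
  (a₀ a₁ a₂ a₃ a₄ a₅ : CoeffList)

namespace CubicElem

open CoeffList (scale shift shiftAdd)

instance : Add CubicElem where
  add x y :=
    ⟨x.a₀ + y.a₀, x.a₁ + y.a₁, x.a₂ + y.a₂, x.a₃ + y.a₃, x.a₄ + y.a₄, x.a₅ + y.a₅⟩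

/-- The multiple of an element by an integer. -/
def smul (c : ℤ) (x : CubicElem) : CubicElem :=
  ⟨scale c x.a₀, scale c x.a₁, scale c x.a₂, scale c x.a₃, scale c x.a₄, scale c x.a₅⟩

instance : Sub CubicElem where
  sub x y := x + smul (-1) y

/-- The substitution `l → m → n → l`. -/
def rot (x : CubicElem) : CubicElem :=
  ⟨x.a₀ + shiftAdd x.a₂ + (shift x.a₃ - shiftAdd x.a₄), shift (x.a₂ - x.a₄) - x.a₃,
    x.a₄ - x.a₂, x.a₁ + shift x.a₂ - (x.a₃ + shiftAdd x.a₅), -(x.a₂ + shift x.a₅), x.a₅⟩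

/-- Multiplication by `l`. -/
def mulL (x : CubicElem) : CubicElem :=
  ⟨x.a₂, x.a₀ + shiftAdd x.a₂, x.a₁ + shift x.a₂, x.a₅, x.a₃ + shiftAdd x.a₅,
    x.a₄ + shift x.a₅⟩

/-- Multiplication by `m`. -/
def mulM (x : CubicElem) : CubicElem :=
  ⟨shiftAdd x.a₃ - x.a₄, shift x.a₃ - x.a₅, -x.a₃, x.a₀ + (shift x.a₃ - x.a₅),
    x.a₁ + shift x.a₄ - (x.a₃ + shiftAdd x.a₅), x.a₂ - x.a₄⟩

/-- Multiplication by `n`. -/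
def mulN (x : CubicElem) : CubicElem :=
  ⟨shift x.a₀ + x.a₄ - (x.a₂ + shiftAdd x.a₃),
    shift x.a₁ + x.a₅ - (x.a₀ + (shiftAdd x.a₂ + shift x.a₃)), x.a₃ - x.a₁, -x.a₀, -x.a₁, -x.a₂⟩

/-- Multiplication by the invariant `h`. -/
def mulH (x : CubicElem) : CubicElem :=
  x.mulL + x.mulM + x.mulN - smul 7 x
    - (x.mulL.mulL.mulN + x.mulM.mulM.mulL + x.mulN.mulN.mulM)

/-- Multiplication by `l n (1 + l)`. -/
def mulLN (x : CubicElem) : CubicElem := (x + x.mulL).mulL.mulN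

/-- The sum over the three rotations. -/
def trace (x : CubicElem) : Invariant :=
  ⟨scale 3 x.a₀ + shift (x.a₁ + x.a₃) + ([2, 2, 1] * x.a₂ - shiftAdd x.a₄), x.a₅⟩

/-- The coordinates of an invariant. -/
def ofInvariant (x : Invariant) : CubicElem :=
  ⟨x.u, [1, 1, 1] * x.w, -shift x.w, -shiftAdd x.w, [0, -2] * x.w, scale 3 x.w⟩

/-- The test that all coordinates vanish. -/
def isZero (x : CubicElem) : Bool :=
  [x.a₀, x.a₁, x.a₂, x.a₃, x.a₄, x.a₅].all CoeffList.isZero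

variable {R : Type*} [CommRing R] {l m n : R} (x y : CubicElem)

/-- The value of an element at a given triple. -/
def eval (l m n : R) (x : CubicElem) : R :=
  x.a₀.eval (l + m + n) + x.a₁.eval (l + m + n) * l + x.a₂.eval (l + m + n) * l ^ 2
    + (x.a₃.eval (l + m + n) + x.a₄.eval (l + m + n) * l + x.a₅.eval (l + m + n) * l ^ 2) * m

theorem eval_add : (x + y).eval l m n = x.eval l m n + y.eval l m n := by
  change eval l m n ⟨_, _, _, _, _, _⟩ = _
  simp only [eval, CoeffList.eval_add]
  ring

theorem eval_smul (c : ℤ) : (smul c x).eval l m n = c * x.eval l m n := by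
  simp only [smul, eval, CoeffList.eval_scale]
  ring

theorem eval_sub : (x - y).eval l m n = x.eval l m n - y.eval l m n :=
  (eval_add x (smul (-1) y)).trans (by rw [eval_smul]; push_cast; ring)

theorem eval_eq_zero (hx : x.isZero = true) : x.eval l m n = 0 := by
  obtain ⟨h₀, h₁, h₂, h₃, h₄, h₅⟩ : x.a₀.isZero = true ∧ x.a₁.isZero = true ∧
      x.a₂.isZero = true ∧ x.a₃.isZero = true ∧ x.a₄.isZero = true ∧ x.a₅.isZero = true := by
    simpa [isZero] using hx
  simp [eval, CoeffList.eval_eq_zero, *]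

theorem map_eval {S : Type*} [CommRing S] (f : R →+* S) :
    f (x.eval l m n) = x.eval (f l) (f m) (f n) := by
  simp [eval, CoeffList.map_eval]

theorem eval_trace (H : CyclicTriple l m n) :
    x.trace.eval l m n = x.eval l m n + x.eval m n l + x.eval n l m := by
  simp only [trace, eval, Invariant.eval, tau, CoeffList.eval_add, CoeffList.eval_sub,
    CoeffList.eval_mul, CoeffList.eval_scale, CoeffList.eval_shift, CoeffList.eval_shiftAdd,
    CoeffList.eval_list_cons, CoeffList.eval_nil, show m + n + l = l + m + n by ring,
    show n + l + m = l + m + n by ring]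
  push_cast
  linear_combination (2 * x.a₂.eval (l + m + n) - x.a₄.eval (l + m + n)) * H.sum_eq

theorem eval_ofInvariant (H : CyclicTriple l m n) (x : Invariant) :
    (ofInvariant x).eval l m n = x.eval l m n := by
  simp only [ofInvariant, eval, Invariant.eval, tau, CoeffList.eval_neg, CoeffList.eval_mul,
    CoeffList.eval_scale, CoeffList.eval_shift, CoeffList.eval_shiftAdd,
    CoeffList.eval_list_cons, CoeffList.eval_nil]
  push_cast
  linear_combination x.w.eval (l + m + n) * (l - m) * H.sum_eq

theorem eval_rot (H : CyclicTriple l m n) : x.rot.eval l m n = x.eval m n l := by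
  simp only [rot, eval, CoeffList.eval_add, CoeffList.eval_sub, CoeffList.eval_neg,
    CoeffList.eval_shift, CoeffList.eval_shiftAdd, show m + n + l = l + m + n by ring]
  linear_combination (x.a₂.eval (l + m + n) - x.a₄.eval (l + m + n)
    - m * x.a₅.eval (l + m + n)) * H.sum_eq

theorem eval_mulL (H : CyclicTriple l m n) : x.mulL.eval l m n = l * x.eval l m n := by
  simp only [mulL, eval, CoeffList.eval_add, CoeffList.eval_shift, CoeffList.eval_shiftAdd]
  linear_combination (x.a₂.eval (l + m + n) + x.a₅.eval (l + m + n) * m)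
    * (l * H.sum_eq - H.prod_eq)

theorem eval_mulM (H : CyclicTriple l m n) : x.mulM.eval l m n = m * x.eval l m n := by
  simp only [mulM, eval, CoeffList.eval_add, CoeffList.eval_sub, CoeffList.eval_neg,
    CoeffList.eval_shift, CoeffList.eval_shiftAdd]
  linear_combination
    (x.a₃.eval (l + m + n) + x.a₄.eval (l + m + n) * l + x.a₅.eval (l + m + n) * l ^ 2) * H.sum_eq
    + (x.a₅.eval (l + m + n) * (l + m) + x.a₄.eval (l + m + n)) * (H.prod_eq - l * H.sum_eq)

theorem eval_mulN (H : CyclicTriple l m n) : x.mulN.eval l m n = n * x.eval l m n := by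
  simp only [mulN, eval, CoeffList.eval_add, CoeffList.eval_sub, CoeffList.eval_neg,
    CoeffList.eval_shift, CoeffList.eval_shiftAdd]
  linear_combination
    -(x.a₃.eval (l + m + n) + x.a₄.eval (l + m + n) * l + x.a₅.eval (l + m + n) * l ^ 2) * H.sum_eq
    + (x.a₅.eval (l + m + n) * l + x.a₄.eval (l + m + n) - x.a₂.eval (l + m + n))
      * (l * H.sum_eq - H.prod_eq)

theorem eval_mulH (H : CyclicTriple l m n) : x.mulH.eval l m n = hInv l m n * x.eval l m n := by
  simp only [mulH, hInv, eval_add, eval_sub, eval_smul, eval_mulL _ H, eval_mulM _ H,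
    eval_mulN _ H]
  push_cast
  ring

theorem eval_mulLN (H : CyclicTriple l m n) :
    x.mulLN.eval l m n = l * n * (1 + l) * x.eval l m n := by
  simp only [mulLN, eval_add, eval_mulL _ H, eval_mulN _ H]
  ring

end CubicElem

/-- The relations between the three nonconstant terms `a`, `b`, `c` of the 7-dissection, over a
cyclic triple `l`, `m`, `n`. -/
structure DissectionTriple {R : Type*} [CommRing R] (l m n a b c : R) : Prop where
  cyclic : CyclicTriple l m n
  prod_eq : a * b * c = -1
  sq_a : a ^ 2 = -(l * n * (1 + l)) * c
  sq_b : b ^ 2 = -(m * l * (1 + m)) * a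
  sq_c : c ^ 2 = -(n * m * (1 + n)) * b

namespace DissectionTriple

variable {R : Type*} [CommRing R] {l m n a b c : R}

theorem rotate (D : DissectionTriple l m n a b c) : DissectionTriple m n l b c a where
  cyclic := D.cyclic.rotate
  prod_eq := by linear_combination D.prod_eq
  sq_a := D.sq_b
  sq_b := D.sq_c
  sq_c := D.sq_a

theorem mul_sq_a (D : DissectionTriple l m n a b c) :
    c * a ^ 2 = -(1 + n * m * (1 + n)) * b := by
  linear_combination c * D.sq_a - l * n * (1 + l) * D.sq_c
    + b * ((n * (1 + l) * (1 + n) - 1) * D.cyclic.prod_eq + n * D.cyclic.sum_eq)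

end DissectionTriple

/-- A rotation-invariant element `x + ∑ y a + ∑ z a b` of the algebra generated by a dissection
triple; the sums are over the simultaneous rotations of `l, m, n` and `a, b, c`, so that only the
coefficients of `a` and of `a b` are recorded. -/
structure DissectionElem where
  const : Invariant
  coeffA : CubicElem
  coeffAB : CubicElem

namespace DissectionElem

instance : Add DissectionElem where
  add x y := ⟨x.const + y.const, x.coeffA + y.coeffA, x.coeffAB + y.coeffAB⟩

/-- The unit element. -/
def one : DissectionElem := ⟨.const 1, ⟨[], [], [], [], [], []⟩, ⟨[], [], [], [], [], []⟩⟩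

/-- The multiple of an element by an integer. -/
def smul (c : ℤ) (x : DissectionElem) : DissectionElem :=
  ⟨.const c * x.const, .smul c x.coeffA, .smul c x.coeffAB⟩

/-- Multiplication by the invariant `h`. -/
def mulH (x : DissectionElem) : DissectionElem :=
  ⟨.h * x.const, x.coeffA.mulH, x.coeffAB.mulH⟩

/-- Multiplication by `a + b + c - 1`. -/
def mulY (x : DissectionElem) : DissectionElem where
  const := -(x.const + x.coeffAB.trace)
  coeffA := .ofInvariant x.const - x.coeffA - ((x.coeffA + x.coeffAB).mulLN + x.coeffAB).rot
  coeffAB := x.coeffA + x.coeffA.rot - x.coeffAB - x.coeffAB.mulLN.rot.rot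

/-- Multiplication by `m a + n b + l c - 1`. -/
def mulZ (x : DissectionElem) : DissectionElem where
  const := -(x.const + x.coeffAB.mulL.trace)
  coeffA := (CubicElem.ofInvariant x.const).mulM - x.coeffA
    - ((x.coeffA + x.coeffA.mulL) + (x.coeffAB.mulLN + x.coeffAB).mulN).rot
  coeffAB := x.coeffA.mulL.rot + x.coeffA.mulN
    - ((x.coeffAB + x.coeffAB.mulL).rot.rot + x.coeffAB)

/-- The element `(m a + n b + l c - 1) ^ e * (a + b + c - 1) ^ k`. -/
def power (e : ℕ) : ℕ → DissectionElem
  | 0 => mulZ^[e] one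
  | k + 1 => (power e k).mulY

/-- The test that all coordinates vanish. -/
def isZero (x : DissectionElem) : Bool :=
  x.const.isZero && x.coeffA.isZero && x.coeffAB.isZero

variable {R : Type*} [CommRing R]

/-- The value of an element at a given dissection triple. -/
def eval (l m n a b c : R) (x : DissectionElem) : R :=
  x.const.eval l m n
    + (x.coeffA.eval l m n * a + x.coeffA.eval m n l * b + x.coeffA.eval n l m * c)
    + (x.coeffAB.eval l m n * (a * b) + x.coeffAB.eval m n l * (b * c)
      + x.coeffAB.eval n l m * (c * a))

variable {l m n a b c : R} (x y : DissectionElem)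

theorem eval_add : (x + y).eval l m n a b c = x.eval l m n a b c + y.eval l m n a b c := by
  change eval l m n a b c ⟨_, _, _⟩ = _
  simp only [eval, Invariant.eval_add, CubicElem.eval_add]
  ring

theorem eval_eq_zero (hx : x.isZero = true) : x.eval l m n a b c = 0 := by
  obtain ⟨⟨hconst, hA⟩, hAB⟩ :
      (x.const.isZero = true ∧ x.coeffA.isZero = true) ∧ x.coeffAB.isZero = true := by
    simpa [isZero] using hx
  simp [eval, Invariant.eval_eq_zero, CubicElem.eval_eq_zero, *]

theorem eval_one : one.eval l m n a b c = 1 := by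
  simp [one, eval, CubicElem.eval]

theorem eval_smul (H : CyclicTriple l m n) (k : ℤ) :
    (smul k x).eval l m n a b c = k * x.eval l m n a b c := by
  simp only [smul, eval, Invariant.eval_mul _ _ H, Invariant.eval_const, CubicElem.eval_smul]
  ring

theorem hInv_rotate : hInv m n l = hInv l m n := by
  unfold hInv
  ring

theorem eval_mulH (H : CyclicTriple l m n) :
    x.mulH.eval l m n a b c = hInv l m n * x.eval l m n a b c := by
  simp only [mulH, eval, Invariant.eval_mul _ _ H, Invariant.eval_h H, CubicElem.eval_mulH _ H,
    CubicElem.eval_mulH _ H.rotate, CubicElem.eval_mulH _ H.rotate.rotate,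
    hInv_rotate (l := l), hInv_rotate (l := m)]
  ring

theorem eval_mulY (D : DissectionTriple l m n a b c) :
    x.mulY.eval l m n a b c = (a + b + c - 1) * x.eval l m n a b c := by
  have H := D.cyclic
  have H₂ := H.rotate
  have H₃ := H₂.rotate
  simp only [mulY, eval, Invariant.eval_neg, Invariant.eval_add, CubicElem.eval_add,
    CubicElem.eval_sub, CubicElem.eval_trace _ H,
    CubicElem.eval_ofInvariant H, CubicElem.eval_ofInvariant H₂, CubicElem.eval_ofInvariant H₃,
    CubicElem.eval_rot _ H, CubicElem.eval_rot _ H₂, CubicElem.eval_rot _ H₃,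
    CubicElem.eval_mulLN _ H, CubicElem.eval_mulLN _ H₂, CubicElem.eval_mulLN _ H₃,
    Invariant.eval_rotate (l := l), Invariant.eval_rotate (l := m)]
  linear_combination
    -(x.coeffA.eval l m n * D.sq_a + x.coeffAB.eval l m n * b * D.sq_a
      + x.coeffAB.eval m n l * D.prod_eq + x.coeffAB.eval n l m * D.mul_sq_a)
    - (x.coeffA.eval m n l * D.sq_b + x.coeffAB.eval m n l * c * D.sq_b
      + x.coeffAB.eval n l m * D.prod_eq + x.coeffAB.eval l m n * D.rotate.mul_sq_a)
    - (x.coeffA.eval n l m * D.sq_c + x.coeffAB.eval n l m * a * D.sq_c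
      + x.coeffAB.eval l m n * D.prod_eq + x.coeffAB.eval m n l * D.rotate.rotate.mul_sq_a)

theorem eval_mulZ (D : DissectionTriple l m n a b c) :
    x.mulZ.eval l m n a b c = (m * a + n * b + l * c - 1) * x.eval l m n a b c := by
  have H := D.cyclic
  have H₂ := H.rotate
  have H₃ := H₂.rotate
  simp only [mulZ, eval, Invariant.eval_neg, Invariant.eval_add, CubicElem.eval_add,
    CubicElem.eval_sub, CubicElem.eval_trace _ H,
    CubicElem.eval_ofInvariant H, CubicElem.eval_ofInvariant H₂, CubicElem.eval_ofInvariant H₃,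
    CubicElem.eval_rot _ H, CubicElem.eval_rot _ H₂, CubicElem.eval_rot _ H₃,
    CubicElem.eval_mulL _ H, CubicElem.eval_mulL _ H₂, CubicElem.eval_mulL _ H₃,
    CubicElem.eval_mulM _ H, CubicElem.eval_mulM _ H₂, CubicElem.eval_mulM _ H₃,
    CubicElem.eval_mulN _ H, CubicElem.eval_mulN _ H₂, CubicElem.eval_mulN _ H₃,
    CubicElem.eval_mulLN _ H, CubicElem.eval_mulLN _ H₂, CubicElem.eval_mulLN _ H₃,
    Invariant.eval_rotate (l := l), Invariant.eval_rotate (l := m)]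
  linear_combination
    -m * (x.coeffA.eval l m n * D.sq_a + x.coeffAB.eval l m n * b * D.sq_a
      + x.coeffAB.eval m n l * D.prod_eq + x.coeffAB.eval n l m * D.mul_sq_a)
    - n * (x.coeffA.eval m n l * D.sq_b + x.coeffAB.eval m n l * c * D.sq_b
      + x.coeffAB.eval n l m * D.prod_eq + x.coeffAB.eval l m n * D.rotate.mul_sq_a)
    - l * (x.coeffA.eval n l m * D.sq_c + x.coeffAB.eval n l m * a * D.sq_c
      + x.coeffAB.eval l m n * D.prod_eq + x.coeffAB.eval m n l * D.rotate.rotate.mul_sq_a)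
    + ((x.coeffA.eval l m n * c + x.coeffAB.eval l m n * (b * c)) * (1 + l)
      + (x.coeffA.eval m n l * a + x.coeffAB.eval m n l * (c * a)) * (1 + m)
      + (x.coeffA.eval n l m * b + x.coeffAB.eval n l m * (a * b)) * (1 + n)) * H.prod_eq

theorem eval_power (D : DissectionTriple l m n a b c) (e k : ℕ) :
    (power e k).eval l m n a b c = (m * a + n * b + l * c - 1) ^ e * (a + b + c - 1) ^ k := by
  induction k with
  | zero =>
    rw [power, pow_zero, mul_one]
    induction e with
    | zero => exact eval_one.trans (pow_zero _).symm
    | succ e ih => rw [Function.iterate_succ_apply', eval_mulZ _ D, ih, pow_succ']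
  | succ k ih => rw [power, eval_mulY _ D, ih]; ring

/-- The left-hand side of the modular equation between `a + b + c - 1` and `h`. -/
def modularEquation : DissectionElem :=
  power 0 7 + smul 7 (power 0 6) + smul 21 (power 0 5) + smul 49 (power 0 4)
    + smul 147 (power 0 3) + smul 343 (power 0 2) + smul 343 (power 0 1)
    + (smul 7 (power 0 3) + smul 35 (power 0 2) + smul 49 (power 0 1)
      + smul (-1) (power 0 0).mulH).mulH

theorem modularEquation_isZero : modularEquation.isZero = true := by decide +kernel

end DissectionElem

theorem DissectionTriple.modular_equation {R : Type*} [CommRing R] {l m n a b c Y h : R}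
    (D : DissectionTriple l m n a b c) (hY : Y = a + b + c - 1) (hh : h = hInv l m n) :
    Y ^ 7 + 7 * Y ^ 6 + 21 * Y ^ 5 + 49 * Y ^ 4 + (7 * h + 147) * Y ^ 3 + (35 * h + 343) * Y ^ 2
      + (49 * h + 343) * Y - h ^ 2 = 0 := by
  have key : DissectionElem.modularEquation.eval l m n a b c = 0 :=
    DissectionElem.eval_eq_zero _ DissectionElem.modularEquation_isZero
  simp only [DissectionElem.modularEquation, DissectionElem.eval_add,
    DissectionElem.eval_smul _ D.cyclic, DissectionElem.eval_mulH _ D.cyclic,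
    DissectionElem.eval_power D, ← hY, ← hh] at key
  push_cast at key
  linear_combination key

/-! ### Certificates -/

/-- The coefficients, in powers of `h = 1 / t`, of `p₀`, `p₁` and `1` in an element of the span of
`p₀ tⁿ`, `p₁ tⁿ` and `tⁿ`. -/
structure Row where
  (c₀ c₁ c₂ : CoeffList)

namespace Row

open Invariant in
/-- The invariant `7 h² (c₀(h) p₀ + c₁(h) p₁ + c₂(h))`, in which `p₀` and `p₁` are eliminated by
`1 + 7 p₀ = v (hTwo / h)²` and `p₁ = hTwo / h`. -/
def toInvariant (r : Row) : Invariant :=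
  (v * hTwo * hTwo - h * h) * ofPolyH r.c₀ + const 7 * (h * hTwo * ofPolyH r.c₁)
    + const 7 * (h * h * ofPolyH r.c₂)

theorem eval_toInvariant {R : Type*} [CommRing R] {l m n : R} (H : CyclicTriple l m n) (r : Row) :
    r.toInvariant.eval l m n
      = (vInv l m n * hInvTwo l m n ^ 2 - hInv l m n ^ 2) * r.c₀.eval (hInv l m n)
        + 7 * (hInv l m n * hInvTwo l m n * r.c₁.eval (hInv l m n))
        + 7 * (hInv l m n ^ 2 * r.c₂.eval (hInv l m n)) := by
  simp only [toInvariant, Invariant.eval_add, Invariant.eval_sub, Invariant.eval_mul _ _ H,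
    Invariant.eval_const, Invariant.eval_ofPolyH H, Invariant.eval_h H, Invariant.eval_hTwo,
    Invariant.eval_v H]
  push_cast
  ring

end Row

/-- The expansions of `U (p₀ * Y ^ (7 + k))`, in the sense of `TowerSystem.rowValue`. -/
def plainWindow₀ : Fin 7 → Row :=
  ![
    ⟨[0, 0, 0, -6], [0, 0, 7], [0, 0, -7]⟩,
    ⟨[0, 0, 49], [], [0, -343, -49, -12]⟩,
    ⟨[0, 0, 343, 84, 1], [0, 0, -49, -1], [0, -2401, -441, 3]⟩,
    ⟨[0, 0, -343], [], [0, 2401, 343]⟩,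
    ⟨[0, 0, -2401, -294, 22], [0, 0, 0, -28], [0, 16807, 3430, 273, 3]⟩,
    ⟨[0, 0, 2401], [], [0, -16807, -2401, 0, 64]⟩,
    ⟨[0, 0, -16807, -8232, -910, -7], [0, 0, 4802, 735, 7], [0, 117649, 40817, 3136, -105]⟩]

/-- The expansions of `U (p₁ * Y ^ (4 + k))`, in the sense of `TowerSystem.rowValue`. -/
def plainWindow₁ : Fin 7 → Row :=
  ![
    ⟨[0, 49, 7], [0, -7], [-343, -49, -4]⟩,
    ⟨[0, 343, 63], [0, -49], [-2401, -441, -8]⟩,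
    ⟨[0, -343, -49], [0, 49], [2401, 343]⟩,
    ⟨[0, -2401, -490, -10], [0, 343, 7], [16807, 3430, 182]⟩,
    ⟨[0, 2401, 343], [0, -343], [-16807, -2401, 0, 24]⟩,
    ⟨[0, -16807, -5831, -532, -1], [0, 2401, 441, 1], [117649, 40817, 3920, 35]⟩,
    ⟨[0, 100842, 28812, 2009, 8], [0, -14406, -1715, -7], [-705894, -201684, -16807, -280]⟩]

/-- The expansions of `U (Y ^ k)`, in the sense of `TowerSystem.rowValue`. -/
def plainWindow₂ : Fin 7 → Row :=
  ![
    ⟨[], [], [0, 1]⟩,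
    ⟨[], [], [0, -1]⟩,
    ⟨[], [], [0, 1]⟩,
    ⟨[], [], [0, -7]⟩,
    ⟨[], [], [0, -7, -4]⟩,
    ⟨[], [], [0, 49, 10]⟩,
    ⟨[], [], [0, 49]⟩]

/-- The expansions of `U (Z ^ 5 * y ^ 16 * p₀ * Y ^ (23 + k))`, in the sense of
`TowerSystem.rowValue`. -/
def twistedWindow₀ : Fin 7 → Row :=
  ![
    ⟨[0, 0, 2401, 0, -133], [0, 0, 0, -931, -152], [0, -16807, -2401]⟩,
    ⟨[0, 0, 16807, 4802, 266], [0, 0, -4802, 1862, 70], [0, -117649, -16807, -882]⟩,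
    ⟨[0, 0, -16807, 0, 1225, 25], [0, 0, 0, 0, 700, 25], [0, 117649, 16807]⟩,
    ⟨[0, 0, 117649, 7203, -2597, -301], [0, 0, -16807, -6517, -2205, -302],
      [0, -823543, -184877, -6860, 98]⟩,
    ⟨[0, 0, -705894, -168070, -6517, 1190, 1], [0, 0, 117649, 4802, 8575, 1362, 1],
      [0, 4941258, 1058841, 64827, 490, 1]⟩,
    ⟨[0, 0, 823543, 134456, -18865, -3283, -15], [0, 0, 0, 9604, -23667, -2261, -15],
      [0, -5764801, -823543, -16807, 2401, -7]⟩,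
    ⟨[0, 0, -823543, 0, 0, -2009, -41], [0, 0, 0, 0, 0, -1148, -41], [0, 5764801, 823543]⟩]

/-- The expansions of `U (Z ^ 5 * y ^ 16 * p₁ * Y ^ (20 + k))`, in the sense of
`TowerSystem.rowValue`. -/
def twistedWindow₁ : Fin 7 → Row :=
  ![
    ⟨[0, 16807, 2401], [0, -2401, 0, -90], [-117649, -16807, -882]⟩,
    ⟨[0, -16807, -2401, 441, 9], [0, 2401, 0, 252, 9], [117649, 16807]⟩,
    ⟨[0, 117649, 26411, 98, -70], [0, -16807, -1372, -420, -70], [-823543, -184877, -6860, 98]⟩,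
    ⟨[0, -705894, -151263, -6517, 154, 1], [0, 100842, 4802, 1323, 178, 1],
      [4941258, 1058841, 64827, 490, 1]⟩,
    ⟨[0, 823543, 117649, -3087, -441, -7], [0, -117649, 4802, -2597, 35, -7],
      [-5764801, -823543, -16807, 2401, -7]⟩,
    ⟨[0, -823543, -117649, 0, -1617, -33], [0, 117649, 0, 0, -924, -33], [5764801, 823543]⟩,
    ⟨[0, 5764801, 823543, 2401, 4459, 511], [0, -823543, 16807, 5145, 2793, 512],
      [-40353607, -5764801, 0, 0, -588]⟩]

/-- The expansions of `U (Z ^ 5 * y ^ 16 * Y ^ (16 + k))`, in the sense of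
`TowerSystem.rowValue`. -/
def twistedWindow₂ : Fin 7 → Row :=
  ![
    ⟨[], [0, 0, 10], [0, 49]⟩,
    ⟨[0, 0, -49, -1], [0, 0, -28, -1], [0, 49]⟩,
    ⟨[0, 0, 98, 12], [0, 0, 56, 12], [0, -343, -14]⟩,
    ⟨[0, 0, 0, -35], [0, 0, -245, -40], [0, -343]⟩,
    ⟨[0, 0, 343, 91, 1], [0, 0, 441, 35, 1], [0, 0, -147, 1]⟩,
    ⟨[], [], [0, 2401]⟩,
    ⟨[0, 0, -4802, -588, -70], [0, 0, 686, -98, -70], [0, 16807, 3430, 70]⟩]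

section Residuals

open Invariant

variable (e : ℕ) (T : Fin 7 → Row) (k : Fin 7)

/-- Vanishes iff `T` expands `U (Z ^ e * Y ^ k)`. -/
def residual₂ : Invariant :=
  const 7 * (h * h * h * (DissectionElem.power e k).const) - (T k).toInvariant

/-- Vanishes iff `T` expands `U (Z ^ e * p₁ * Y ^ (4 + k))`, where `p₁` is eliminated by
`hTwo(q⁷) p₁ = h(q⁷) (Z / Y) ^ 4`. -/
def residual₁ : Invariant :=
  const 7 * (h * h * h * (h * (DissectionElem.power (e + 4) k).const))
    - hTwo * (T k).toInvariant

/-- Vanishes iff `T` expands `U (Z ^ e * p₀ * Y ^ (7 + k))`, where `p₀` is eliminated by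
`1 + 7 p₀ = v(q⁷) (Z / Y) ^ 7`. -/
def residual₀ : Invariant :=
  h * h * h * (v * (DissectionElem.power (e + 7) k).const - (DissectionElem.power e (k + 7)).const)
    - (T k).toInvariant

end Residuals

theorem residual₀_plainWindow₀ : ∀ k, (residual₀ 0 plainWindow₀ k).isZero = true := by
  decide +kernel

theorem residual₁_plainWindow₁ : ∀ k, (residual₁ 0 plainWindow₁ k).isZero = true := by
  decide +kernel

theorem residual₂_plainWindow₂ : ∀ k, (residual₂ 0 plainWindow₂ k).isZero = true := by
  decide +kernel

theorem residual₀_twistedWindow₀ : ∀ k, (residual₀ 5 twistedWindow₀ k).isZero = true := by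
  decide +kernel

theorem residual₁_twistedWindow₁ : ∀ k, (residual₁ 5 twistedWindow₁ k).isZero = true := by
  decide +kernel

theorem residual₂_twistedWindow₂ : ∀ k, (residual₂ 5 twistedWindow₂ k).isZero = true := by
  decide +kernel

/-! ### Divisibility conditions and the modules they define -/

/-- A condition on the coefficients `a`, `b`, `c` of `p₀`, `p₁`, `1`, depending on an index. -/
abbrev CoeffCondition := ℤ → ℤ → ℤ → ℤ → Prop

/-- The condition on the coefficients of `tᵐ` in `U (x tʳ)` for `x = p₀, p₁, 1`, where the weight
is `w = 7 m - r`. -/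
def PlainAdmissible : CoeffCondition := fun w a b c =>
  ((w < -3 → a = 0) ∧ (w < 4 → b = 0) ∧ (w < 0 → c = 0)) ∧
    7 ^ ((w + 2) / 4).toNat ∣ a ∧ 7 ^ ((w - 1) / 4).toNat ∣ b ∧ 7 ^ ((w - 1) / 4).toNat ∣ c

/-- The analogue of `PlainAdmissible` for `U (A₅ x tʳ)`. -/
def TwistedAdmissible : CoeffCondition := fun w a b c =>
  ((w < 18 → a = 0) ∧ (w ≤ 23 → a = b) ∧ (w < 25 → c = 0)) ∧
    7 ^ ((w - 20) / 4).toNat ∣ a ∧ 7 ^ ((w - 23) / 4).toNat ∣ b ∧ 7 ^ ((w - 23) / 4).toNat ∣ c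

/-- The strengthening of `TwistedAdmissible` that holds for `U (A₅ tʳ)`. -/
def InitialAdmissible : CoeffCondition := fun w a b c =>
  TwistedAdmissible w a b c ∧ (w = 21 → 7 ∣ a)

instance (w a b c : ℤ) : Decidable (PlainAdmissible w a b c) := by
  unfold PlainAdmissible; infer_instance

instance (w a b c : ℤ) : Decidable (TwistedAdmissible w a b c) := by
  unfold TwistedAdmissible; infer_instance

instance (w a b c : ℤ) : Decidable (InitialAdmissible w a b c) := by
  unfold InitialAdmissible; infer_instance

/-- Raising the weight by `s` costs `⌈s / 4⌉` factors `7`. -/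
def ScaleStable (Ad : CoeffCondition) : Prop :=
  ∀ (w a b c k : ℤ) (s : ℕ), Ad w a b c → 7 ^ ((s + 3) / 4) ∣ k →
    Ad (w + s) (k * a) (k * b) (k * c)

theorem pow_dvd_mul_of_le_add {i j r : ℕ} {k a : ℤ} (hk : 7 ^ r ∣ k) (ha : 7 ^ i ∣ a)
    (hj : j ≤ r + i) : 7 ^ j ∣ k * a :=
  (pow_dvd_pow 7 hj).trans (pow_add (7 : ℤ) r i ▸ mul_dvd_mul hk ha)

theorem scaleStable_plainAdmissible : ScaleStable PlainAdmissible := by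
  rintro w a b c k s ⟨⟨ha, hb, hc⟩, da, db, dc⟩ hk
  refine ⟨⟨fun h => ?_, fun h => ?_, fun h => ?_⟩, pow_dvd_mul_of_le_add hk da ?_,
    pow_dvd_mul_of_le_add hk db ?_, pow_dvd_mul_of_le_add hk dc ?_⟩
  · rw [ha (by omega), mul_zero]
  · rw [hb (by omega), mul_zero]
  · rw [hc (by omega), mul_zero]
  all_goals omega

theorem scaleStable_twistedAdmissible : ScaleStable TwistedAdmissible := by
  rintro w a b c k s ⟨⟨ha, hab, hc⟩, da, db, dc⟩ hk
  refine ⟨⟨fun h => ?_, fun h => ?_, fun h => ?_⟩, pow_dvd_mul_of_le_add hk da ?_,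
    pow_dvd_mul_of_le_add hk db ?_, pow_dvd_mul_of_le_add hk dc ?_⟩
  · rw [ha (by omega), mul_zero]
  · rw [hab (by omega)]
  · rw [hc (by omega), mul_zero]
  all_goals omega

theorem scaleStable_initialAdmissible : ScaleStable InitialAdmissible := by
  rintro w a b c k s ⟨h, h21⟩ hk
  refine ⟨scaleStable_twistedAdmissible w a b c k s h hk, fun hw => ?_⟩
  rcases Nat.eq_zero_or_pos s with rfl | hs
  · exact (h21 (by simpa using hw)).mul_left k
  · exact ((dvd_pow_self 7 (by omega)).trans hk).mul_right a

/-- The coefficient of `hⁱ` in the row satisfies `Ad` in weight `w - 7 i`. -/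
def Row.Admissible (Ad : CoeffCondition) (w : ℤ) (r : Row) : Prop :=
  (r.c₀.length ≤ 8 ∧ r.c₁.length ≤ 8 ∧ r.c₂.length ≤ 8) ∧
    ∀ i < 8, Ad (w - 7 * (i : ℕ)) (r.c₀.getD i 0) (r.c₁.getD i 0) (r.c₂.getD i 0)

instance (Ad : CoeffCondition) [∀ w a b c, Decidable (Ad w a b c)] (w : ℤ) (r : Row) :
    Decidable (r.Admissible Ad w) := by
  unfold Row.Admissible; infer_instance

theorem admissible_plainWindow₀ :
    ∀ k : Fin 7, (plainWindow₀ k).Admissible PlainAdmissible (7 + 2 * (7 + k : ℕ)) := by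
  decide +kernel

theorem admissible_plainWindow₁ :
    ∀ k : Fin 7, (plainWindow₁ k).Admissible PlainAdmissible (7 + 2 * (4 + k : ℕ)) := by
  decide +kernel

theorem admissible_plainWindow₂ :
    ∀ k : Fin 7, (plainWindow₂ k).Admissible PlainAdmissible (7 + 2 * (0 + k : ℕ)) := by
  decide +kernel

theorem admissible_twistedWindow₀ :
    ∀ k : Fin 7, (twistedWindow₀ k).Admissible TwistedAdmissible (7 + 2 * (23 + k : ℕ)) := by
  decide +kernel

theorem admissible_twistedWindow₁ :
    ∀ k : Fin 7, (twistedWindow₁ k).Admissible TwistedAdmissible (7 + 2 * (20 + k : ℕ)) := by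
  decide +kernel

theorem admissible_twistedWindow₂ :
    ∀ k : Fin 7, (twistedWindow₂ k).Admissible InitialAdmissible (7 + 2 * (16 + k : ℕ)) := by
  decide +kernel

section CoeffSpan

variable {F : Type*} [CommRing F] (t : Fˣ) (p₀ p₁ : F)

/-- The additive group generated by the `(a p₀ + b p₁ + c) tᵐ` with `C m a b c`. -/
def coeffSpan (C : CoeffCondition) : AddSubgroup F :=
  AddSubgroup.closure
    {x | ∃ m a b c : ℤ, C m a b c ∧ x = (a * p₀ + b * p₁ + c) * ((t ^ m : Fˣ) : F)}

variable {t p₀ p₁} {C C' : CoeffCondition}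

theorem mem_coeffSpan {m a b c : ℤ} (h : C m a b c) :
    (a * p₀ + b * p₁ + c) * ((t ^ m : Fˣ) : F) ∈ coeffSpan t p₀ p₁ C :=
  AddSubgroup.subset_closure ⟨m, a, b, c, h, rfl⟩

theorem map_mem_coeffSpan (f : F →+ F)
    (hf : ∀ m a b c, C m a b c →
      a * f (p₀ * ((t ^ m : Fˣ) : F)) + b * f (p₁ * ((t ^ m : Fˣ) : F)) + c * f ((t ^ m : Fˣ) : F)
        ∈ coeffSpan t p₀ p₁ C') {x : F} (hx : x ∈ coeffSpan t p₀ p₁ C) :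
    f x ∈ coeffSpan t p₀ p₁ C' := by
  refine (AddSubgroup.closure_le (K := (coeffSpan t p₀ p₁ C').comap f)).2 ?_ hx
  rintro _ ⟨m, a, b, c, h, rfl⟩
  simpa only [SetLike.mem_coe, AddSubgroup.mem_comap, ← zsmul_eq_mul, zsmul_one, add_mul,
    smul_mul_assoc, map_add, map_zsmul, one_mul] using hf m a b c h

theorem mul_zpow_mul_mem_coeffSpan (k r : ℤ)
    (h : ∀ m a b c, C m a b c → C' (m + r) (k * a) (k * b) (k * c)) {x : F}
    (hx : x ∈ coeffSpan t p₀ p₁ C) :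
    (k : F) * ((t ^ r : Fˣ) : F) * x ∈ coeffSpan t p₀ p₁ C' := by
  refine map_mem_coeffSpan (AddMonoidHom.mulLeft ((k : F) * ((t ^ r : Fˣ) : F))) ?_ hx
  intro m a b c hC
  convert mem_coeffSpan (h m a b c hC) using 1
  rw [zpow_add]
  push_cast [AddMonoidHom.coe_mulLeft]
  ring

theorem intCast_mul_mem_coeffSpan (k : ℤ)
    (h : ∀ m a b c, C m a b c → C' m (k * a) (k * b) (k * c)) {x : F}
    (hx : x ∈ coeffSpan t p₀ p₁ C) : (k : F) * x ∈ coeffSpan t p₀ p₁ C' := by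
  simpa using mul_zpow_mul_mem_coeffSpan (C' := C') k 0 (by simpa using h) hx

theorem Row.mem_coeffSpan_of_admissible {Ad : CoeffCondition} {r : Row} {w : ℤ}
    (hr : r.Admissible Ad (7 + w)) {h : F} (hh : t * h = 1) :
    t * (p₀ * r.c₀.eval h + p₁ * r.c₁.eval h + r.c₂.eval h)
      ∈ coeffSpan t p₀ p₁ (fun m => Ad (7 * m + w)) := by
  obtain ⟨⟨h₀, h₁, h₂⟩, hAd⟩ := hr
  have hh : h = ((t⁻¹ : Fˣ) : F) := (Units.inv_eq_of_mul_eq_one_right hh).symm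
  rw [CoeffList.eval_eq_sum_range h _ h₀, CoeffList.eval_eq_sum_range h _ h₁,
    CoeffList.eval_eq_sum_range h _ h₂, Finset.mul_sum, Finset.mul_sum, ← Finset.sum_add_distrib,
    ← Finset.sum_add_distrib, Finset.mul_sum]
  refine sum_mem fun i hi => ?_
  have hi := hAd i (Finset.mem_range.1 hi)
  rw [show 7 + w - 7 * (i : ℕ) = 7 * (1 - (i : ℤ)) + w by ring] at hi
  convert mem_coeffSpan (t := t) (p₀ := p₀) (p₁ := p₁) (C := fun m => Ad (7 * m + w)) hi using 1
  rw [zpow_sub, zpow_one, zpow_natCast, ← inv_pow, Units.val_mul, Units.val_pow_eq_pow_val, ← hh]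
  ring

end CoeffSpan

/-! ### The action of `U` on the modules -/

/-- The algebraic facts about Laurent series on which the congruences rest: `V` is `q ↦ q⁷`, `U`
is its left inverse `U₇`, `a + b + c - 1` is the 7-dissection of `J₁ / (q² J₄₉)` and `y` is the
inverse of the latter; `t`, `p₀`, `p₁` are as in the theorem. -/
structure TowerSystem (F : Type*) [CommRing F] where
  V : F →+* F
  U : F →+ F
  (l m n a b c : F)
  t : Fˣ
  (y p₀ p₁ : F)
  U_V_mul : ∀ x z, U (V x * z) = x * U z
  U_one : U 1 = 1
  U_a : U a = 0
  U_b : U b = 0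
  U_c : U c = 0
  U_ab : U (a * b) = 0
  U_bc : U (b * c) = 0
  U_ca : U (c * a) = 0
  cyclic : CyclicTriple l m n
  dissection : DissectionTriple (V l) (V m) (V n) a b c
  t_mul_h : t * hInv l m n = 1
  y_mul_Y : y * (a + b + c - 1) = 1
  t_eq : (t : F) = V (hInv l m n) * y ^ 4
  h₂_mul_p₁ : V (hInvTwo l m n) * p₁
    = V (hInv l m n) * (V m * a + V n * b + V l * c - 1) ^ 4 * y ^ 4
  one_add_p₀ : 1 + 7 * p₀ = V (vInv l m n) * (V m * a + V n * b + V l * c - 1) ^ 7 * y ^ 7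
  p₁_eq : p₁ = t * hInvTwo l m n
  one_add_p₀_eq : 1 + 7 * p₀ = vInv l m n * hInvTwo l m n ^ 2 * (t : F) ^ 2
  h₂_ne_zero : hInvTwo l m n ≠ 0

namespace TowerSystem

variable {F : Type*} [CommRing F] (S : TowerSystem F)

/-- The series `J₁ / (q² J₄₉)`. -/
def Y : F := S.a + S.b + S.c - 1

/-- The series `J₂ / (q⁴ J₉₈)`. -/
def Z : F := S.V S.m * S.a + S.V S.n * S.b + S.V S.l * S.c - 1

/-- The abbreviation `h = 1 / t`. -/
def h : F := hInv S.l S.m S.n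

/-- The weight function `Z ^ e / Y ^ d` in front of the argument of `U`: the exponents `(0, 0)`
give the even steps of the tower, and `(5, 16)` give `A₅`. -/
def twist (e d : ℕ) : F := S.Z ^ e * S.y ^ d

/-- The element `(c₀(h) p₀ + c₁(h) p₁ + c₂(h)) t` encoded by a row. -/
def rowValue (r : Row) : F :=
  S.t * (S.p₀ * r.c₀.eval S.h + S.p₁ * r.c₁.eval S.h + r.c₂.eval S.h)

/-- The additive group of the combinations of `p₀ tᵐ`, `p₁ tᵐ`, `tᵐ` allowed by `C`. -/
abbrev span (C : CoeffCondition) : AddSubgroup F := coeffSpan S.t S.p₀ S.p₁ C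

theorem y_pow_mul_Y_pow (k : ℕ) : S.y ^ k * S.Y ^ k = 1 := by
  rw [← mul_pow, Y, S.y_mul_Y, one_pow]

theorem U_V (x : F) : S.U (S.V x) = x := by
  simpa [S.U_one] using S.U_V_mul x 1

theorem U_eval (x : DissectionElem) :
    S.U (x.eval (S.V S.l) (S.V S.m) (S.V S.n) S.a S.b S.c) = x.const.eval S.l S.m S.n := by
  simp only [DissectionElem.eval, ← Invariant.map_eval, ← CubicElem.map_eval, map_add, S.U_V_mul,
    S.U_V, S.U_a, S.U_b, S.U_c, S.U_ab, S.U_bc, S.U_ca, mul_zero, add_zero]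

theorem U_Z_pow_mul_Y_pow (e k : ℕ) :
    S.U (S.Z ^ e * S.Y ^ k) = (DissectionElem.power e k).const.eval S.l S.m S.n := by
  rw [← S.U_eval, DissectionElem.eval_power S.dissection, Z, Y]

theorem U_seven_mul (x : F) : S.U (7 * x) = 7 * S.U x := by
  rw [← S.U_V_mul, map_ofNat]

theorem eval_h : Invariant.h.eval S.l S.m S.n = S.h := Invariant.eval_h S.cyclic

section Windows

variable [IsDomain F] [CharZero F]

theorem eq_rowValue {r : Row} {u : F}
    (hu : 7 * (S.h ^ 3 * u) = r.toInvariant.eval S.l S.m S.n) : u = S.rowValue r := by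
  have t_mul_h : S.t * S.h = 1 := S.t_mul_h
  have t_mul_h_cube : (S.t : F) ^ 3 * S.h ^ 3 = 1 := by rw [← mul_pow, t_mul_h, one_pow]
  have v_eq : vInv S.l S.m S.n * hInvTwo S.l S.m S.n ^ 2 = (1 + 7 * S.p₀) * S.h ^ 2 := by
    rw [S.one_add_p₀_eq]
    linear_combination -(vInv S.l S.m S.n * hInvTwo S.l S.m S.n ^ 2) * (S.t * S.h + 1) * t_mul_h
  have h₂_eq : hInvTwo S.l S.m S.n = S.p₁ * S.h := by
    rw [S.p₁_eq]; linear_combination -hInvTwo S.l S.m S.n * t_mul_h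
  rw [Row.eval_toInvariant S.cyclic, ← h, v_eq, h₂_eq] at hu
  refine mul_left_cancel₀ (show (7 : F) ≠ 0 by norm_num) ?_
  rw [rowValue]
  linear_combination (S.t : F) ^ 3 * hu
    + 7 * ((S.p₀ * r.c₀.eval S.h + S.p₁ * r.c₁.eval S.h + r.c₂.eval S.h) * S.t
      * (S.t * S.h + 1)) * t_mul_h
    - 7 * u * t_mul_h_cube

variable {e : ℕ} (d : ℕ) {T : Fin 7 → Row} {k : Fin 7}

theorem U_twist_mul_Y_pow (hT : (residual₂ e T k).isZero = true) :
    S.U (S.twist e d * S.Y ^ (d + k : ℕ)) = S.rowValue (T k) := by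
  have cancel : S.twist e d * S.Y ^ (d + k : ℕ) = S.Z ^ e * S.Y ^ (k : ℕ) := by
    rw [twist, pow_add]
    linear_combination S.Z ^ e * S.Y ^ (k : ℕ) * S.y_pow_mul_Y_pow d
  have key := Invariant.eval_eq_zero (l := S.l) (m := S.m) (n := S.n) _ hT
  simp only [residual₂, Invariant.eval_sub, Invariant.eval_mul _ _ S.cyclic, Invariant.eval_const,
    S.eval_h, ← U_Z_pow_mul_Y_pow] at key
  refine S.eq_rowValue ?_
  rw [cancel]
  linear_combination key

theorem U_twist_mul_p₁_mul_Y_pow (hT : (residual₁ e T k).isZero = true) :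
    S.U (S.twist e d * S.p₁ * S.Y ^ (d + 4 + k : ℕ)) = S.rowValue (T k) := by
  have cancel : S.V (hInvTwo S.l S.m S.n) * (S.twist e d * S.p₁ * S.Y ^ (d + 4 + k : ℕ))
      = S.V S.h * (S.Z ^ (e + 4) * S.Y ^ (k : ℕ)) := by
    have h₂_mul_p₁ : _ = S.V S.h * S.Z ^ 4 * S.y ^ 4 := S.h₂_mul_p₁
    rw [twist, pow_add S.Y, pow_add S.Z]
    linear_combination S.Z ^ e * S.y ^ d * S.Y ^ (d + 4) * S.Y ^ (k : ℕ) * h₂_mul_p₁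
      + S.V S.h * S.Z ^ e * S.Z ^ 4 * S.Y ^ (k : ℕ) * S.y_pow_mul_Y_pow (d + 4)
  have key := Invariant.eval_eq_zero (l := S.l) (m := S.m) (n := S.n) _ hT
  simp only [residual₁, Invariant.eval_sub, Invariant.eval_mul _ _ S.cyclic, Invariant.eval_const,
    S.eval_h, Invariant.eval_hTwo, ← U_Z_pow_mul_Y_pow] at key
  refine S.eq_rowValue (mul_left_cancel₀ S.h₂_ne_zero ?_)
  have hU := congrArg S.U cancel
  rw [S.U_V_mul, S.U_V_mul] at hU
  linear_combination key + 7 * S.h ^ 3 * hU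

theorem U_twist_mul_p₀_mul_Y_pow (hT : (residual₀ e T k).isZero = true) :
    S.U (S.twist e d * S.p₀ * S.Y ^ (d + 7 + k : ℕ)) = S.rowValue (T k) := by
  have cancel : 7 * (S.twist e d * S.p₀ * S.Y ^ (d + 7 + k : ℕ))
      = S.V (vInv S.l S.m S.n) * (S.Z ^ (e + 7) * S.Y ^ (k : ℕ)) - S.Z ^ e * S.Y ^ (k + 7 : ℕ) := by
    have one_add_p₀ : _ = S.V (vInv S.l S.m S.n) * S.Z ^ 7 * S.y ^ 7 := S.one_add_p₀
    rw [twist, pow_add S.Y, pow_add S.Z, pow_add S.Y]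
    linear_combination S.Z ^ e * S.y ^ d * S.Y ^ (d + 7) * S.Y ^ (k : ℕ) * one_add_p₀
      + S.V (vInv S.l S.m S.n) * S.Z ^ e * S.Z ^ 7 * S.Y ^ (k : ℕ) * S.y_pow_mul_Y_pow (d + 7)
      - S.Z ^ e * S.Y ^ (k : ℕ) * S.Y ^ 7 * S.y_pow_mul_Y_pow d
  have key := Invariant.eval_eq_zero (l := S.l) (m := S.m) (n := S.n) _ hT
  simp only [residual₀, Invariant.eval_sub, Invariant.eval_mul _ _ S.cyclic,
    S.eval_h, Invariant.eval_v S.cyclic, ← U_Z_pow_mul_Y_pow] at key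
  refine S.eq_rowValue ?_
  have hU := congrArg S.U cancel
  rw [S.U_seven_mul, map_sub, S.U_V_mul] at hU
  linear_combination key + S.h ^ 3 * hU

end Windows

/-- The terms `(k, r, j)`, standing for `k * V t ^ r * y ^ j`, of the recurrence for `y ^ 7`. -/
def recurrenceTerms : List (ℕ × ℕ × ℕ) :=
  [(1, 2, 0), (7, 2, 1), (21, 2, 2), (49, 2, 3), (7, 1, 4), (147, 2, 4), (35, 1, 5), (343, 2, 5),
    (49, 1, 6), (343, 2, 6)]

/-- Each term raises the weight by `7 r + 2 j - 14`, and its coefficient pays for it. -/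
theorem recurrenceTerms_bounds : ∀ x ∈ recurrenceTerms,
    x.2.2 < 7 ∧ 14 ≤ 7 * x.2.1 + 2 * x.2.2 ∧ 7 ^ ((7 * x.2.1 + 2 * x.2.2 - 14 + 3) / 4) ∣ x.1 := by
  decide

theorem y_pow_seven :
    S.y ^ 7 = (recurrenceTerms.map fun x => x.1 * S.V S.t ^ x.2.1 * S.y ^ x.2.2).sum := by
  have modular := S.dissection.modular_equation (Y := S.Y) rfl (h := S.V S.h)
    (by simp only [h, hInv, map_sub, map_add, map_mul, map_pow, map_ofNat])
  have t_mul_h : S.V S.t * S.V S.h = 1 := by rw [← map_mul, h, S.t_mul_h, map_one]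
  have cancel := S.y_pow_mul_Y_pow
  simp only [recurrenceTerms, List.map_cons, List.map_nil, List.sum_cons, List.sum_nil]
  push_cast
  generalize S.V S.h = h at *
  generalize S.V (S.t : F) = t at *
  linear_combination (-(S.y ^ 7 * t ^ 2)) * modular + t ^ 2 * cancel 7 + 7 * t ^ 2 * S.y * cancel 6
    + 21 * t ^ 2 * S.y ^ 2 * cancel 5 + 49 * t ^ 2 * S.y ^ 3 * cancel 4
    + (7 * h + 147) * t ^ 2 * S.y ^ 4 * cancel 3 + (35 * h + 343) * t ^ 2 * S.y ^ 5 * cancel 2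
    + (49 * h + 343) * t ^ 2 * S.y ^ 6 * cancel 1
    + (-(t * h + 1) * S.y ^ 7 + t * (7 * S.y ^ 4 + 35 * S.y ^ 5 + 49 * S.y ^ 6)) * t_mul_h

theorem U_mul_y_pow_add_seven (f : F) (i : ℕ) :
    S.U (f * S.y ^ (i + 7))
      = (recurrenceTerms.map fun x =>
          x.1 * (S.t : F) ^ x.2.1 * S.U (f * S.y ^ (i + x.2.2))).sum := by
  rw [pow_add, S.y_pow_seven, ← mul_assoc, ← List.sum_map_mul_left, map_list_sum, List.map_map]
  refine congrArg List.sum (List.map_congr_left fun x _ => ?_)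
  rw [Function.comp_apply, ← S.U_V_mul, map_mul S.V, map_natCast, map_pow]
  ring_nf

variable {Ad : CoeffCondition}

theorem U_mul_y_pow_mem (hAd : ScaleStable Ad) {f : F} {w : ℤ}
    (window : ∀ i < 7, S.U (f * S.y ^ i) ∈ S.span fun m => Ad (7 * m + (w - 2 * (i : ℕ))))
    (i : ℕ) : S.U (f * S.y ^ i) ∈ S.span fun m => Ad (7 * m + (w - 2 * (i : ℕ))) := by
  induction i using Nat.strong_induction_on with
  | _ i ih =>
    rcases lt_or_ge i 7 with hi | hi
    · exact window i hi
    obtain ⟨i, rfl⟩ := Nat.exists_eq_add_of_le' hi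
    rw [S.U_mul_y_pow_add_seven]
    refine list_sum_mem fun z hz => ?_
    obtain ⟨⟨k, r, j⟩, hx, rfl⟩ := List.mem_map.1 hz
    obtain ⟨hj, hs, hk⟩ := recurrenceTerms_bounds _ hx
    dsimp only at hj hs hk
    refine cast (by simp) (mul_zpow_mul_mem_coeffSpan
      (C' := fun m => Ad (7 * m + (w - 2 * ((i + 7 : ℕ) : ℤ)))) (k : ℤ) r (fun m a b c h => ?_)
      (ih (i + j) (by omega)))
    convert hAd _ _ _ _ (k : ℤ) _ h (by exact_mod_cast hk) using 1
    omega

theorem U_mul_t_pow_mem (hAd : ScaleStable Ad) {f : F} {k₀ : ℕ} {T : Fin 7 → Row}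
    (admissible : ∀ k : Fin 7, (T k).Admissible Ad (7 + 2 * (k₀ + k : ℕ)))
    (window : ∀ k : Fin 7, S.U (f * S.Y ^ (k₀ + k : ℕ)) = S.rowValue (T k)) (r : ℕ) :
    S.U (f * (S.t : F) ^ r) ∈ S.span fun m => Ad (7 * m - r) := by
  have h_eq : S.h = ((S.t⁻¹ : Fˣ) : F) := (Units.inv_eq_of_mul_eq_one_right S.t_mul_h).symm
  have mem := S.U_mul_y_pow_mem hAd (f := f * S.Y ^ (k₀ + 6)) (w := 2 * (k₀ + 6 : ℕ))
    (fun i hi => ?_) (4 * r + (k₀ + 6))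
  · have t_pow : f * (S.t : F) ^ r
        = S.V (S.h ^ r) * (f * S.Y ^ (k₀ + 6) * S.y ^ (4 * r + (k₀ + 6))) := by
      rw [S.t_eq, mul_pow, ← pow_mul, map_pow, h, pow_add S.y]
      linear_combination (-f * S.V (hInv S.l S.m S.n) ^ r * S.y ^ (4 * r))
        * S.y_pow_mul_Y_pow (k₀ + 6)
    rw [t_pow, S.U_V_mul]
    refine cast (by simp [h_eq]) (mul_zpow_mul_mem_coeffSpan (C' := fun m => Ad (7 * m - r)) 1
      (-(r : ℤ)) (fun m a b c hC => ?_) mem)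
    simp only [one_mul]
    convert hC using 1
    push_cast
    ring
  · have shorten : f * S.Y ^ (k₀ + 6) * S.y ^ i = f * S.Y ^ (k₀ + (6 - i)) := by
      rw [show k₀ + 6 = k₀ + (6 - i) + i by omega, pow_add _ (k₀ + (6 - i)) i]
      linear_combination f * S.Y ^ (k₀ + (6 - i)) * S.y_pow_mul_Y_pow i
    rw [shorten, window ⟨6 - i, by omega⟩]
    refine Row.mem_coeffSpan_of_admissible ?_ S.t_mul_h
    convert admissible ⟨6 - i, by omega⟩ using 2
    push_cast [Nat.cast_sub (show i ≤ 6 by omega)]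
    ring

variable [IsDomain F] [CharZero F] (r : ℕ)

theorem U_p₀_mul_t_pow_mem :
    S.U (S.p₀ * (S.t : F) ^ r) ∈ S.span fun m => PlainAdmissible (7 * m - r) :=
  S.U_mul_t_pow_mem scaleStable_plainAdmissible admissible_plainWindow₀
    (fun k => by simpa [twist] using S.U_twist_mul_p₀_mul_Y_pow 0 (residual₀_plainWindow₀ k)) r

theorem U_p₁_mul_t_pow_mem :
    S.U (S.p₁ * (S.t : F) ^ r) ∈ S.span fun m => PlainAdmissible (7 * m - r) :=
  S.U_mul_t_pow_mem scaleStable_plainAdmissible admissible_plainWindow₁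
    (fun k => by simpa [twist] using S.U_twist_mul_p₁_mul_Y_pow 0 (residual₁_plainWindow₁ k)) r

theorem U_t_pow_mem : S.U ((S.t : F) ^ r) ∈ S.span fun m => PlainAdmissible (7 * m - r) := by
  simpa using S.U_mul_t_pow_mem (f := 1) scaleStable_plainAdmissible admissible_plainWindow₂
    (fun k => by simpa [twist] using S.U_twist_mul_Y_pow 0 (residual₂_plainWindow₂ k)) r

theorem U_twist_mul_p₀_mul_t_pow_mem :
    S.U (S.twist 5 16 * S.p₀ * (S.t : F) ^ r) ∈ S.span fun m => TwistedAdmissible (7 * m - r) :=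
  S.U_mul_t_pow_mem scaleStable_twistedAdmissible admissible_twistedWindow₀
    (fun k => S.U_twist_mul_p₀_mul_Y_pow 16 (residual₀_twistedWindow₀ k)) r

theorem U_twist_mul_p₁_mul_t_pow_mem :
    S.U (S.twist 5 16 * S.p₁ * (S.t : F) ^ r) ∈ S.span fun m => TwistedAdmissible (7 * m - r) :=
  S.U_mul_t_pow_mem scaleStable_twistedAdmissible admissible_twistedWindow₁
    (fun k => S.U_twist_mul_p₁_mul_Y_pow 16 (residual₁_twistedWindow₁ k)) r

theorem U_twist_mul_t_pow_mem :
    S.U (S.twist 5 16 * (S.t : F) ^ r) ∈ S.span fun m => InitialAdmissible (7 * m - r) :=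
  S.U_mul_t_pow_mem scaleStable_initialAdmissible admissible_twistedWindow₂
    (fun k => S.U_twist_mul_Y_pow 16 (residual₂_twistedWindow₂ k)) r

end TowerSystem

/-- The coefficients of `tᵐ` that occur in `L_{2α}` for `α ≥ 1`. -/
def EvenCondition : CoeffCondition := fun m a b c =>
  ((m < 0 → a = 0) ∧ (m < 1 → b = 0 ∧ c = 0)) ∧
    7 ^ max 1 ((7 * m + 2) / 4).toNat ∣ a ∧ 7 ^ max 1 ((7 * m - 1) / 4).toNat ∣ b ∧
      7 ^ max 1 ((7 * m - 1) / 4).toNat ∣ c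

/-- The coefficients of `tᵐ` that occur in `L_{2α+1}`. -/
def OddCondition : CoeffCondition := fun m a b c =>
  (m < 3 → a = 0 ∧ b = 0 ∧ c = 0) ∧ (m = 3 → b = a ∧ c = 0) ∧
    7 ^ max 1 ((7 * m - 20) / 4).toNat ∣ a ∧ 7 ^ max 1 ((7 * m - 24) / 4).toNat ∣ b ∧
      7 ^ max 1 ((7 * m - 24) / 4).toNat ∣ c

theorem PlainAdmissible.evenCondition {r m k a b c : ℤ} {i : ℕ}
    (h : PlainAdmissible (7 * m - r) a b c) (hr : 3 ≤ r) (hk : 7 ^ i ∣ k) (hi : 1 ≤ i)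
    (hri : 7 * r - 27 ≤ 4 * i) : EvenCondition m (k * a) (k * b) (k * c) := by
  obtain ⟨⟨ha, hb, hc⟩, da, db, dc⟩ := h
  refine ⟨⟨fun h => ?_, fun h => ⟨?_, ?_⟩⟩, pow_dvd_mul_of_le_add hk da ?_,
    pow_dvd_mul_of_le_add hk db ?_, pow_dvd_mul_of_le_add hk dc ?_⟩
  · rw [ha (by omega), mul_zero]
  · rw [hb (by omega), mul_zero]
  · rw [hc (by omega), mul_zero]
  all_goals omega

theorem TwistedAdmissible.oddCondition {r m k a b c : ℤ} {i : ℕ}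
    (h : TwistedAdmissible (7 * m - r) a b c) (hr : 0 ≤ r) (hk : 7 ^ i ∣ k) (hi : 1 ≤ i)
    (hri : 7 * r - 4 ≤ 4 * i) : OddCondition m (k * a) (k * b) (k * c) := by
  obtain ⟨⟨ha, hab, hc⟩, da, db, dc⟩ := h
  refine ⟨fun h => ⟨?_, ?_, ?_⟩, fun h => ⟨?_, ?_⟩, pow_dvd_mul_of_le_add hk da ?_,
    pow_dvd_mul_of_le_add hk db ?_, pow_dvd_mul_of_le_add hk dc ?_⟩
  · rw [ha (by omega), mul_zero]
  · rw [← hab (by omega), ha (by omega), mul_zero]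
  · rw [hc (by omega), mul_zero]
  · rw [hab (by omega)]
  · rw [hc (by omega), mul_zero]
  all_goals omega

theorem InitialAdmissible.oddCondition {m a b c : ℤ} (h : InitialAdmissible (7 * m) a b c) :
    OddCondition m a b c := by
  obtain ⟨⟨⟨ha, hab, hc⟩, da, db, dc⟩, h21⟩ := h
  rcases lt_trichotomy m 3 with hm | rfl | hm
  · obtain rfl : a = 0 := ha (by omega)
    obtain rfl : 0 = b := hab (by omega)
    obtain rfl : c = 0 := hc (by omega)
    simp [OddCondition]
  · obtain rfl : a = b := hab (by omega)
    obtain rfl : c = 0 := hc (by omega)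
    simpa [OddCondition] using h21 rfl
  · exact ⟨fun h => by omega, fun h => by omega, (pow_dvd_pow 7 (by omega)).trans da,
      (pow_dvd_pow 7 (by omega)).trans db, (pow_dvd_pow 7 (by omega)).trans dc⟩

namespace TowerSystem

variable {F : Type*} [CommRing F] [IsDomain F] [CharZero F] (S : TowerSystem F)

theorem U_mem_span_evenCondition {x : F} (hx : x ∈ S.span OddCondition) :
    S.U x ∈ S.span EvenCondition := by
  refine map_mem_coeffSpan S.U ?_ hx
  rintro m a b c ⟨hzero, -, da, db, dc⟩
  rcases lt_or_ge m 3 with hm | hm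
  · obtain ⟨rfl, rfl, rfl⟩ := hzero hm
    simp
  obtain ⟨r, rfl⟩ := Int.eq_ofNat_of_zero_le (show 0 ≤ m by omega)
  simp only [zpow_natCast, Units.val_pow_eq_pow_val]
  refine add_mem (add_mem
    (intCast_mul_mem_coeffSpan a (fun m _ _ _ h => h.evenCondition hm da ?_ ?_)
      (S.U_p₀_mul_t_pow_mem r))
    (intCast_mul_mem_coeffSpan b (fun m _ _ _ h => h.evenCondition hm db ?_ ?_)
      (S.U_p₁_mul_t_pow_mem r)))
    (intCast_mul_mem_coeffSpan c (fun m _ _ _ h => h.evenCondition hm dc ?_ ?_)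
      (S.U_t_pow_mem r)) <;> omega

theorem U_twist_mul_mem_span_oddCondition {x : F} (hx : x ∈ S.span EvenCondition) :
    S.U (S.twist 5 16 * x) ∈ S.span OddCondition := by
  refine map_mem_coeffSpan (S.U.comp (AddMonoidHom.mulLeft (S.twist 5 16))) ?_ hx
  rintro m a b c ⟨⟨ha, hbc⟩, da, db, dc⟩
  rcases lt_or_ge m 0 with hm | hm
  · obtain rfl := ha hm
    obtain ⟨rfl, rfl⟩ := hbc (by omega)
    simp
  obtain ⟨r, rfl⟩ := Int.eq_ofNat_of_zero_le hm
  simp only [zpow_natCast, Units.val_pow_eq_pow_val, AddMonoidHom.comp_apply,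
    AddMonoidHom.coe_mulLeft, ← mul_assoc (S.twist 5 16)]
  refine add_mem (add_mem
    (intCast_mul_mem_coeffSpan a (fun m _ _ _ h => h.oddCondition hm da ?_ ?_)
      (S.U_twist_mul_p₀_mul_t_pow_mem r))
    (intCast_mul_mem_coeffSpan b (fun m _ _ _ h => h.oddCondition hm db ?_ ?_)
      (S.U_twist_mul_p₁_mul_t_pow_mem r)))
    (intCast_mul_mem_coeffSpan c (fun m _ _ _ h => h.1.oddCondition hm dc ?_ ?_)
      (S.U_twist_mul_t_pow_mem r)) <;> omega

theorem U_twist_mem_span_oddCondition : S.U (S.twist 5 16) ∈ S.span OddCondition := by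
  have mem := S.U_twist_mul_t_pow_mem 0
  rw [pow_zero, mul_one] at mem
  simpa using intCast_mul_mem_coeffSpan (C' := OddCondition) 1
    (fun m a b c h => by simpa using InitialAdmissible.oddCondition (by simpa using h)) mem

theorem odd_mem_span_oddCondition {L : ℕ → F} (hzero : L 0 = 1)
    (hodd : ∀ i, L (2 * i + 1) = S.U (S.twist 5 16 * L (2 * i)))
    (heven : ∀ i, L (2 * i + 2) = S.U (L (2 * i + 1))) (i : ℕ) :
    L (2 * i + 1) ∈ S.span OddCondition := by
  induction i with
  | zero =>
    rw [hodd, mul_zero, hzero, mul_one]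
    exact S.U_twist_mem_span_oddCondition
  | succ i ih =>
    rw [hodd, show 2 * (i + 1) = 2 * i + 2 by ring, heven]
    exact S.U_twist_mul_mem_span_oddCondition (S.U_mem_span_evenCondition ih)

end TowerSystem

/-! ### Infinite products -/

section

open PowerSeries Filter Topology
open scoped PowerSeries.WithPiTopology

/-- The finite `q`-Pochhammer symbol `(x; q)_N = ∏_{k < N} (1 - x q ^ k)`. -/
def qPochhammer {R : Type*} [CommRing R] (x q : R) (N : ℕ) : R :=
  ∏ k ∈ Finset.range N, (1 - x * q ^ k)

section QPochhammer

variable {R : Type*} [CommRing R]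

theorem qPochhammer_succ (x q : R) (N : ℕ) :
    qPochhammer x q (N + 1) = qPochhammer x q N * (1 - x * q ^ N) :=
  Finset.prod_range_succ _ _

theorem qPochhammer_succ' (x q : R) (N : ℕ) :
    qPochhammer x q (N + 1) = (1 - x) * qPochhammer (x * q) q N := by
  rw [qPochhammer, Finset.prod_range_succ', pow_zero, mul_one, mul_comm]
  simp only [qPochhammer, pow_succ', mul_assoc]

theorem map_qPochhammer {S : Type*} [CommRing S] (φ : R →+* S) (x q : R) (N : ℕ) :
    φ (qPochhammer x q N) = qPochhammer (φ x) (φ q) N := by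
  simp [qPochhammer]

theorem qPochhammer_mul (x q : R) (N d : ℕ) :
    qPochhammer x q (N * d) = ∏ i ∈ Finset.range d, qPochhammer (x * q ^ i) (q ^ d) N := by
  simp only [qPochhammer]
  rw [Finset.prod_comm]
  induction N with
  | zero => simp
  | succ N ih =>
    rw [Finset.prod_range_succ, ← ih, add_mul, one_mul, Finset.prod_range_add]
    congr 1
    exact Finset.prod_congr rfl fun i _ => by ring

theorem dvd_prod_sub_one {ι : Type*} {s : Finset ι} {x : R} {f : ι → R}
    (h : ∀ i ∈ s, x ∣ f i - 1) : x ∣ ∏ i ∈ s, f i - 1 := by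
  refine Finset.prod_induction f (fun y => x ∣ y - 1) (fun a b ha hb => ?_) (by simp) h
  rw [show a * b - 1 = (a - 1) * b + (b - 1) by ring]
  exact (ha.mul_right b).add hb

end QPochhammer

theorem tendsto_of_X_pow_dvd_sub {R : Type*} [CommRing R] [TopologicalSpace R] {f : ℕ → R⟦X⟧}
    {g : R⟦X⟧} {k : ℕ → ℕ} (hk : Tendsto k atTop atTop) (h : ∀ N, X ^ k N ∣ f N - g) :
    Tendsto f atTop (𝓝 g) := by
  rw [WithPiTopology.tendsto_iff_coeff_tendsto]
  intro d
  refine tendsto_const_nhds.congr' ((hk.eventually_gt_atTop d).mono fun N hN => ?_)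
  exact (sub_eq_zero.1 (by simpa using X_pow_dvd_iff.1 (h N) d hN)).symm

/-- The infinite product `∏_{k ≥ 0} (1 - q ^ (a + s k))`; its `n`-th coefficient is read off the
first `n + 1` factors, so it is meaningful for `s ≠ 0` only. -/
def qProd (a s : ℕ) : ℤ⟦X⟧ :=
  PowerSeries.mk fun n => coeff n (qPochhammer (X ^ a : ℤ⟦X⟧) (X ^ s) (n + 1))

theorem J_eq_qProd (b : ℕ) : J b = qProd b b := by
  simp only [J, qProd, qPochhammer, ← pow_mul, ← pow_add, mul_add_one, add_comm]

theorem X_pow_dvd_qPochhammer_sub_qPochhammer (a : ℕ) {s M N : ℕ} (hs : s ≠ 0) (h : M ≤ N) :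
    (X : ℤ⟦X⟧) ^ M ∣ qPochhammer (X ^ a) (X ^ s) N - qPochhammer (X ^ a) (X ^ s) M := by
  simp only [qPochhammer]
  rw [← Finset.prod_range_mul_prod_Ico _ h, ← mul_sub_one]
  refine (dvd_prod_sub_one fun k hk => ?_).mul_left _
  rw [sub_sub_cancel_left, ← pow_mul, ← pow_add]
  have : k ≤ s * k := Nat.le_mul_of_pos_left k (Nat.pos_of_ne_zero hs)
  exact (pow_dvd_pow _ (by have := (Finset.mem_Ico.1 hk).1; omega)).neg_right

theorem X_pow_dvd_qPochhammer_sub_qProd (a : ℕ) {s : ℕ} (hs : s ≠ 0) (N : ℕ) :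
    (X : ℤ⟦X⟧) ^ N ∣ qPochhammer (X ^ a) (X ^ s) N - qProd a s := by
  refine X_pow_dvd_iff.2 fun n hn => ?_
  simpa only [map_sub, qProd, coeff_mk] using
    X_pow_dvd_iff.1 (X_pow_dvd_qPochhammer_sub_qPochhammer a hs hn) n n.lt_succ_self

theorem tendsto_qPochhammer (a : ℕ) {s : ℕ} (hs : s ≠ 0) :
    Tendsto (qPochhammer (X ^ a : ℤ⟦X⟧) (X ^ s)) atTop (𝓝 (qProd a s)) :=
  tendsto_of_X_pow_dvd_sub tendsto_id (X_pow_dvd_qPochhammer_sub_qProd a hs)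

theorem constantCoeff_J {b : ℕ} (hb : b ≠ 0) : constantCoeff (J b) = 1 := by
  rw [← coeff_zero_eq_constantCoeff_apply, J, coeff_mk]
  simp [hb]

theorem isUnit_J {b : ℕ} (hb : b ≠ 0) : IsUnit (J b) := by
  rw [isUnit_iff_constantCoeff, constantCoeff_J hb]
  exact isUnit_one

theorem qProd_eq_prod (a : ℕ) {s d : ℕ} (hs : s ≠ 0) (hd : d ≠ 0) :
    qProd a s = ∏ i ∈ Finset.range d, qProd (a + s * i) (s * d) := by
  have subseq : Tendsto (fun N => qPochhammer (X ^ a : ℤ⟦X⟧) (X ^ s) (N * d)) atTop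
      (𝓝 (qProd a s)) :=
    (tendsto_qPochhammer a hs).comp (tendsto_id.atTop_mul_const' (Nat.pos_of_ne_zero hd))
  refine tendsto_nhds_unique subseq ?_
  simp only [qPochhammer_mul, ← pow_mul, ← pow_add]
  exact tendsto_finsetProd _ fun i _ => tendsto_qPochhammer _ (mul_ne_zero hs hd)

theorem expand_J {k b : ℕ} (hk : k ≠ 0) (hb : b ≠ 0) : expand k hk (J b) = J (k * b) := by
  rw [J_eq_qProd, J_eq_qProd]
  refine tendsto_nhds_unique (f := fun N => expand k hk (qPochhammer (X ^ b : ℤ⟦X⟧) (X ^ b) N))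
    (tendsto_of_X_pow_dvd_sub (tendsto_id.const_mul_atTop' (Nat.pos_of_ne_zero hk)) fun N => ?_) ?_
  · rw [← map_sub, pow_mul, ← expand_X k hk, ← map_pow]
    exact map_dvd (expand k hk) (X_pow_dvd_qPochhammer_sub_qProd b hb N)
  · have expand_eq (N : ℕ) : expand k hk (qPochhammer (X ^ b : ℤ⟦X⟧) (X ^ b) N) =
        qPochhammer (X ^ (k * b)) (X ^ (k * b)) N := by
      simp [qPochhammer, pow_mul]
    simpa only [expand_eq] using tendsto_qPochhammer (k * b) (mul_ne_zero hk hb)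

end

/-! ### The Jacobi triple product -/

section

open PowerSeries Filter Topology
open scoped PowerSeries.WithPiTopology

section FiniteTripleProduct

variable {R : Type*} [CommRing R]

/-- The Gaussian binomial coefficient `[2N choose N + m]` in `q`. The recursion is the double
`q`-Pascal rule, which passes from `2N` to `2N + 2`; it makes sense in every commutative ring. -/
def gaussBinom (q : R) : ℕ → ℤ → R
  | 0, m => if m = 0 then 1 else 0
  | N + 1, m => (1 + q ^ (2 * N + 1)) * gaussBinom q N m
      + q ^ ((N : ℤ) + 1 - m).toNat * gaussBinom q N (m - 1)
      + q ^ ((N : ℤ) + 1 + m).toNat * gaussBinom q N (m + 1)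

theorem map_gaussBinom {S : Type*} [CommRing S] (φ : R →+* S) (q : R) (N : ℕ) (m : ℤ) :
    φ (gaussBinom q N m) = gaussBinom (φ q) N m := by
  induction N generalizing m with
  | zero => simp only [gaussBinom]; split_ifs <;> simp
  | succ N ih => simp only [gaussBinom, ih, map_add, map_mul, map_pow, map_one]

theorem gaussBinom_eq_zero (q : R) {N : ℕ} {m : ℤ} (h : (N : ℤ) < |m|) :
    gaussBinom q N m = 0 := by
  induction N generalizing m with
  | zero =>
    rw [gaussBinom, if_neg]
    rintro rfl
    simp at h
  | succ N ih =>
    rw [lt_abs] at h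
    rw [gaussBinom, ih (by rw [lt_abs]; omega), ih (by rw [lt_abs]; omega),
      ih (by rw [lt_abs]; omega)]
    ring

theorem gaussBinom_neg (q : R) (N : ℕ) (m : ℤ) : gaussBinom q N (-m) = gaussBinom q N m := by
  induction N generalizing m with
  | zero => simp [gaussBinom]
  | succ N ih =>
    rw [gaussBinom, gaussBinom, show -m - 1 = -(m + 1) by ring, show -m + 1 = -(m - 1) by ring,
      ih, ih, ih, sub_neg_eq_add, ← sub_eq_add_neg]
    ring

theorem gaussBinom_pred_step {q : R} {N i j : ℕ}
    (ih : ∀ i j : ℕ, i + j = 2 * N →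
      qPochhammer q q i * qPochhammer q q j * gaussBinom q N (i - N) = qPochhammer q q (2 * N))
    (h : i + j = 2 * N + 2) :
    q ^ j * (qPochhammer q q i * qPochhammer q q j * gaussBinom q N (i - N - 2)) =
      (1 - q ^ i) * (q ^ j - q ^ (2 * N + 1)) * qPochhammer q q (2 * N) := by
  rcases i with _ | _ | i
  · rw [gaussBinom_eq_zero q (lt_abs.2 (Or.inr (by push_cast; omega)))]
    ring
  · obtain rfl : j = 2 * N + 1 := by omega
    rw [gaussBinom_eq_zero q (lt_abs.2 (Or.inr (by push_cast; omega)))]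
    ring
  · have exponent : q ^ (2 * N + 1) = q ^ (i + 1) * q ^ j := by rw [← pow_add]; congr 1; omega
    rw [show ((i + 1 + 1 : ℕ) - N - 2 : ℤ) = i - N by push_cast; ring, qPochhammer_succ,
      qPochhammer_succ, exponent]
    linear_combination q ^ j * (1 - q * q ^ i) * (1 - q * q ^ (i + 1)) * ih i j (by omega)

theorem gaussBinom_self_step {q : R} {N i j : ℕ}
    (ih : ∀ i j : ℕ, i + j = 2 * N →
      qPochhammer q q i * qPochhammer q q j * gaussBinom q N (i - N) = qPochhammer q q (2 * N))
    (h : i + j = 2 * N + 2) :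
    qPochhammer q q i * qPochhammer q q j * gaussBinom q N (i - N - 1) =
      (1 - q ^ i) * (1 - q ^ j) * qPochhammer q q (2 * N) := by
  rcases i with _ | i
  · rw [gaussBinom_eq_zero q (lt_abs.2 (Or.inr (by push_cast; omega)))]
    ring
  rcases j with _ | j
  · rw [gaussBinom_eq_zero q (lt_abs.2 (Or.inl (by push_cast; omega)))]
    ring
  rw [show ((i + 1 : ℕ) - N - 1 : ℤ) = i - N by push_cast; ring, qPochhammer_succ,
    qPochhammer_succ]
  linear_combination (1 - q * q ^ i) * (1 - q * q ^ j) * ih i j (by omega)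

theorem qPochhammer_mul_gaussBinom (q : R) {N i j : ℕ} (h : i + j = 2 * N) :
    qPochhammer q q i * qPochhammer q q j * gaussBinom q N (i - N) =
      qPochhammer q q (2 * N) := by
  induction N generalizing i j with
  | zero =>
    obtain ⟨rfl, rfl⟩ : i = 0 ∧ j = 0 := by omega
    simp [gaussBinom, qPochhammer]
  | succ N ih =>
    have self := gaussBinom_self_step (fun i j => ih (i := i) (j := j)) h
    have pred := gaussBinom_pred_step (fun i j => ih (i := i) (j := j)) h
    have succ := gaussBinom_pred_step (fun i j => ih (i := i) (j := j)) ((add_comm j i).trans h)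
    rw [← gaussBinom_neg, show -((j : ℤ) - N - 2) = i - N by omega] at succ
    have exponent : q ^ (2 * N + 2) = q ^ i * q ^ j := by rw [← pow_add, h]; rfl
    rw [gaussBinom, show ((N : ℤ) + 1 - (i - (N + 1 : ℕ))).toNat = j by omega,
      show ((N : ℤ) + 1 + (i - (N + 1 : ℕ))).toNat = i by omega,
      show ((i : ℤ) - (N + 1 : ℕ)) = i - N - 1 by push_cast; ring,
      show ((i : ℤ) - N - 1 - 1) = i - N - 2 by ring, sub_add_cancel,
      show 2 * (N + 1) = 2 * N + 1 + 1 by ring, qPochhammer_succ, qPochhammer_succ]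
    linear_combination (1 + q ^ (2 * N + 1)) * self + pred + succ
      + (1 - q ^ (2 * N + 1)) * qPochhammer q q (2 * N) * exponent

/-- The general term `(-1) ^ m u ^ (m (m + 1) / 2) w ^ (m (m - 1) / 2)` of the theta series whose
product side is `(u; uw)_∞ (w; uw)_∞ (uw; uw)_∞`. Both exponents are nonnegative integers. -/
def thetaTerm (u w : R) (m : ℤ) : R :=
  (-1) ^ m.natAbs * (u ^ (m * (m + 1) / 2).toNat * w ^ (m * (m - 1) / 2).toNat)

theorem exists_triangular (m : ℤ) :
    ∃ a b : ℕ, m * (m + 1) / 2 = a ∧ m * (m - 1) / 2 = b ∧ m = a - b ∧ m * (m - 1) = 2 * b := by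
  obtain ⟨a, ha⟩ := (Int.even_mul_succ_self m).two_dvd
  obtain ⟨b, hb⟩ := (Int.even_mul_pred_self m).two_dvd
  lift a to ℕ using by nlinarith [sq_nonneg (2 * m + 1)]
  lift b to ℕ using by nlinarith [sq_nonneg (2 * m - 1)]
  exact ⟨a, b, by omega, by omega, by linarith, hb⟩

theorem thetaTerm_neg (u w : R) (m : ℤ) : thetaTerm w u (-m) = thetaTerm u w m := by
  rw [thetaTerm, thetaTerm, Int.natAbs_neg, show -m * (-m + 1) = m * (m - 1) by ring,
    show -m * (-m - 1) = m * (m + 1) by ring]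
  ring

theorem neg_one_pow_natAbs_of_odd_sub (a b : ℤ) (h : Odd (a - b)) :
    (-1 : R) ^ a.natAbs = -(-1) ^ b.natAbs := by
  rw [Int.odd_iff] at h
  rw [show -(-1 : R) ^ b.natAbs = (-1) ^ (b.natAbs + 1) by ring, neg_one_pow_eq_pow_mod_two,
    neg_one_pow_eq_pow_mod_two (n := b.natAbs + 1)]
  congr 1
  omega

theorem mul_thetaTerm_sub_one (u w : R) {N : ℕ} {m : ℤ} (h : m ≤ N + 1) :
    -(u * (u * w) ^ N) * thetaTerm u w (m - 1) =
      (u * w) ^ ((N : ℤ) + 1 - m).toNat * thetaTerm u w m := by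
  obtain ⟨a, b, ha, hb, hab, -⟩ := exists_triangular m
  obtain ⟨b', c, hb', hc, hbc, -⟩ := exists_triangular (m - 1)
  obtain rfl : b' = b := by
    rw [sub_add_cancel, mul_comm, hb] at hb'
    exact_mod_cast hb'.symm
  rw [thetaTerm, thetaTerm, ha, hb, hb', hc,
    neg_one_pow_natAbs_of_odd_sub (m - 1) m ⟨-1, by ring⟩]
  simp only [Int.toNat_natCast, mul_pow]
  have exponent_u : u * u ^ N * u ^ b' = u ^ ((N : ℤ) + 1 - m).toNat * u ^ a := by
    rw [← pow_succ', ← pow_add, ← pow_add]; congr 1; omega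
  have exponent_w : w ^ N * w ^ c = w ^ ((N : ℤ) + 1 - m).toNat * w ^ b' := by
    rw [← pow_add, ← pow_add]; congr 1; omega
  linear_combination (-1) ^ m.natAbs * (w ^ N * w ^ c) * exponent_u
    + (-1) ^ m.natAbs * (u ^ ((N : ℤ) + 1 - m).toNat * u ^ a) * exponent_w

theorem mul_thetaTerm_add_one (u w : R) {N : ℕ} {m : ℤ} (h : -m ≤ N + 1) :
    -(w * (u * w) ^ N) * thetaTerm u w (m + 1) =
      (u * w) ^ ((N : ℤ) + 1 + m).toNat * thetaTerm u w m := by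
  have := mul_thetaTerm_sub_one w u h
  rwa [← neg_add', thetaTerm_neg, thetaTerm_neg, mul_comm w u, sub_neg_eq_add] at this

theorem gaussBinom_succ_mul_thetaTerm (u w : R) (N : ℕ) (m : ℤ) :
    gaussBinom (u * w) (N + 1) m * thetaTerm u w m =
      (1 + (u * w) ^ (2 * N + 1)) * (gaussBinom (u * w) N m * thetaTerm u w m)
      - u * (u * w) ^ N * (gaussBinom (u * w) N (m - 1) * thetaTerm u w (m - 1))
      - w * (u * w) ^ N * (gaussBinom (u * w) N (m + 1) * thetaTerm u w (m + 1)) := by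
  have below : gaussBinom (u * w) N (m - 1) * (-(u * (u * w) ^ N) * thetaTerm u w (m - 1)) =
      gaussBinom (u * w) N (m - 1) *
        ((u * w) ^ ((N : ℤ) + 1 - m).toNat * thetaTerm u w m) := by
    by_cases hm : m ≤ N + 1
    · rw [mul_thetaTerm_sub_one u w hm]
    · rw [gaussBinom_eq_zero _ (lt_abs.2 (Or.inl (by omega))), zero_mul, zero_mul]
  have above : gaussBinom (u * w) N (m + 1) * (-(w * (u * w) ^ N) * thetaTerm u w (m + 1)) =
      gaussBinom (u * w) N (m + 1) *
        ((u * w) ^ ((N : ℤ) + 1 + m).toNat * thetaTerm u w m) := by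
    by_cases hm : -m ≤ N + 1
    · rw [mul_thetaTerm_add_one u w hm]
    · rw [gaussBinom_eq_zero _ (lt_abs.2 (Or.inr (by omega))), zero_mul, zero_mul]
  rw [gaussBinom]
  linear_combination -below - above

theorem support_gaussBinom_mul_subset (q : R) (N : ℕ) (f : ℤ → R) :
    (Function.support fun m => gaussBinom q N m * f m) ⊆ Finset.Icc (-(N : ℤ)) N := by
  refine Function.support_subset_iff'.2 fun m hm => ?_
  rw [gaussBinom_eq_zero, zero_mul]
  rw [Finset.coe_Icc, Set.mem_Icc, ← abs_le, not_le] at hm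
  exact hm

theorem qPochhammer_mul_qPochhammer_eq_finsum (u w : R) (N : ℕ) :
    qPochhammer u (u * w) N * qPochhammer w (u * w) N =
      ∑ᶠ m, gaussBinom (u * w) N m * thetaTerm u w m := by
  induction N with
  | zero =>
    rw [finsum_eq_single _ (0 : ℤ) fun m hm => by simp [gaussBinom, hm]]
    simp [gaussBinom, thetaTerm, qPochhammer]
  | succ N ih =>
    let f : ℤ → R := fun m => gaussBinom (u * w) N m * thetaTerm u w m
    have hfin : f.support.Finite :=
      (Finset.finite_toSet _).subset (support_gaussBinom_mul_subset _ _ _)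
    have finite_comp (c : R) (σ : ℤ ≃ ℤ) : (Function.support fun m => c * f (σ m)).Finite :=
      (hfin.preimage σ.injective.injOn).subset fun m hm => right_ne_zero_of_mul hm
    have finsum_comp (c : R) (σ : ℤ ≃ ℤ) : ∑ᶠ m, c * f (σ m) = c * ∑ᶠ m, f m := by
      rw [← mul_finsum' _ _ (hfin.preimage σ.injective.injOn), finsum_comp_equiv σ]
    have step (m : ℤ) : gaussBinom (u * w) (N + 1) m * thetaTerm u w m =
        (1 + (u * w) ^ (2 * N + 1)) * f (Equiv.refl ℤ m)
          - u * (u * w) ^ N * f (Equiv.subRight 1 m) - w * (u * w) ^ N * f (Equiv.addRight 1 m) :=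
      gaussBinom_succ_mul_thetaTerm u w N m
    rw [finsum_congr step, finsum_sub_distrib
        (((finite_comp _ _).union (finite_comp _ _)).subset (Function.support_sub _ _))
        (finite_comp _ _),
      finsum_sub_distrib (finite_comp _ _) (finite_comp _ _), finsum_comp, finsum_comp,
      finsum_comp, ← ih, qPochhammer_succ, qPochhammer_succ]
    ring

theorem qPochhammer_mul_qPochhammer_eq_sum (u w : R) (N : ℕ) :
    qPochhammer u (u * w) N * qPochhammer w (u * w) N =
      ∑ m ∈ Finset.Icc (-(N : ℤ)) N, gaussBinom (u * w) N m * thetaTerm u w m := by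
  rw [qPochhammer_mul_qPochhammer_eq_finsum,
    finsum_eq_sum_of_support_subset _ (support_gaussBinom_mul_subset _ _ _)]

end FiniteTripleProduct

end

section

open PowerSeries Filter Topology
open scoped PowerSeries.WithPiTopology DualNumber

section FiniteCube

variable {R : Type*} [CommRing R]

theorem snd_thetaTerm_one_add_eps (q : R) (m : ℤ) :
    TrivSqZeroExt.snd (thetaTerm (1 + ε : R[ε]) (TrivSqZeroExt.inl q * (1 - ε)) m) =
      (-1) ^ m.natAbs * m * q ^ (m * (m - 1) / 2).toNat := by
  obtain ⟨a, b, ha, hb, hab, -⟩ := exists_triangular m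
  have sign : (-1 : R[ε]) ^ m.natAbs = TrivSqZeroExt.inl ((-1) ^ m.natAbs) := by
    rw [← TrivSqZeroExt.inl_pow, TrivSqZeroExt.inl_neg, TrivSqZeroExt.inl_one]
  have pow_pred : (b : R) * (q ^ (b - 1) * -q) = -(b * q ^ b) := by
    rcases b with _ | b
    · simp
    · rw [Nat.add_sub_cancel, pow_succ]; ring
  have cast_m : (m : R) = a - b := by rw [hab]; push_cast; ring
  rw [thetaTerm, ha, hb, sign]
  simp only [Int.toNat_natCast, DualNumber.snd_mul, TrivSqZeroExt.fst_inl, TrivSqZeroExt.snd_inl,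
    TrivSqZeroExt.snd_pow, TrivSqZeroExt.fst_pow, TrivSqZeroExt.fst_mul, TrivSqZeroExt.fst_add,
    TrivSqZeroExt.snd_add, TrivSqZeroExt.fst_sub, TrivSqZeroExt.snd_sub, TrivSqZeroExt.fst_one,
    TrivSqZeroExt.snd_one, DualNumber.fst_eps, DualNumber.snd_eps, nsmul_eq_mul, smul_eq_mul,
    Nat.pred_eq_sub_one, add_zero, zero_add, sub_zero, zero_sub, zero_mul, one_pow, mul_one,
    one_mul, mul_neg, cast_m] at pow_pred ⊢
  rw [pow_pred]
  ring

/-- Differentiating the finite triple product along `w = q / u` at `u = 1`. -/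
theorem neg_qPochhammer_mul_qPochhammer_eq_sum (q : R) (N : ℕ) :
    -(qPochhammer q q N * qPochhammer q q (N + 1)) =
      ∑ m ∈ Finset.Icc (-((N + 1 : ℕ) : ℤ)) (N + 1 : ℕ), gaussBinom q (N + 1) m *
        ((-1) ^ m.natAbs * m * q ^ (m * (m - 1) / 2).toNat) := by
  let u : R[ε] := 1 + ε
  let w : R[ε] := TrivSqZeroExt.inl q * (1 - ε)
  have huw : u * w = TrivSqZeroExt.inlHom R R q := by
    rw [TrivSqZeroExt.inlHom_apply]
    linear_combination -TrivSqZeroExt.inl q * DualNumber.eps_mul_eps (R := R)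
  have fst_qPochhammer (x y : R[ε]) (M : ℕ) : (qPochhammer x y M).fst = qPochhammer x.fst y.fst M :=
    map_qPochhammer (TrivSqZeroExt.fstHom R R R : R[ε] →+* R) x y M
  have key := congrArg TrivSqZeroExt.snd (qPochhammer_mul_qPochhammer_eq_sum u w (N + 1))
  rw [huw, qPochhammer_succ', show 1 - u = -ε by ring] at key
  have snd_left (A B : R[ε]) : (-ε * A * B).snd = -(A.fst * B.fst) := by
    simp
  have snd_right (m : ℤ) :
      (gaussBinom (TrivSqZeroExt.inlHom R R q) (N + 1) m * thetaTerm u w m).snd =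
        gaussBinom q (N + 1) m * ((-1) ^ m.natAbs * m * q ^ (m * (m - 1) / 2).toNat) := by
    rw [← map_gaussBinom, DualNumber.snd_mul, snd_thetaTerm_one_add_eps]
    simp
  rw [snd_left, fst_qPochhammer, fst_qPochhammer, TrivSqZeroExt.snd_sum,
    Finset.sum_congr rfl fun m _ => snd_right m] at key
  simpa [u, w] using key

end FiniteCube

/-- The series `∑_m c m q ^ e m` over all integers `m`, for `e` with finite fibres. -/
def thetaSeries (c : ℤ → ℤ) (e : ℤ → ℕ) : ℤ⟦X⟧ :=
  PowerSeries.mk fun n => ∑ᶠ m : ℤ, if e m = n then c m else 0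

section ThetaSeries

variable {c c' : ℤ → ℤ} {e e' : ℤ → ℕ}

theorem X_pow_dvd_sum_sub_thetaSeries (c : ℤ → ℤ) (he : ∀ m, |m| ≤ e m + 1) (N : ℕ) :
    (X : ℤ⟦X⟧) ^ (N - 1) ∣
      ∑ m ∈ Finset.Icc (-(N : ℤ)) N, C (c m) * X ^ e m - thetaSeries c e := by
  refine X_pow_dvd_iff.2 fun n hn => ?_
  rw [map_sub, thetaSeries, coeff_mk, map_sum,
    finsum_eq_sum_of_support_subset (s := Finset.Icc (-(N : ℤ)) N), sub_eq_zero]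
  · refine Finset.sum_congr rfl fun m _ => ?_
    rw [coeff_C_mul, coeff_X_pow]
    simp [eq_comm]
  · refine Function.support_subset_iff'.2 fun m hm => if_neg ?_
    rw [Finset.coe_Icc, Set.mem_Icc, ← abs_le] at hm
    have := he m
    omega

theorem X_pow_dvd_J_mul_gaussBinom_sub_one {s N : ℕ} (hs : s ≠ 0) {m : ℤ} (hm : |m| ≤ N) :
    (X : ℤ⟦X⟧) ^ (N - |m|).toNat ∣ J s * gaussBinom (X ^ s) N m - 1 := by
  obtain ⟨hlower, hupper⟩ := abs_le.1 hm
  obtain ⟨i, hi⟩ := Int.eq_ofNat_of_zero_le (show 0 ≤ m + N by omega)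
  obtain ⟨j, hj⟩ := Int.eq_ofNat_of_zero_le (show 0 ≤ N - m by omega)
  have dvd (k : ℕ) (hk : (N - |m|).toNat ≤ k) :
      (X : ℤ⟦X⟧) ^ (N - |m|).toNat ∣ qPochhammer (X ^ s) (X ^ s) k - J s :=
    (pow_dvd_pow X hk).trans (J_eq_qProd s ▸ X_pow_dvd_qPochhammer_sub_qProd s hs k)
  have hprod := qPochhammer_mul_gaussBinom (X ^ s : ℤ⟦X⟧) (show i + j = 2 * N by omega)
  rw [show (i - N : ℤ) = m by omega] at hprod
  rw [← (isUnit_J hs).dvd_mul_left, show J s * (J s * gaussBinom (X ^ s) N m - 1) =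
    (qPochhammer (X ^ s) (X ^ s) (2 * N) - J s)
      - (qPochhammer (X ^ s) (X ^ s) i - J s) *
        (qPochhammer (X ^ s) (X ^ s) j * gaussBinom (X ^ s) N m)
      - (qPochhammer (X ^ s) (X ^ s) j - J s) * (J s * gaussBinom (X ^ s) N m) by
    linear_combination hprod]
  have := neg_abs_le m
  have := le_abs_self m
  exact ((dvd _ (by omega)).sub ((dvd _ (by omega)).mul_right _)).sub
    ((dvd _ (by omega)).mul_right _)

theorem tendsto_J_mul_sum_gaussBinom (c : ℤ → ℤ) (he : ∀ m, |m| ≤ e m + 1) {s : ℕ} (hs : s ≠ 0) :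
    Tendsto (fun N : ℕ => J s * ∑ m ∈ Finset.Icc (-(N : ℤ)) N,
      gaussBinom (X ^ s) N m * (C (c m) * X ^ e m)) atTop (𝓝 (thetaSeries c e)) := by
  refine tendsto_of_X_pow_dvd_sub (tendsto_sub_atTop_nat 1) fun N => ?_
  rw [← sub_add_sub_cancel _ (∑ m ∈ Finset.Icc (-(N : ℤ)) N, C (c m) * X ^ e m)]
  refine dvd_add ?_ (X_pow_dvd_sum_sub_thetaSeries c he N)
  rw [Finset.mul_sum, ← Finset.sum_sub_distrib]
  refine Finset.dvd_sum fun m hm => ?_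
  rw [show J s * (gaussBinom (X ^ s) N m * (C (c m) * X ^ e m)) - C (c m) * X ^ e m =
    C (c m) * ((J s * gaussBinom (X ^ s) N m - 1) * X ^ e m) by ring]
  have hm' : |m| ≤ N := abs_le.2 (Finset.mem_Icc.1 hm)
  refine Dvd.dvd.mul_left (dvd_trans ?_
    (mul_dvd_mul_right (X_pow_dvd_J_mul_gaussBinom_sub_one hs hm') _)) _
  rw [← pow_add]
  exact pow_dvd_pow _ (by have := he m; omega)

theorem jacobi_triple_product {a b : ℕ} (ha : a ≠ 0) (hb : b ≠ 0)
    (he : ∀ m, (2 * e m : ℤ) = a * (m * (m + 1)) + b * (m * (m - 1))) :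
    J (a + b) * (qProd a (a + b) * qProd b (a + b)) =
      thetaSeries (fun m => (-1) ^ m.natAbs) e := by
  have growth (m : ℤ) : |m| ≤ e m + 1 := by
    obtain ⟨x, y, -, -, hxy, hy⟩ := exists_triangular m
    have h := he m
    have hx : m * (m + 1) = 2 * x := by linarith
    have hax : (x : ℤ) ≤ a * x := by exact_mod_cast Nat.le_mul_of_pos_left x (by omega)
    have hby : (y : ℤ) ≤ b * y := by exact_mod_cast Nat.le_mul_of_pos_left y (by omega)
    rw [hx, hy] at h
    rw [abs_le]
    constructor <;> linarith
  have hs : a + b ≠ 0 := by omega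
  refine tendsto_nhds_unique (tendsto_const_nhds.mul
    ((tendsto_qPochhammer a hs).mul (tendsto_qPochhammer b hs))) ?_
  refine (tendsto_J_mul_sum_gaussBinom _ growth hs).congr fun N => ?_
  rw [pow_add, qPochhammer_mul_qPochhammer_eq_sum]
  refine congrArg _ (Finset.sum_congr rfl fun m _ => congrArg _ ?_)
  obtain ⟨x, y, hx, hy, hxy, hy'⟩ := exists_triangular m
  have exponent : e m = a * x + b * y := by
    have h := he m
    rw [show m * (m + 1) = 2 * x by linarith, hy'] at h
    zify
    linarith
  rw [thetaTerm, hx, hy, exponent, map_pow, map_neg, map_one]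
  simp only [Int.toNat_natCast, pow_add, pow_mul]

/-- The triangular number `m (m - 1) / 2`. -/
def triangular (m : ℤ) : ℕ := (m * (m - 1) / 2).toNat

theorem two_mul_triangular (m : ℤ) : (2 * triangular m : ℤ) = m * (m - 1) := by
  obtain ⟨a, b, -, hb, -, hb'⟩ := exists_triangular m
  rw [triangular, hb, Int.toNat_natCast, hb']

theorem abs_le_triangular_add_one (m : ℤ) : |m| ≤ triangular m + 1 := by
  rw [abs_le]
  constructor <;> nlinarith [two_mul_triangular m, sq_nonneg (m - 1), sq_nonneg (m - 2)]

theorem J_one_cube_eq_thetaSeries :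
    J 1 ^ 3 = -thetaSeries (fun m => (-1) ^ m.natAbs * m) triangular := by
  have lim : Tendsto (qPochhammer (X : ℤ⟦X⟧) X) atTop (𝓝 (J 1)) := by
    simpa [J_eq_qProd] using tendsto_qPochhammer 1 one_ne_zero
  have lim_prod := (tendsto_const_nhds (x := J 1)).mul
    (lim.mul (lim.comp (tendsto_add_atTop_nat 1))).neg
  have lim_sum := (tendsto_J_mul_sum_gaussBinom (fun m => (-1) ^ m.natAbs * m)
    abs_le_triangular_add_one one_ne_zero).comp (tendsto_add_atTop_nat 1)
  have := tendsto_nhds_unique lim_prod (lim_sum.congr fun N => ?_)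
  · linear_combination -this
  · simp [neg_qPochhammer_mul_qPochhammer_eq_sum, triangular]

end ThetaSeries

end

/-! ### Seven-dissections of theta series -/

section

open PowerSeries

section ThetaSeries

variable {c c' : ℤ → ℤ} {e e' : ℤ → ℕ} {n : ℕ}

theorem finite_support_thetaSeries (c : ℤ → ℤ) (he : ∀ m, |m| ≤ e m + 1) (n : ℕ) :
    (Function.support fun m => if e m = n then c m else 0).Finite := by
  refine (Set.finite_Icc (-(n + 1 : ℤ)) (n + 1)).subset (Function.support_subset_iff'.2 ?_)
  refine fun m hm => if_neg fun hn => hm (abs_le.1 ?_)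
  exact hn ▸ he m

theorem thetaSeries_add (c c' : ℤ → ℤ) (he : ∀ m, |m| ≤ e m + 1) :
    thetaSeries (fun m => c m + c' m) e = thetaSeries c e + thetaSeries c' e := by
  ext n
  simp only [map_add, thetaSeries, coeff_mk]
  rw [← finsum_add_distrib (finite_support_thetaSeries c he n)
    (finite_support_thetaSeries c' he n)]
  exact finsum_congr fun m => by split_ifs <;> simp

theorem thetaSeries_const_mul (k : ℤ) (c : ℤ → ℤ) (e : ℤ → ℕ) :
    thetaSeries (fun m => k * c m) e = C k * thetaSeries c e := by
  ext n
  rw [coeff_C_mul, thetaSeries, thetaSeries, coeff_mk, coeff_mk, ← smul_eq_mul k, smul_finsum]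
  exact finsum_congr fun m => by split_ifs <;> simp

theorem coeff_thetaSeries_eq_zero (c : ℤ → ℤ) (h : ∀ m, e m ≠ n) :
    coeff n (thetaSeries c e) = 0 := by
  simp only [thetaSeries, coeff_mk, if_neg (h _), finsum_zero]

theorem coeff_thetaSeries_of_unique (c : ℤ → ℤ) {m : ℤ} (hm : e m = n)
    (h : ∀ k, e k = n → k = m) : coeff n (thetaSeries c e) = c m := by
  rw [thetaSeries, coeff_mk, finsum_eq_single _ m fun k hk => if_neg fun hn => hk (h k hn),
    if_pos hm]

theorem coeff_thetaSeries_eq_finsum_mem (c : ℤ → ℤ) {s : Set ℤ} (h : ∀ m, e m = n → m ∈ s) :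
    coeff n (thetaSeries c e) = ∑ᶠ m ∈ s, if e m = n then c m else 0 := by
  rw [thetaSeries, coeff_mk, ← finsum_mem_univ]
  refine finsum_mem_inter_support_eq' _ _ _ fun m hm => ⟨fun _ => h m ?_, fun _ => trivial⟩
  by_contra hn
  exact hm (if_neg hn)

theorem coeff_thetaSeries_comp {k : ℤ} {σ : ℤ → ℤ} (hσ : Function.Injective σ)
    (hc : ∀ m, c (σ m) = k * c' m) (he : ∀ m, e (σ m) = e' m)
    (h : ∀ m, e m = n → m ∈ Set.range σ) :
    coeff n (thetaSeries c e) = k * coeff n (thetaSeries c' e') := by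
  rw [coeff_thetaSeries_eq_finsum_mem c h, finsum_mem_range hσ, ← coeff_C_mul,
    ← thetaSeries_const_mul, thetaSeries, coeff_mk]
  simp only [hc, he]

theorem coeff_thetaSeries_comp_add_comp {k : ℤ} {σ τ : ℤ → ℤ} (hgrowth : ∀ m, |m| ≤ e m + 1)
    (hσ : Function.Injective σ) (hτ : Function.Injective τ)
    (hdisj : Disjoint (Set.range σ) (Set.range τ)) (hcσ : ∀ m, c (σ m) = k * c' m)
    (hcτ : ∀ m, c (τ m) = k * c' m) (heσ : ∀ m, e (σ m) = e' m) (heτ : ∀ m, e (τ m) = e' m)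
    (h : ∀ m, e m = n → m ∈ Set.range σ ∪ Set.range τ) :
    coeff n (thetaSeries c e) = 2 * k * coeff n (thetaSeries c' e') := by
  have hfin (s : Set ℤ) := (finite_support_thetaSeries c hgrowth n).inter_of_right s
  rw [coeff_thetaSeries_eq_finsum_mem c h, finsum_mem_union' hdisj (hfin _) (hfin _),
    finsum_mem_range hσ, finsum_mem_range hτ, mul_assoc, ← coeff_C_mul,
    ← thetaSeries_const_mul, thetaSeries, coeff_mk]
  simp only [hcσ, hcτ, heσ, heτ, two_mul]

theorem expand_thetaSeries {k : ℕ} (hk : k ≠ 0) (c : ℤ → ℤ) (e : ℤ → ℕ) :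
    expand k hk (thetaSeries c e) = thetaSeries c fun m => k * e m := by
  ext n
  by_cases h : k ∣ n
  · obtain ⟨n, rfl⟩ := h
    simp [coeff_expand_mul, thetaSeries, hk]
  · rw [coeff_expand_of_not_dvd _ _ _ h,
      coeff_thetaSeries_eq_zero _ fun m hm => h (Dvd.intro _ hm)]

theorem X_pow_mul_thetaSeries (r : ℕ) (c : ℤ → ℤ) (e : ℤ → ℕ) :
    X ^ r * thetaSeries c e = thetaSeries c fun m => e m + r := by
  ext n
  rw [coeff_X_pow_mul']
  split_ifs with h
  · simp only [thetaSeries, coeff_mk, eq_tsub_iff_add_eq_of_le h]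
  · rw [coeff_thetaSeries_eq_zero _ fun m hm => by omega]

end ThetaSeries

/-- The generalised pentagonal number `m (3 m + 1) / 2`. -/
def pentagonal (m : ℤ) : ℕ := (m * (3 * m + 1) / 2).toNat

theorem two_mul_pentagonal (m : ℤ) : (2 * pentagonal m : ℤ) = m * (3 * m + 1) := by
  obtain ⟨a, b, -, -, hm, hb⟩ := exists_triangular m
  have : m * (3 * m + 1) = 2 * (3 * b + 2 * m) := by linear_combination 3 * hb
  rw [pentagonal, this, Int.mul_ediv_cancel_left _ two_ne_zero, Int.toNat_of_nonneg (by omega)]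

theorem abs_le_natAbs_sq_add_one (m : ℤ) : |m| ≤ (m.natAbs ^ 2 : ℕ) + 1 := by
  push_cast
  rw [sq_abs, abs_le]
  constructor <;> nlinarith [sq_nonneg (m - 1), sq_nonneg (m + 1)]

theorem J_one_eq_thetaSeries : J 1 = thetaSeries (fun m => (-1) ^ m.natAbs) pentagonal := by
  rw [← jacobi_triple_product (a := 2) (b := 1) two_ne_zero one_ne_zero
    fun m => by rw [two_mul_pentagonal]; push_cast; ring]
  rw [J_eq_qProd, J_eq_qProd, qProd_eq_prod 1 one_ne_zero three_ne_zero]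
  simp only [Finset.prod_range_succ, Finset.prod_range_zero]
  ring_nf

/-- Ramanujan's theta function `φ(-q) = ∑_m (-1) ^ m q ^ (m ^ 2)`. -/
def phi : ℤ⟦X⟧ := thetaSeries (fun m => (-1) ^ m.natAbs) fun m => m.natAbs ^ 2

theorem J_two_mul_phi : J 2 * phi = J 1 ^ 2 := by
  rw [phi, ← jacobi_triple_product (a := 1) (b := 1) one_ne_zero one_ne_zero
    fun m => by push_cast; rw [sq_abs]; ring, J_eq_qProd 1, J_eq_qProd,
    qProd_eq_prod 1 one_ne_zero two_ne_zero]
  simp only [Finset.prod_range_succ, Finset.prod_range_zero]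
  ring_nf

instance fact_prime_seven : Fact (Nat.Prime 7) := ⟨by norm_num⟩

theorem cast_pentagonal (m : ℤ) : (pentagonal m : ZMod 7) = 4 * m * (3 * m + 1) := by
  have h := congrArg (Int.cast : ℤ → ZMod 7) (two_mul_pentagonal m)
  push_cast at h
  linear_combination 4 * h - (pentagonal m : ZMod 7) * ZMod.natCast_self 7

theorem cast_triangular (m : ℤ) : (triangular m : ZMod 7) = 4 * m * (m - 1) := by
  have h := congrArg (Int.cast : ℤ → ZMod 7) (two_mul_triangular m)
  push_cast at h
  linear_combination 4 * h - (triangular m : ZMod 7) * ZMod.natCast_self 7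

theorem cast_natAbs_sq (m : ℤ) : ((m.natAbs ^ 2 : ℕ) : ZMod 7) = m ^ 2 := by
  exact_mod_cast congrArg (Int.cast : ℤ → ZMod 7) (Int.natAbs_sq m)

theorem mem_range_seven_mul_add {m r : ℤ} (h : (m : ZMod 7) = r) :
    m ∈ Set.range fun k : ℤ => 7 * k + r := by
  obtain ⟨k, hk⟩ := (ZMod.intCast_eq_intCast_iff_dvd_sub r m 7).1 h.symm
  exact ⟨k, by push_cast at hk; simp only; linarith⟩

theorem injective_seven_mul_add (r : ℤ) : Function.Injective fun k : ℤ => 7 * k + r :=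
  fun a b h => by simpa using h

theorem neg_one_pow_natAbs_seven_mul_add (m r : ℤ) :
    (-1 : ℤ) ^ (7 * m + r).natAbs = (-1) ^ r.natAbs * (-1) ^ m.natAbs := by
  rw [← pow_add, neg_one_pow_eq_pow_mod_two, neg_one_pow_eq_pow_mod_two (n := _ + _)]
  congr 1
  omega

section Dissection

variable {n : ℕ}

theorem coeff_J_one_eq_zero (h : (n : ZMod 7) = 3 ∨ (n : ZMod 7) = 4 ∨ (n : ZMod 7) = 6) :
    coeff n (J 1) = 0 := by
  rw [J_one_eq_thetaSeries]
  refine coeff_thetaSeries_eq_zero _ ?_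
  rintro m rfl
  rw [cast_pentagonal] at h
  generalize (m : ZMod 7) = x at h
  revert x
  decide

theorem J_forty_nine : J 49 = expand 49 (by norm_num) (J 1) := by
  rw [expand_J _ one_ne_zero, mul_one]

theorem coeff_J_one_of_eq_two (h : (n : ZMod 7) = 2) :
    coeff n (J 1) = -coeff n (X ^ 2 * J 49) := by
  rw [J_forty_nine, J_one_eq_thetaSeries, expand_thetaSeries, X_pow_mul_thetaSeries,
    ← neg_one_mul (coeff n _)]
  refine coeff_thetaSeries_comp (injective_seven_mul_add 1) (fun m => ?_) (fun m => ?_) ?_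
  · exact neg_one_pow_natAbs_seven_mul_add m 1
  · zify
    linarith [two_mul_pentagonal (7 * m + 1), two_mul_pentagonal m]
  · rintro m rfl
    refine mem_range_seven_mul_add ?_
    rw [cast_pentagonal] at h
    push_cast
    generalize (m : ZMod 7) = x at h
    revert x
    decide

theorem coeff_J_one_cube_eq_zero
    (h : (n : ZMod 7) = 2 ∨ (n : ZMod 7) = 4 ∨ (n : ZMod 7) = 5) : coeff n (J 1 ^ 3) = 0 := by
  rw [J_one_cube_eq_thetaSeries, map_neg, neg_eq_zero]
  refine coeff_thetaSeries_eq_zero _ ?_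
  rintro m rfl
  rw [cast_triangular] at h
  generalize (m : ZMod 7) = x at h
  revert x
  decide

theorem thetaSeries_neg_one_pow_triangular :
    thetaSeries (fun m => (-1) ^ m.natAbs) triangular = 0 := by
  ext n
  have h : coeff n (thetaSeries (fun m => (-1) ^ m.natAbs) triangular) =
      -1 * coeff n (thetaSeries (fun m => (-1) ^ m.natAbs) triangular) := by
    refine coeff_thetaSeries_comp (σ := fun m => 1 - m) sub_right_injective (fun m => ?_)
      (fun m => ?_) fun m _ => ⟨1 - m, sub_sub_cancel 1 m⟩
    · rw [neg_one_pow_natAbs_of_odd_sub (1 - m) m ⟨-m, by ring⟩, neg_one_mul]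
    · zify
      linarith [two_mul_triangular (1 - m), two_mul_triangular m]
  rw [map_zero]
  omega

theorem thetaSeries_seven_mul_sub_three :
    thetaSeries (fun m => (-1) ^ m.natAbs * (7 * m - 3)) triangular = -7 * J 1 ^ 3 := by
  have split : (fun m : ℤ => (-1 : ℤ) ^ m.natAbs * (7 * m - 3)) =
      fun m => 7 * ((-1) ^ m.natAbs * m) + -3 * (-1) ^ m.natAbs := by
    ext m
    ring
  rw [split, thetaSeries_add _ _ abs_le_triangular_add_one, thetaSeries_const_mul,
    thetaSeries_const_mul, thetaSeries_neg_one_pow_triangular, J_one_cube_eq_thetaSeries,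
    map_ofNat]
  ring

theorem coeff_J_one_cube_of_eq_six (h : (n : ZMod 7) = 6) :
    coeff n (J 1 ^ 3) = -7 * coeff n (X ^ 6 * J 49 ^ 3) := by
  have hcube : coeff n (thetaSeries (fun m => (-1) ^ m.natAbs * m) triangular) =
      -1 * coeff n (X ^ 6 * expand 49 (by norm_num) (-7 * J 1 ^ 3)) := by
    rw [← thetaSeries_seven_mul_sub_three, expand_thetaSeries, X_pow_mul_thetaSeries]
    refine coeff_thetaSeries_comp (injective_seven_mul_add (-3)) (fun m => ?_) (fun m => ?_) ?_
    · rw [neg_one_pow_natAbs_seven_mul_add]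
      norm_num
      ring
    · zify
      linarith [two_mul_triangular (7 * m + -3), two_mul_triangular m]
    · rintro m rfl
      refine mem_range_seven_mul_add ?_
      rw [cast_triangular] at h
      push_cast
      generalize (m : ZMod 7) = x at h
      revert x
      decide
  have hexpand : X ^ 6 * expand 49 (by norm_num) (-7 * J 1 ^ 3) = C (-7) * (X ^ 6 * J 49 ^ 3) := by
    rw [map_mul, map_pow, ← J_forty_nine, map_neg, map_neg, map_ofNat, map_ofNat]
    ring
  rw [J_one_cube_eq_thetaSeries, map_neg, hcube, hexpand, coeff_C_mul, neg_one_mul, neg_neg]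

theorem coeff_phi_eq_zero (h : (n : ZMod 7) = 3 ∨ (n : ZMod 7) = 5 ∨ (n : ZMod 7) = 6) :
    coeff n phi = 0 := by
  refine coeff_thetaSeries_eq_zero _ ?_
  rintro m rfl
  rw [cast_natAbs_sq] at h
  generalize (m : ZMod 7) = x at h
  revert x
  decide

theorem coeff_phi_of_eq_zero (h : (n : ZMod 7) = 0) :
    coeff n phi = coeff n (expand 49 (by norm_num) phi) := by
  rw [phi, expand_thetaSeries, ← one_mul (coeff n (thetaSeries _ fun m => 49 * _))]
  refine coeff_thetaSeries_comp (injective_seven_mul_add 0) (fun m => ?_) (fun m => ?_) ?_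
  · exact neg_one_pow_natAbs_seven_mul_add m 0
  · zify
    simp only [sq_abs]
    ring
  · rintro m rfl
    refine mem_range_seven_mul_add ?_
    rw [cast_natAbs_sq] at h
    push_cast
    exact pow_eq_zero_iff two_ne_zero |>.1 h

/-- The theta product `∑_m (-1) ^ m q ^ (49 m ^ 2 + 14 k m)`; twice its shift by `q ^ (k ^ 2)` is,
up to sign, the part of `phi` with exponents congruent to `k ^ 2` modulo 7. -/
def thetaPart (k : ℕ) : ℤ⟦X⟧ := J 98 * (qProd (49 + 14 * k) 98 * qProd (49 - 14 * k) 98)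

theorem cast_toNat_thetaPart_exponent {k : ℕ} (hk : k ≤ 3) (m : ℤ) :
    ((49 * m ^ 2 + 14 * k * m).toNat : ℤ) = 49 * m ^ 2 + 14 * k * m := by
  refine Int.toNat_of_nonneg ?_
  rcases le_or_gt 0 m with h | h
  · positivity
  · have : (k : ℤ) ≤ 3 := by exact_mod_cast hk
    nlinarith [mul_nonneg (neg_nonneg.2 h.le) (sub_nonneg.2 this)]

theorem thetaPart_eq_thetaSeries {k : ℕ} (hk : k ≤ 3) :
    thetaPart k =
      thetaSeries (fun m => (-1) ^ m.natAbs) fun m => (49 * m ^ 2 + 14 * k * m).toNat := by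
  have hsum : 49 + 14 * k + (49 - 14 * k) = 98 := by omega
  rw [thetaPart, ← jacobi_triple_product (a := 49 + 14 * k) (b := 49 - 14 * k) (by omega)
    (by omega) fun m => ?_, hsum]
  rw [cast_toNat_thetaPart_exponent hk, Nat.cast_sub (by omega)]
  push_cast
  ring

theorem coeff_thetaPart_eq_zero {k : ℕ} (hk : k ≤ 3) (h : (n : ZMod 7) ≠ 0) :
    coeff n (thetaPart k) = 0 := by
  rw [thetaPart_eq_thetaSeries hk]
  refine coeff_thetaSeries_eq_zero _ ?_
  rintro m rfl
  refine h ((ZMod.natCast_eq_zero_iff _ 7).2 (Int.natCast_dvd_natCast.1 ?_))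
  rw [cast_toNat_thetaPart_exponent hk]
  exact ⟨7 * m ^ 2 + 2 * k * m, by push_cast; ring⟩

theorem coeff_phi_of_eq_sq {k : ℕ} (hk₀ : k ≠ 0) (hk : k ≤ 3) (h : (n : ZMod 7) = k ^ 2) :
    coeff n phi = 2 * (-1) ^ k * coeff n (X ^ k ^ 2 * thetaPart k) := by
  rw [phi, thetaPart_eq_thetaSeries hk, X_pow_mul_thetaSeries]
  have exponent (m : ℤ) :
      (7 * m + k).natAbs ^ 2 = (49 * m ^ 2 + 14 * k * m).toNat + k ^ 2 := by
    zify
    rw [cast_toNat_thetaPart_exponent hk, sq_abs]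
    ring
  refine coeff_thetaSeries_comp_add_comp abs_le_natAbs_sq_add_one (injective_seven_mul_add k)
    (neg_injective.comp (injective_seven_mul_add k)) ?_ (fun m => ?_) (fun m => ?_) exponent
    (fun m => ?_) ?_
  · refine Set.disjoint_left.2 ?_
    rintro _ ⟨a, rfl⟩ ⟨b, hb⟩
    simp only [Function.comp_apply] at hb
    omega
  · exact neg_one_pow_natAbs_seven_mul_add m k
  · rw [Function.comp_apply, Int.natAbs_neg]
    exact neg_one_pow_natAbs_seven_mul_add m k
  · rw [Function.comp_apply, Int.natAbs_neg, exponent]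
  · rintro m rfl
    rw [cast_natAbs_sq, sq_eq_sq_iff_eq_or_eq_neg] at h
    rcases h with h | h
    · exact Or.inl (mem_range_seven_mul_add (by exact_mod_cast h))
    · obtain ⟨a, ha⟩ := mem_range_seven_mul_add (m := -m) (r := k) (by push_cast; rw [h, neg_neg])
      exact Or.inr ⟨a, by simp only [Function.comp_apply] at ha ⊢; omega⟩

theorem thetaPart_prod :
    thetaPart 1 * thetaPart 2 * thetaPart 3 * (J 14 * J 49) = J 98 ^ 4 * J 7 := by
  have h₇ := qProd_eq_prod 7 (s := 7) (d := 14) (by norm_num) (by norm_num)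
  have h₁₄ := qProd_eq_prod 14 (s := 14) (d := 7) (by norm_num) (by norm_num)
  have h₄₉ := qProd_eq_prod 49 (s := 49) (d := 2) (by norm_num) (by norm_num)
  simp only [Finset.prod_range_succ, Finset.prod_range_zero] at h₇ h₁₄ h₄₉
  norm_num at h₇ h₁₄ h₄₉
  simp only [thetaPart, J_eq_qProd, h₇, h₁₄, h₄₉]
  norm_num
  ring

end Dissection

end

/-! ### Laurent series and residues of exponents -/

section

open PowerSeries
open HahnSeries (ofPowerSeries single)

section Laurent

variable {R : Type*} [CommRing R]

theorem coeff_ofPowerSeries_of_neg (f : R⟦X⟧) {n : ℤ} (hn : n < 0) :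
    (ofPowerSeries ℤ R f).coeff n = 0 := by
  rw [coeff_coe, if_pos hn]

theorem ofPowerSeries_coeff_congr {f g : R⟦X⟧} {n : ℤ}
    (h : ∀ k : ℕ, (k : ℤ) = n → coeff k f = coeff k g) :
    (ofPowerSeries ℤ R f).coeff n = (ofPowerSeries ℤ R g).coeff n := by
  rcases lt_or_ge n 0 with hn | hn
  · rw [coeff_ofPowerSeries_of_neg _ hn, coeff_ofPowerSeries_of_neg _ hn]
  · lift n to ℕ using hn
    rw [LaurentSeries.coeff_coe_powerSeries, LaurentSeries.coeff_coe_powerSeries, h n rfl]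

/-- The substitution `q ↦ qᵏ` on Laurent series. -/
def dilate (k : ℕ) [NeZero k] : LaurentSeries R →+* LaurentSeries R :=
  HahnSeries.embDomainRingHom (AddMonoidHom.mulLeft (k : ℤ))
    (mul_right_injective₀ (Nat.cast_ne_zero.2 (NeZero.ne k)))
    fun _ _ => mul_le_mul_iff_right₀ (Nat.cast_pos.2 (NeZero.pos k))

section dilate

variable (k : ℕ) [NeZero k]

theorem coeff_dilate_mul (f : LaurentSeries R) (n : ℤ) :
    (dilate k f).coeff (k * n) = f.coeff n :=
  HahnSeries.embDomain_coeff

theorem coeff_dilate_of_not_dvd (f : LaurentSeries R) {n : ℤ} (h : ¬(k : ℤ) ∣ n) :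
    (dilate k f).coeff n = 0 := by
  refine HahnSeries.embDomain_of_notMem_range ?_
  rintro ⟨m, rfl⟩
  exact h (Dvd.intro _ rfl)

theorem dilate_injective : Function.Injective (dilate (R := R) k) := fun f g h => by
  ext n
  rw [← coeff_dilate_mul k f, h, coeff_dilate_mul]

theorem dilate_single (n : ℤ) (r : R) : dilate k (single n r) = single (k * n) r :=
  HahnSeries.embDomain_single

theorem dilate_ofPowerSeries (f : R⟦X⟧) :
    dilate k (ofPowerSeries ℤ R f) = ofPowerSeries ℤ R (expand k (NeZero.ne k) f) := by
  ext n
  by_cases hdvd : (k : ℤ) ∣ n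
  · obtain ⟨m, rfl⟩ := hdvd
    rw [coeff_dilate_mul]
    rcases lt_or_ge m 0 with hm | hm
    · rw [coeff_ofPowerSeries_of_neg _ hm, coeff_ofPowerSeries_of_neg _
        (mul_neg_of_pos_of_neg (Nat.cast_pos.2 (NeZero.pos k)) hm)]
    · lift m to ℕ using hm
      rw [← Nat.cast_mul, LaurentSeries.coeff_coe_powerSeries, LaurentSeries.coeff_coe_powerSeries,
        coeff_expand_mul]
  · rw [coeff_dilate_of_not_dvd k _ hdvd]
    rcases lt_or_ge n 0 with hn | hn
    · rw [coeff_ofPowerSeries_of_neg _ hn]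
    · lift n to ℕ using hn
      rw [LaurentSeries.coeff_coe_powerSeries,
        coeff_expand_of_not_dvd _ _ _ (by exact_mod_cast hdvd)]

end dilate

/-- The operator `U_k`, which keeps the coefficients whose exponent is divisible by `k`. -/
def decimate (k : ℕ) [NeZero k] : LaurentSeries R →+ LaurentSeries R where
  toFun f := HahnSeries.ofSuppBddBelow (fun n => f.coeff (k * n)) <|
    ⟨min 0 f.order, fun m hm => by
      have hk : (1 : ℤ) ≤ k := Nat.one_le_cast.2 NeZero.one_le
      by_contra! hlt
      refine hm (HahnSeries.coeff_eq_zero_of_lt_order ?_)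
      nlinarith [lt_min_iff.1 hlt]⟩
  map_zero' := by ext n; simp
  map_add' _ _ := rfl

theorem coeff_decimate (k : ℕ) [NeZero k] (f : LaurentSeries R) (n : ℤ) :
    (decimate k f).coeff n = f.coeff (k * n) := rfl

/-- The Laurent series all of whose exponents are congruent to `r` modulo `d`. -/
def residueClass (R : Type*) [CommRing R] {d : ℕ} (r : ZMod d) : AddSubgroup (LaurentSeries R) where
  carrier := {f | ∀ n : ℤ, (n : ZMod d) ≠ r → f.coeff n = 0}
  zero_mem' := fun _ _ => rfl
  add_mem' hf hg n hn := by rw [HahnSeries.coeff_add, hf n hn, hg n hn, add_zero]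
  neg_mem' hf n hn := by rw [HahnSeries.coeff_neg, hf n hn, neg_zero]

section residueClass

variable {d : ℕ}

theorem single_mem_residueClass (n : ℤ) (x : R) :
    single n x ∈ residueClass R (n : ZMod d) := fun m hm =>
  HahnSeries.coeff_single_of_ne fun h => hm (by rw [h])

instance gradedMonoid_residueClass : SetLike.GradedMonoid (residueClass R (d := d)) where
  one_mem := by simpa using single_mem_residueClass (d := d) 0 (1 : R)
  mul_mem r s f g hf hg n hn := by
    by_contra hc
    obtain ⟨i, hi, j, hj, rfl⟩ := HahnSeries.support_mul_subset (x := f) (y := g) hc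
    refine hn ?_
    rw [← not_imp_comm.1 (hf i) hi, ← not_imp_comm.1 (hg j) hj]
    push_cast
    rfl

theorem dilate_mem_residueClass_zero {k : ℕ} [NeZero k] (hk : d ∣ k) (f : LaurentSeries R) :
    dilate k f ∈ residueClass R (0 : ZMod d) := fun n hn =>
  coeff_dilate_of_not_dvd k f fun h => hn <| (ZMod.intCast_zmod_eq_zero_iff_dvd n d).2 <|
    (Int.natCast_dvd_natCast.2 hk).trans h

theorem dilate_mem_residueClass (k : ℕ) [NeZero k] {r : ZMod d} {f : LaurentSeries R}
    (hf : f ∈ residueClass R r) : dilate k f ∈ residueClass R ((k : ZMod d) * r) := fun n hn => by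
  by_cases hdvd : (k : ℤ) ∣ n
  · obtain ⟨m, rfl⟩ := hdvd
    rw [coeff_dilate_mul]
    exact hf m fun h => hn (by rw [← h]; push_cast; rfl)
  · exact coeff_dilate_of_not_dvd k f hdvd

variable (d) [NeZero d]

theorem decimate_dilate (f : LaurentSeries R) : decimate d (dilate d f) = f := by
  ext n; rw [coeff_decimate, coeff_dilate_mul]

variable {d}

theorem dilate_decimate {f : LaurentSeries R} (hf : f ∈ residueClass R (0 : ZMod d)) :
    dilate d (decimate d f) = f := by
  ext n
  by_cases hdvd : (d : ℤ) ∣ n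
  · obtain ⟨m, rfl⟩ := hdvd
    rw [coeff_dilate_mul, coeff_decimate]
  · rw [coeff_dilate_of_not_dvd d _ hdvd, hf n (mt (ZMod.intCast_zmod_eq_zero_iff_dvd n d).1 hdvd)]

theorem decimate_eq_zero {r : ZMod d} {f : LaurentSeries R} (hf : f ∈ residueClass R r)
    (hr : r ≠ 0) : decimate d f = 0 := by
  ext n
  exact hf _ (by push_cast; simpa using hr.symm)

theorem eq_zero_of_sum_eq_zero {g : ZMod d → LaurentSeries R} (hg : ∀ r, g r ∈ residueClass R r)
    (h : ∑ r, g r = 0) (r : ZMod d) : g r = 0 := by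
  ext n
  by_cases hn : (n : ZMod d) = r
  · have hsum := congrArg (fun f => HahnSeries.coeff f n) h
    rwa [HahnSeries.coeff_sum, Finset.sum_eq_single r
      (fun s _ hs => hg s n fun hns => hs (hns.symm.trans hn)) (by simp)] at hsum
  · exact hg r n hn

end residueClass

/-- The part of a Laurent series with exponents congruent to `r` modulo `d`. -/
def residuePart {d : ℕ} (r : ZMod d) (f : LaurentSeries R) : LaurentSeries R :=
  ⟨fun n => if (n : ZMod d) = r then f.coeff n else 0, f.isPWO_support.mono fun n hn => by
    simp only [Function.mem_support, ne_eq, ite_eq_right_iff, Classical.not_imp] at hn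
    exact hn.2⟩

section residuePart

variable {d : ℕ} (r : ZMod d)

theorem coeff_residuePart (f : LaurentSeries R) (n : ℤ) :
    (residuePart r f).coeff n = if (n : ZMod d) = r then f.coeff n else 0 := rfl

theorem residuePart_mem (f : LaurentSeries R) : residuePart r f ∈ residueClass R r :=
  fun n hn => by rw [coeff_residuePart, if_neg hn]

theorem sum_residuePart [NeZero d] (f : LaurentSeries R) :
    ∑ r : ZMod d, residuePart r f = f := by
  ext n
  simp [HahnSeries.coeff_sum, coeff_residuePart]

theorem residuePart_ofPowerSeries {f g : R⟦X⟧} (hg : ofPowerSeries ℤ R g ∈ residueClass R r)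
    (h : ∀ n : ℕ, (n : ZMod d) = r → coeff n f = coeff n g) :
    residuePart r (ofPowerSeries ℤ R f) = ofPowerSeries ℤ R g := by
  ext n
  rw [coeff_residuePart]
  split_ifs with hn
  · exact ofPowerSeries_coeff_congr fun k hk => h k (by rw [← hn, ← hk, Int.cast_natCast])
  · rw [hg n hn]

theorem residuePart_ofPowerSeries_eq_zero {f : R⟦X⟧}
    (h : ∀ n : ℕ, (n : ZMod d) = r → coeff n f = 0) :
    residuePart r (ofPowerSeries ℤ R f) = 0 := by
  simpa using residuePart_ofPowerSeries (g := 0) r (by simp [zero_mem])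
    fun n hn => (h n hn).trans (map_zero _).symm

end residuePart

theorem decimate_dilate_mul (d : ℕ) [NeZero d] (f g : LaurentSeries R) :
    decimate d (dilate d f * g) = f * decimate d g := by
  conv_lhs => rw [← sum_residuePart (d := d) g]
  have hmem (r : ZMod d) := residuePart_mem r g
  rw [Finset.mul_sum, map_sum, Finset.sum_eq_single (0 : ZMod d)]
  · have hzero : decimate d (residuePart (0 : ZMod d) g) = decimate d g := by
      ext n; simp [coeff_decimate, coeff_residuePart]
    rw [← dilate_decimate (hmem 0), ← map_mul, decimate_dilate, hzero]
  · intro r _ hr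
    exact decimate_eq_zero (by
      simpa using SetLike.mul_mem_graded (dilate_mem_residueClass_zero dvd_rfl f) (hmem r)) hr
  · simp

/-- The lowest term of the Laurent series `f` is `c qⁿ` (where `c = 0` is allowed). -/
def HasLowestTerm (n : ℤ) (c : R) (f : LaurentSeries R) : Prop :=
  ∃ g : R⟦X⟧, f = single n 1 * ofPowerSeries ℤ R g ∧ constantCoeff g = c

namespace HasLowestTerm

variable {m n : ℤ} {c c' : R} {f g : LaurentSeries R}

theorem mul (hf : HasLowestTerm m c f) (hg : HasLowestTerm n c' g) :
    HasLowestTerm (m + n) (c * c') (f * g) := by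
  obtain ⟨f, rfl, rfl⟩ := hf
  obtain ⟨g, rfl, rfl⟩ := hg
  refine ⟨f * g, ?_, map_mul _ _ _⟩
  rw [map_mul, ← one_mul (1 : R), ← HahnSeries.single_mul_single, one_mul]
  ring

theorem pow (hf : HasLowestTerm n c f) (k : ℕ) : HasLowestTerm (k * n) (c ^ k) (f ^ k) := by
  obtain ⟨f, rfl, rfl⟩ := hf
  exact ⟨f ^ k, by rw [map_pow, mul_pow, HahnSeries.single_pow]; simp, map_pow _ _ _⟩

theorem coeff_eq (hf : HasLowestTerm n c f) : f.coeff n = c := by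
  obtain ⟨f, rfl, rfl⟩ := hf
  rw [HahnSeries.coeff_single_mul, one_mul, sub_self]
  simpa using LaurentSeries.coeff_coe_powerSeries f 0

theorem coeff_eq_zero (hf : HasLowestTerm n c f) (h : m < n) : f.coeff m = 0 := by
  obtain ⟨f, rfl, rfl⟩ := hf
  rw [HahnSeries.coeff_single_mul, one_mul, coeff_ofPowerSeries_of_neg _ (by omega)]

theorem of_coeff (hlt : ∀ m < n, f.coeff m = 0) (hn : f.coeff n = c) : HasLowestTerm n c f := by
  refine ⟨PowerSeries.mk fun k => f.coeff (n + k), ?_, ?_⟩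
  · ext m
    rw [HahnSeries.coeff_single_mul, one_mul]
    rcases lt_or_ge m n with hm | hm
    · rw [hlt m hm, coeff_ofPowerSeries_of_neg _ (by omega)]
    · obtain ⟨k, rfl⟩ := Int.le.dest hm
      rw [add_sub_cancel_left, LaurentSeries.coeff_coe_powerSeries, coeff_mk]
  · rw [← coeff_zero_eq_constantCoeff_apply, coeff_mk, Nat.cast_zero, add_zero, hn]

theorem dilate (hf : HasLowestTerm n c f) (k : ℕ) [NeZero k] :
    HasLowestTerm (k * n) c (dilate k f) := by
  obtain ⟨f, rfl, rfl⟩ := hf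
  exact ⟨expand k (NeZero.ne k) f, by rw [map_mul, dilate_single, dilate_ofPowerSeries], by simp⟩

theorem units_inv {u : (LaurentSeries R)ˣ} (hu : HasLowestTerm n 1 (u : LaurentSeries R)) :
    HasLowestTerm (-n) 1 (↑u⁻¹ : LaurentSeries R) := by
  obtain ⟨g, hg, hg₁⟩ := hu
  refine ⟨invOfUnit g 1, Units.inv_eq_of_mul_eq_one_right ?_, by simp⟩
  have hinv : g * invOfUnit g 1 = 1 := mul_invOfUnit g 1 (by simpa using hg₁)
  rw [hg, mul_mul_mul_comm, ← map_mul, hinv, HahnSeries.single_mul_single]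
  simp

end HasLowestTerm

theorem hasLowestTerm_single (n : ℤ) : HasLowestTerm n (1 : R) (single n 1) :=
  ⟨1, by simp, by simp⟩

theorem hasLowestTerm_ofPowerSeries (f : R⟦X⟧) :
    HasLowestTerm 0 (constantCoeff f) (ofPowerSeries ℤ R f) :=
  ⟨f, by rw [HahnSeries.single_zero_one, one_mul], rfl⟩

end Laurent

end

/-! ### The dissection of `J₁` and of `φ` -/

section

open PowerSeries
open HahnSeries (ofPowerSeries single)

/-- The monomial `q` as a unit of the ring of Laurent series. -/
def qUnit : (LaurentSeries ℤ)ˣ :=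
  ⟨single 1 1, single (-1) 1, by simp, by simp⟩

/-- The product `J_b` as a unit of the ring of Laurent series. -/
def jUnit (b : ℕ) [NeZero b] : (LaurentSeries ℤ)ˣ :=
  ((isUnit_J (NeZero.ne b)).map (ofPowerSeries ℤ ℤ)).unit

/-- The substitution `q ↦ qᵏ` on the units of the ring of Laurent series. -/
def dilateUnits (k : ℕ) [NeZero k] : (LaurentSeries ℤ)ˣ →* (LaurentSeries ℤ)ˣ :=
  Units.map (dilate k).toMonoidHom

section Units

variable (k b : ℕ) [NeZero k] [NeZero b]

theorem val_jUnit : (jUnit b : LaurentSeries ℤ) = ofPowerSeries ℤ ℤ (J b) := rfl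

theorem val_dilateUnits (u : (LaurentSeries ℤ)ˣ) :
    (dilateUnits k u : LaurentSeries ℤ) = dilate k (u : LaurentSeries ℤ) := rfl

theorem val_qUnit : (qUnit : LaurentSeries ℤ) = ofPowerSeries ℤ ℤ X :=
  HahnSeries.ofPowerSeries_X.symm

theorem val_qUnit_pow (n : ℕ) :
    ((qUnit ^ n : (LaurentSeries ℤ)ˣ) : LaurentSeries ℤ) = ofPowerSeries ℤ ℤ (X ^ n) := by
  rw [Units.val_pow_eq_pow_val, val_qUnit, map_pow]

theorem dilateUnits_qUnit : dilateUnits k qUnit = qUnit ^ k := by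
  ext1
  rw [val_dilateUnits, val_qUnit_pow, HahnSeries.ofPowerSeries_X_pow]
  exact (dilate_single k 1 1).trans (by rw [mul_one])

theorem dilateUnits_jUnit : dilateUnits k (jUnit b) = jUnit (k * b) := by
  ext1
  rw [val_dilateUnits, val_jUnit, val_jUnit, dilate_ofPowerSeries, expand_J _ (NeZero.ne b)]

theorem hasLowestTerm_qUnit : HasLowestTerm 1 1 (qUnit : LaurentSeries ℤ) :=
  hasLowestTerm_single 1

theorem hasLowestTerm_jUnit : HasLowestTerm 0 1 (jUnit b : LaurentSeries ℤ) := by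
  rw [val_jUnit]
  simpa [constantCoeff_J (NeZero.ne b)] using hasLowestTerm_ofPowerSeries (J b)

end Units

/-- Up to sign, the part of `J₁` with exponents congruent to 2 modulo 7. -/
def pivot : (LaurentSeries ℤ)ˣ := qUnit ^ 2 * jUnit 49

theorem val_pivot : (pivot : LaurentSeries ℤ) = ofPowerSeries ℤ ℤ (X ^ 2 * J 49) := by
  rw [pivot, Units.val_mul, val_qUnit_pow, val_jUnit, map_mul]

theorem pivot_mem : (pivot : LaurentSeries ℤ) ∈ residueClass ℤ (2 : ZMod 7) := by
  have hJ : jUnit 49 = dilateUnits 7 (jUnit 7) := (dilateUnits_jUnit 7 7).symm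
  rw [pivot, Units.val_mul, val_qUnit_pow, HahnSeries.ofPowerSeries_X_pow, hJ]
  exact SetLike.mul_mem_graded (single_mem_residueClass 2 1)
    (dilate_mem_residueClass_zero dvd_rfl _)

theorem hasLowestTerm_pivot : HasLowestTerm 2 1 (pivot : LaurentSeries ℤ) := by
  simpa [pivot] using (hasLowestTerm_qUnit.pow 2).mul (hasLowestTerm_jUnit 49)

theorem pivot_inv_mem : (↑pivot⁻¹ : LaurentSeries ℤ) ∈ residueClass ℤ (5 : ZMod 7) := by
  have hinv : pivot⁻¹ = qUnit⁻¹ ^ 2 * dilateUnits 7 (jUnit 7)⁻¹ := by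
    rw [map_inv, dilateUnits_jUnit, inv_pow, ← mul_inv]
    rfl
  rw [hinv, Units.val_mul, Units.val_pow_eq_pow_val]
  exact SetLike.mul_mem_graded (SetLike.pow_mem_graded 2 (single_mem_residueClass (-1) (1 : ℤ)))
    (dilate_mem_residueClass_zero (dvd_refl 7) (↑(jUnit 7)⁻¹))

/-- The component of the dissection of `J₁ / (q² J₄₉)` coming from the exponents of `J₁` congruent
to `r` modulo 7. -/
def component (r : ZMod 7) : LaurentSeries ℤ :=
  ↑pivot⁻¹ * residuePart r (jUnit 1 : LaurentSeries ℤ)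

/-- The component of `J₁ / (q² J₄₉)` with leading term `q⁻²`. -/
def alpha : LaurentSeries ℤ := component 0

/-- The component of `J₁ / (q² J₄₉)` with leading term `-q⁻¹`. -/
def beta : LaurentSeries ℤ := component 1

/-- The component of `J₁ / (q² J₄₉)` with leading term `q³`. -/
def gamma : LaurentSeries ℤ := component 5

theorem component_mem (r : ZMod 7) : component r ∈ residueClass ℤ (5 + r) :=
  SetLike.mul_mem_graded pivot_inv_mem (residuePart_mem r _)

theorem alpha_mem : alpha ∈ residueClass ℤ (5 : ZMod 7) := component_mem 0

theorem beta_mem : beta ∈ residueClass ℤ (6 : ZMod 7) := component_mem 1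

theorem gamma_mem : gamma ∈ residueClass ℤ (3 : ZMod 7) := component_mem 5

theorem sum_univ_zmod_seven {M : Type*} [AddCommMonoid M] (f : ZMod 7 → M) :
    ∑ r, f r = f 0 + f 1 + f 2 + f 3 + f 4 + f 5 + f 6 :=
  Fin.sum_univ_seven f

theorem residuePart_jUnit_one_two :
    residuePart (2 : ZMod 7) (jUnit 1 : LaurentSeries ℤ) = -pivot := by
  rw [val_pivot, ← map_neg]
  refine residuePart_ofPowerSeries 2 ?_ fun n hn => ?_
  · rw [map_neg, ← val_pivot]
    exact neg_mem pivot_mem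
  · rw [coeff_J_one_of_eq_two hn, map_neg]

theorem jUnit_one_div_pivot :
    (↑(pivot⁻¹ * jUnit 1) : LaurentSeries ℤ) = alpha + beta + gamma - 1 := by
  have hzero (r : ZMod 7) (hr : r = 3 ∨ r = 4 ∨ r = 6) :
      residuePart r (jUnit 1 : LaurentSeries ℤ) = 0 :=
    residuePart_ofPowerSeries_eq_zero r fun n hn => coeff_J_one_eq_zero (by rwa [hn])
  have hsum := sum_residuePart (d := 7) (jUnit 1 : LaurentSeries ℤ)
  rw [sum_univ_zmod_seven, residuePart_jUnit_one_two, hzero 3 (by simp), hzero 4 (by simp),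
    hzero 6 (by simp)] at hsum
  rw [Units.val_mul, alpha, beta, gamma, component, component, component]
  linear_combination -(↑pivot⁻¹ : LaurentSeries ℤ) * hsum - pivot.inv_mul

theorem residuePart_jUnit_one_cube_six :
    residuePart (6 : ZMod 7) (ofPowerSeries ℤ ℤ (J 1 ^ 3)) =
      -(7 • (pivot : LaurentSeries ℤ) ^ 3) := by
  have hval : ofPowerSeries ℤ ℤ (-(7 • (X ^ 2 * J 49) ^ 3)) =
      -(7 • (pivot : LaurentSeries ℤ) ^ 3) := by
    rw [map_neg, map_nsmul, map_pow, val_pivot]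
  rw [← hval]
  refine residuePart_ofPowerSeries 6 ?_ fun n hn => ?_
  · rw [hval]
    exact neg_mem (nsmul_mem (SetLike.pow_mem_graded 3 pivot_mem) 7)
  · rw [coeff_J_one_cube_of_eq_six hn, map_neg, map_nsmul, mul_pow, ← pow_mul]
    simp

theorem exists_jUnit_one_div_pivot_cube : ∃ K₁ ∈ residueClass ℤ (1 : ZMod 7),
    ∃ K₂ ∈ residueClass ℤ (2 : ZMod 7), ∃ K₄ ∈ residueClass ℤ (4 : ZMod 7),
      (alpha + beta + gamma - 1) ^ 3 = K₁ + K₂ + K₄ - 7 := by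
  have hzero (r : ZMod 7) (hr : r = 2 ∨ r = 4 ∨ r = 5) :
      residuePart r (ofPowerSeries ℤ ℤ (J 1 ^ 3)) = 0 :=
    residuePart_ofPowerSeries_eq_zero r fun n hn => coeff_J_one_cube_eq_zero (by rwa [hn])
  have hsum := sum_residuePart (d := 7) (ofPowerSeries ℤ ℤ (J 1 ^ 3))
  rw [sum_univ_zmod_seven, residuePart_jUnit_one_cube_six, hzero 2 (by simp), hzero 4 (by simp),
    hzero 5 (by simp), map_pow, ← val_jUnit] at hsum
  have hmem (r : ZMod 7) := SetLike.mul_mem_graded (SetLike.pow_mem_graded 3 pivot_inv_mem)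
    (residuePart_mem r ((jUnit 1 : LaurentSeries ℤ) ^ 3))
  refine ⟨_, hmem 0, _, hmem 1, _, hmem 3, ?_⟩
  have hinv : (↑pivot⁻¹ : LaurentSeries ℤ) ^ 3 * (pivot : LaurentSeries ℤ) ^ 3 = 1 := by
    rw [← mul_pow, Units.inv_mul, one_pow]
  rw [← jUnit_one_div_pivot, Units.val_mul, mul_pow]
  linear_combination -(↑pivot⁻¹ : LaurentSeries ℤ) ^ 3 * hsum - 7 * hinv

instance charZero_laurentSeries : CharZero (LaurentSeries ℤ) :=
  charZero_of_injective_ringHom (HahnSeries.C_injective (Γ := ℤ) (R := ℤ))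

theorem one_mem_residueClass : (1 : LaurentSeries ℤ) ∈ residueClass ℤ (0 : ZMod 7) :=
  SetLike.one_mem_graded (residueClass ℤ (d := 7))

theorem relations_of_cube_eq {a b c K₁ K₂ K₄ : LaurentSeries ℤ}
    (ha : a ∈ residueClass ℤ (5 : ZMod 7)) (hb : b ∈ residueClass ℤ (6 : ZMod 7))
    (hc : c ∈ residueClass ℤ (3 : ZMod 7)) (h₁ : K₁ ∈ residueClass ℤ (1 : ZMod 7))
    (h₂ : K₂ ∈ residueClass ℤ (2 : ZMod 7)) (h₄ : K₄ ∈ residueClass ℤ (4 : ZMod 7))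
    (hcube : (a + b + c - 1) ^ 3 = K₁ + K₂ + K₄ - 7) :
    a * b * c = -1 ∧ a ^ 2 * c - c ^ 2 + b = 0 ∧ b ^ 2 * a - a ^ 2 + c = 0 ∧
      c ^ 2 * b - b ^ 2 + a = 0 := by
  open SetLike in
  have hzero := eq_zero_of_sum_eq_zero (d := 7)
    (g := ![6 • (a * b * c + 1), a ^ 3 + 3 • (b ^ 2 * c) - 6 • (a * c) - K₁,
      c ^ 3 + 3 • (a ^ 2 * b) - 6 • (b * c) - K₂, 3 • (b ^ 2 * a - a ^ 2 + c),
      b ^ 3 + 3 • (c ^ 2 * a) - 6 • (a * b) - K₄, 3 • (c ^ 2 * b - b ^ 2 + a),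
      3 • (a ^ 2 * c - c ^ 2 + b)])
    (by
      intro r
      fin_cases r
      · exact nsmul_mem (add_mem (mul_mem_graded (mul_mem_graded ha hb) hc) one_mem_residueClass) 6
      · exact sub_mem (sub_mem (add_mem (pow_mem_graded 3 ha) (nsmul_mem
          (mul_mem_graded (pow_mem_graded 2 hb) hc) 3)) (nsmul_mem (mul_mem_graded ha hc) 6)) h₁
      · exact sub_mem (sub_mem (add_mem (pow_mem_graded 3 hc) (nsmul_mem
          (mul_mem_graded (pow_mem_graded 2 ha) hb) 3)) (nsmul_mem (mul_mem_graded hb hc) 6)) h₂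
      · exact nsmul_mem (add_mem (sub_mem
          (mul_mem_graded (pow_mem_graded 2 hb) ha) (pow_mem_graded 2 ha)) hc) 3
      · exact sub_mem (sub_mem (add_mem (pow_mem_graded 3 hb) (nsmul_mem
          (mul_mem_graded (pow_mem_graded 2 hc) ha) 3)) (nsmul_mem (mul_mem_graded ha hb) 6)) h₄
      · exact nsmul_mem (add_mem (sub_mem
          (mul_mem_graded (pow_mem_graded 2 hc) hb) (pow_mem_graded 2 hb)) ha) 3
      · exact nsmul_mem (add_mem (sub_mem
          (mul_mem_graded (pow_mem_graded 2 ha) hc) (pow_mem_graded 2 hc)) hb) 3)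
    ((sum_univ_zmod_seven _).trans (by
      simp only [Matrix.cons_val]
      linear_combination hcube))
  have cancel {k : ℕ} {f : LaurentSeries ℤ} (hk : k ≠ 0) (h : k • f = 0) : f = 0 :=
    (smul_eq_zero.1 h).resolve_left hk
  exact ⟨eq_neg_of_add_eq_zero_left (cancel (by decide) (hzero 0)),
    cancel (by decide) (hzero 6), cancel (by decide) (hzero 3), cancel (by decide) (hzero 5)⟩

theorem alpha_beta_gamma_relations : alpha * beta * gamma = -1 ∧
    alpha ^ 2 * gamma - gamma ^ 2 + beta = 0 ∧ beta ^ 2 * alpha - alpha ^ 2 + gamma = 0 ∧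
    gamma ^ 2 * beta - beta ^ 2 + alpha = 0 :=
  let ⟨_, h₁, _, h₂, _, h₄, hcube⟩ := exists_jUnit_one_div_pivot_cube
  relations_of_cube_eq alpha_mem beta_mem gamma_mem h₁ h₂ h₄ hcube

theorem coeff_J_one_pentagonal (m : ℤ) : coeff (pentagonal m) (J 1) = (-1) ^ m.natAbs := by
  rw [J_one_eq_thetaSeries]
  refine coeff_thetaSeries_of_unique _ rfl fun k hk => ?_
  have hprod : (k - m) * (3 * k + 3 * m + 1) = 0 := by
    have := two_mul_pentagonal k
    rw [hk] at this
    linear_combination two_mul_pentagonal m - this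
  rcases mul_eq_zero.1 hprod with h | h <;> omega

theorem hasLowestTerm_residuePart {d r : ℕ} (hr : r < d) (f : ℤ⟦X⟧) :
    HasLowestTerm r (coeff r f) (residuePart (r : ZMod d) (ofPowerSeries ℤ ℤ f)) := by
  refine .of_coeff (fun m hm => ?_) ?_
  · rw [coeff_residuePart]
    split_ifs with h
    · refine coeff_ofPowerSeries_of_neg _ ?_
      have hdvd : (d : ℤ) ∣ r - m := by
        rwa [← ZMod.intCast_eq_intCast_iff_dvd_sub, Int.cast_natCast]
      have := Int.le_of_dvd (by omega) hdvd
      omega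
    · rfl
  · rw [coeff_residuePart, if_pos (Int.cast_natCast r), LaurentSeries.coeff_coe_powerSeries]

theorem hasLowestTerm_component {r : ℕ} {c : ℤ} (hr : r < 7) (hc : coeff r (J 1) = c) :
    HasLowestTerm (-2 + r) c (component r) := by
  simpa [component, val_jUnit, hc] using
    hasLowestTerm_pivot.units_inv.mul (hasLowestTerm_residuePart hr (J 1))

theorem hasLowestTerm_alpha : HasLowestTerm (-2) 1 alpha :=
  hasLowestTerm_component (r := 0) (by decide) (by
    simpa [pentagonal] using coeff_J_one_pentagonal 0)

theorem hasLowestTerm_beta : HasLowestTerm (-1) (-1) beta :=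
  hasLowestTerm_component (r := 1) (by decide) (by
    simpa [pentagonal] using coeff_J_one_pentagonal (-1))

theorem hasLowestTerm_gamma : HasLowestTerm 3 1 gamma :=
  hasLowestTerm_component (r := 5) (by decide) (by
    simpa [pentagonal] using coeff_J_one_pentagonal (-2))

/-- The theta series `φ = J₁² / J₂` as a unit of the ring of Laurent series. -/
def phiUnit : (LaurentSeries ℤ)ˣ := (jUnit 2)⁻¹ * jUnit 1 ^ 2

theorem val_phiUnit : (phiUnit : LaurentSeries ℤ) = ofPowerSeries ℤ ℤ phi := by
  rw [phiUnit, Units.val_mul, Units.inv_mul_eq_iff_eq_mul, val_jUnit, ← map_mul, J_two_mul_phi,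
    map_pow, Units.val_pow_eq_pow_val, val_jUnit]

/-- The component of the dissection of `φ(-q) / φ(-q⁴⁹)` with exponents congruent to `r`
modulo 7. -/
def phiPart (r : ZMod 7) : LaurentSeries ℤ :=
  ↑(dilateUnits 49 phiUnit)⁻¹ * residuePart r (phiUnit : LaurentSeries ℤ)

theorem phiPart_mem (r : ZMod 7) : phiPart r ∈ residueClass ℤ r := by
  rw [phiPart, ← map_inv, val_dilateUnits]
  simpa using SetLike.mul_mem_graded (dilate_mem_residueClass_zero (by decide : 7 ∣ 49) _)
    (residuePart_mem r _)

theorem residuePart_phiUnit_zero :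
    residuePart (0 : ZMod 7) (phiUnit : LaurentSeries ℤ) = dilateUnits 49 phiUnit := by
  rw [val_dilateUnits, val_phiUnit, dilate_ofPowerSeries]
  refine residuePart_ofPowerSeries 0 ?_ fun n hn => coeff_phi_of_eq_zero hn
  rw [← dilate_ofPowerSeries]
  exact dilate_mem_residueClass_zero (by decide) _

theorem phiUnit_div_dilateUnits :
    (↑((dilateUnits 49 phiUnit)⁻¹ * phiUnit) : LaurentSeries ℤ) =
      1 + phiPart 1 + phiPart 2 + phiPart 4 := by
  have hzero (r : ZMod 7) (hr : r = 3 ∨ r = 5 ∨ r = 6) :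
      residuePart r (phiUnit : LaurentSeries ℤ) = 0 := by
    rw [val_phiUnit]
    exact residuePart_ofPowerSeries_eq_zero r fun n hn => coeff_phi_eq_zero (by rwa [hn])
  have hsum := sum_residuePart (d := 7) (phiUnit : LaurentSeries ℤ)
  rw [sum_univ_zmod_seven, residuePart_phiUnit_zero, hzero 3 (by simp), hzero 5 (by simp),
    hzero 6 (by simp)] at hsum
  rw [Units.val_mul, phiPart, phiPart, phiPart]
  linear_combination -(↑(dilateUnits 49 phiUnit)⁻¹ : LaurentSeries ℤ) * hsum +
    (dilateUnits 49 phiUnit).inv_mul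

theorem residuePart_phiUnit_sq {k : ℕ} (hk₀ : k ≠ 0) (hk : k ≤ 3) :
    residuePart ((k : ZMod 7) ^ 2) (phiUnit : LaurentSeries ℤ) =
      (2 * (-1) ^ k : ℤ) • (↑(qUnit ^ k ^ 2) * ofPowerSeries ℤ ℤ (thetaPart k)) := by
  have hval : ofPowerSeries ℤ ℤ ((2 * (-1) ^ k : ℤ) • (X ^ k ^ 2 * thetaPart k)) =
      (2 * (-1) ^ k : ℤ) • (↑(qUnit ^ k ^ 2) * ofPowerSeries ℤ ℤ (thetaPart k)) := by
    rw [map_zsmul, map_mul, val_qUnit_pow]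
  rw [val_phiUnit, ← hval]
  refine residuePart_ofPowerSeries _ ?_ fun n hn => ?_
  · have hq : (↑(qUnit ^ k ^ 2) : LaurentSeries ℤ) ∈ residueClass ℤ ((k : ZMod 7) ^ 2) := by
      rw [val_qUnit_pow, HahnSeries.ofPowerSeries_X_pow]
      exact_mod_cast single_mem_residueClass (d := 7) ((k ^ 2 : ℕ) : ℤ) (1 : ℤ)
    have hθ : ofPowerSeries ℤ ℤ (thetaPart k) ∈ residueClass ℤ (0 : ZMod 7) := fun n hn => by
      rw [ofPowerSeries_coeff_congr (g := 0), map_zero, HahnSeries.coeff_zero]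
      rintro m rfl
      rw [coeff_thetaPart_eq_zero hk (by simpa using hn), map_zero]
    rw [hval]
    exact zsmul_mem (add_zero ((k : ZMod 7) ^ 2) ▸ SetLike.mul_mem_graded hq hθ) _
  · rw [coeff_phi_of_eq_sq hk₀ hk hn, map_zsmul, smul_eq_mul]

theorem phiPart_prod : phiPart 1 * phiPart 2 * phiPart 4 =
    8 * ↑(qUnit ^ 14 * (jUnit 98 ^ 7 * jUnit 7 * (jUnit 49 ^ 7 * jUnit 14)⁻¹)) := by
  have h₁ := residuePart_phiUnit_sq (k := 1) (by decide) (by decide)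
  have h₄ := residuePart_phiUnit_sq (k := 2) (by decide) (by decide)
  have h₂ := residuePart_phiUnit_sq (k := 3) (by decide) (by decide)
  rw [show ((1 : ℕ) : ZMod 7) ^ 2 = 1 by decide] at h₁
  rw [show ((2 : ℕ) : ZMod 7) ^ 2 = 4 by decide] at h₄
  rw [show ((3 : ℕ) : ZMod 7) ^ 2 = 2 by decide] at h₂
  have hθ : ofPowerSeries ℤ ℤ (thetaPart 1) * ofPowerSeries ℤ ℤ (thetaPart 2) *
      ofPowerSeries ℤ ℤ (thetaPart 3) = ↑(jUnit 98 ^ 4 * jUnit 7 * (jUnit 14 * jUnit 49)⁻¹) := by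
    rw [Units.val_mul, Units.eq_mul_inv_iff_mul_eq]
    simpa only [map_mul, map_pow, Units.val_mul, Units.val_pow_eq_pow_val, val_jUnit] using
      congrArg (ofPowerSeries ℤ ℤ) thetaPart_prod
  have hunits : qUnit ^ 14 * (jUnit 98 ^ 7 * jUnit 7 * (jUnit 49 ^ 7 * jUnit 14)⁻¹) =
      qUnit ^ 1 ^ 2 * qUnit ^ 2 ^ 2 * qUnit ^ 3 ^ 2 * (dilateUnits 49 phiUnit)⁻¹ ^ 3 *
        (jUnit 98 ^ 4 * jUnit 7 * (jUnit 14 * jUnit 49)⁻¹) := by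
    rw [phiUnit, map_mul, map_inv, map_pow, dilateUnits_jUnit, dilateUnits_jUnit]
    apply Additive.ofMul.injective
    simp only [ofMul_mul, ofMul_pow, ofMul_inv]
    abel
  rw [phiPart, phiPart, phiPart, h₁, h₂, h₄, hunits, Units.val_mul _ (_ * _), ← hθ]
  push_cast
  simp only [zsmul_eq_mul]
  push_cast
  ring

theorem dilate_two_jUnit_one_div_pivot : dilate 2 alpha + dilate 2 beta + dilate 2 gamma - 1 =
    ↑((qUnit ^ 4)⁻¹ * jUnit 2 * (jUnit 98)⁻¹) := by
  have hunits : (qUnit ^ 4)⁻¹ * jUnit 2 * (jUnit 98)⁻¹ = dilateUnits 2 (pivot⁻¹ * jUnit 1) := by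
    rw [pivot]
    simp only [map_mul, map_inv, map_pow, dilateUnits_jUnit, dilateUnits_qUnit]
    apply Additive.ofMul.injective
    simp only [ofMul_mul, ofMul_pow, ofMul_inv]
    abel
  rw [hunits, val_dilateUnits, jUnit_one_div_pivot]
  simp only [map_add, map_sub, map_one]

theorem sq_eq_dilate_two_mul_phiPart : (alpha + beta + gamma - 1) ^ 2 =
    (dilate 2 alpha + dilate 2 beta + dilate 2 gamma - 1) *
      (1 + phiPart 1 + phiPart 2 + phiPart 4) := by
  rw [dilate_two_jUnit_one_div_pivot, ← jUnit_one_div_pivot, ← phiUnit_div_dilateUnits,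
    ← Units.val_mul, ← Units.val_pow_eq_pow_val]
  congr 1
  rw [pivot, phiUnit]
  simp only [map_mul, map_inv, map_pow, dilateUnits_jUnit]
  apply Additive.ofMul.injective
  simp only [ofMul_mul, ofMul_pow, ofMul_inv]
  abel

theorem relations_of_sq_eq {a b c A B C u v w : LaurentSeries ℤ}
    (ha : a ∈ residueClass ℤ (5 : ZMod 7)) (hb : b ∈ residueClass ℤ (6 : ZMod 7))
    (hc : c ∈ residueClass ℤ (3 : ZMod 7)) (hA : A ∈ residueClass ℤ (3 : ZMod 7))
    (hB : B ∈ residueClass ℤ (5 : ZMod 7)) (hC : C ∈ residueClass ℤ (6 : ZMod 7))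
    (hu : u ∈ residueClass ℤ (1 : ZMod 7)) (hv : v ∈ residueClass ℤ (2 : ZMod 7))
    (hw : w ∈ residueClass ℤ (4 : ZMod 7))
    (hsq : (a + b + c - 1) ^ 2 = (A + B + C - 1) * (1 + u + v + w)) :
    C * u + B * v + A * w = 2 • 1 ∧ 2 • (a * c) = C * v - u ∧ 2 • (b * c) = B * w - v ∧
      a ^ 2 - 2 • c = A + C * w ∧ 2 • (a * b) = A * u - w ∧ b ^ 2 - 2 • a = B + A * v ∧
      c ^ 2 - 2 • b = C + B * u := by
  open SetLike in
  have hzero := eq_zero_of_sum_eq_zero (d := 7)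
    (g := ![2 • 1 - (C * u + B * v + A * w), 2 • (a * c) - (C * v - u), 2 • (b * c) - (B * w - v),
      a ^ 2 - 2 • c - (A + C * w), 2 • (a * b) - (A * u - w), b ^ 2 - 2 • a - (B + A * v),
      c ^ 2 - 2 • b - (C + B * u)])
    (by
      intro r
      fin_cases r
      · exact sub_mem (nsmul_mem one_mem_residueClass 2) (add_mem (add_mem
          (mul_mem_graded hC hu) (mul_mem_graded hB hv)) (mul_mem_graded hA hw))
      · exact sub_mem (nsmul_mem (mul_mem_graded ha hc) 2) (sub_mem (mul_mem_graded hC hv) hu)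
      · exact sub_mem (nsmul_mem (mul_mem_graded hb hc) 2) (sub_mem (mul_mem_graded hB hw) hv)
      · exact sub_mem (sub_mem (pow_mem_graded 2 ha) (nsmul_mem hc 2))
          (add_mem hA (mul_mem_graded hC hw))
      · exact sub_mem (nsmul_mem (mul_mem_graded ha hb) 2) (sub_mem (mul_mem_graded hA hu) hw)
      · exact sub_mem (sub_mem (pow_mem_graded 2 hb) (nsmul_mem ha 2))
          (add_mem hB (mul_mem_graded hA hv))
      · exact sub_mem (sub_mem (pow_mem_graded 2 hc) (nsmul_mem hb 2))
          (add_mem hC (mul_mem_graded hB hu)))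
    ((sum_univ_zmod_seven _).trans (by
      simp only [Matrix.cons_val]
      linear_combination hsq))
  exact ⟨(sub_eq_zero.1 (hzero 0)).symm, sub_eq_zero.1 (hzero 1), sub_eq_zero.1 (hzero 2),
    sub_eq_zero.1 (hzero 3), sub_eq_zero.1 (hzero 4), sub_eq_zero.1 (hzero 5),
    sub_eq_zero.1 (hzero 6)⟩

theorem phiPart_relations :
    dilate 2 gamma * phiPart 1 + dilate 2 beta * phiPart 2 + dilate 2 alpha * phiPart 4 = 2 • 1 ∧
    2 • (alpha * gamma) = dilate 2 gamma * phiPart 2 - phiPart 1 ∧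
    2 • (beta * gamma) = dilate 2 beta * phiPart 4 - phiPart 2 ∧
    alpha ^ 2 - 2 • gamma = dilate 2 alpha + dilate 2 gamma * phiPart 4 ∧
    2 • (alpha * beta) = dilate 2 alpha * phiPart 1 - phiPart 4 ∧
    beta ^ 2 - 2 • alpha = dilate 2 beta + dilate 2 alpha * phiPart 2 ∧
    gamma ^ 2 - 2 • beta = dilate 2 gamma + dilate 2 beta * phiPart 1 :=
  relations_of_sq_eq alpha_mem beta_mem gamma_mem (dilate_mem_residueClass 2 alpha_mem)
    (dilate_mem_residueClass 2 beta_mem) (dilate_mem_residueClass 2 gamma_mem) (phiPart_mem 1)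
    (phiPart_mem 2) (phiPart_mem 4) sq_eq_dilate_two_mul_phiPart

end

/-! ### The parameters `λ`, `μ`, `ν` of the dissection -/

section

open PowerSeries
open HahnSeries (ofPowerSeries single)

/-- The relations satisfied by `A = α³β`, `B = β³γ`, `C = γ³α`, the parameters `l`, `m`, `n`, and
the products `u`, `v`, `w` of a component of `φ(-q) / φ(-q⁴⁹)` with a component of
`J₁ / (q² J₄₉)`. -/
structure EliminationSystem {F : Type*} [CommRing F] (A B C l m n u v w : F) : Prop where
  prod_ABC : A * B * C = 1
  prod_lmn : l * m * n = 1
  rel_BC : 1 + B + B * C = 0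
  rel_CA : 1 + C + C * A = 0
  rel_AB : 1 + A + A * B = 0
  linear_u : u + 2 + A * m * w = 0
  linear_v : v + 2 + B * n * u = 0
  linear_w : w + 2 + C * l * v = 0
  quadratic_u : -B - 2 = m + l * u * B * C
  quadratic_v : -C - 2 = n + m * v * C * A
  quadratic_w : -A - 2 = l + n * w * A * B

namespace EliminationSystem

variable {F : Type*} [CommRing F] {A B C l m n u v w : F}

theorem rotate (E : EliminationSystem A B C l m n u v w) :
    EliminationSystem B C A m n l v w u where
  prod_ABC := by linear_combination E.prod_ABC
  prod_lmn := by linear_combination E.prod_lmn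
  rel_BC := E.rel_CA
  rel_CA := E.rel_AB
  rel_AB := E.rel_BC
  linear_u := E.linear_v
  linear_v := E.linear_w
  linear_w := E.linear_u
  quadratic_u := E.quadratic_v
  quadratic_v := E.quadratic_w
  quadratic_w := E.quadratic_u

theorem prod_mul_prod (E : EliminationSystem A B C l m n u v w) :
    A * m * (B * n) * (C * l) = 1 := by
  linear_combination l * m * n * E.prod_ABC + E.prod_lmn

variable [IsDomain F]

theorem eq_u (E : EliminationSystem A B C l m n u v w) (h₂ : (2 : F) ≠ 0) :
    u = -1 + A * m - C * l * (A * m) := by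
  apply mul_left_cancel₀ h₂
  linear_combination E.linear_u - A * m * E.linear_w + C * l * (A * m) * E.linear_v -
    u * E.prod_mul_prod

/-- The right-hand side is invariant under `rotate`, which is what makes the system solvable. -/
theorem two_sub_mul (E : EliminationSystem A B C l m n u v w) (h₂ : (2 : F) ≠ 0) :
    (2 - A * m) * (B * n * C - (1 - B * n - C * l)) =
      -(1 - A * m - B * n - C * l + A * m * (B * n) + B * n * (C * l) + C * l * (A * m)) := by
  have hC : C * (2 - A * m) = C * l * u - 1 := by
    linear_combination -(1 + C) * E.quadratic_u - (1 + C * l * u) * E.rel_BC - m * E.rel_CA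
  linear_combination B * n * hC + B * n * (C * l) * E.eq_u h₂ + (1 - C * l) * E.prod_mul_prod

theorem discriminant_eq_zero (E : EliminationSystem A B C l m n u v w) (h₂ : (2 : F) ≠ 0)
    (hne : 1 + C * l + B * n * (C * l) ≠ 0) :
    1 - A * m - B * n - C * l + A * m * (B * n) + B * n * (C * l) + C * l * (A * m) = 0 := by
  refine (mul_eq_zero.1 ?_).resolve_right hne
  have h₁ := E.two_sub_mul h₂
  have h₃ := E.rotate.two_sub_mul h₂
  linear_combination (2 - A * m) * (2 - B * n) * (B * n) * (C * l) * E.rel_CA -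
    (2 - B * n) * (1 - A * m) * h₁ - (2 - A * m) * (1 - B * n - C * l) * h₃ -
    ((2 - B * n) * (C * l * A - (1 - C * l - A * m))) * h₁ +
    (1 - A * m - B * n - C * l + A * m * (B * n) + B * n * (C * l) + C * l * (A * m)) * h₃

theorem C_mul_l_eq (E : EliminationSystem A B C l m n u v w) (h₂ : (2 : F) ≠ 0)
    (hne : 2 - A * m ≠ 0)
    (hdisc : 1 - A * m - B * n - C * l + A * m * (B * n) + B * n * (C * l) + C * l * (A * m) = 0) :
    C * l = 1 + n := by
  have h : B * n * C - (1 - B * n - C * l) = 0 :=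
    (mul_eq_zero.1 ((E.two_sub_mul h₂).trans (by rw [hdisc, neg_zero]))).resolve_left hne
  linear_combination h - n * E.rel_BC

theorem solution (E : EliminationSystem A B C l m n u v w) (h₂ : (2 : F) ≠ 0)
    (hA : 2 - A * m ≠ 0) (hB : 2 - B * n ≠ 0) (hC : 2 - C * l ≠ 0)
    (hne : 1 + C * l + B * n * (C * l) ≠ 0) :
    (A * m = 1 + l ∧ B * n = 1 + m ∧ C * l = 1 + n) ∧
      u = -1 - n - l * n ∧ v = -1 - l - m * l ∧ w = -1 - m - n * m := by
  have hdisc := E.discriminant_eq_zero h₂ hne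
  have hCl := E.C_mul_l_eq h₂ hA hdisc
  have hAm := E.rotate.C_mul_l_eq h₂ hB (by linear_combination hdisc)
  have hBn := E.rotate.rotate.C_mul_l_eq h₂ hC (by linear_combination hdisc)
  refine ⟨⟨hAm, hBn, hCl⟩, ?_, ?_, ?_⟩
  · rw [E.eq_u h₂, hAm, hCl]; ring
  · rw [E.rotate.eq_u h₂, hAm, hBn]; ring
  · rw [E.rotate.rotate.eq_u h₂, hBn, hCl]; ring

end EliminationSystem

/-- The parameter `λ = α(q²) / γ(q)` of the dissection. -/
def lam : LaurentSeries ℤ := -(dilate 2 alpha * alpha * beta)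

/-- The parameter `μ = β(q²) / α(q)` of the dissection. -/
def mu : LaurentSeries ℤ := -(dilate 2 beta * beta * gamma)

/-- The parameter `ν = γ(q²) / β(q)` of the dissection. -/
def nu : LaurentSeries ℤ := -(dilate 2 gamma * gamma * alpha)

theorem lam_mem : lam ∈ residueClass ℤ (0 : ZMod 7) :=
  neg_mem (SetLike.mul_mem_graded (SetLike.mul_mem_graded (dilate_mem_residueClass 2 alpha_mem)
    alpha_mem) beta_mem)

theorem mu_mem : mu ∈ residueClass ℤ (0 : ZMod 7) :=
  neg_mem (SetLike.mul_mem_graded (SetLike.mul_mem_graded (dilate_mem_residueClass 2 beta_mem)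
    beta_mem) gamma_mem)

theorem nu_mem : nu ∈ residueClass ℤ (0 : ZMod 7) :=
  neg_mem (SetLike.mul_mem_graded (SetLike.mul_mem_graded (dilate_mem_residueClass 2 gamma_mem)
    gamma_mem) alpha_mem)

theorem alpha_mul_beta_mul_gamma : alpha * beta * gamma = -1 := alpha_beta_gamma_relations.1

theorem dilate_two_alpha : dilate 2 alpha = lam * gamma := by
  rw [lam]; linear_combination dilate 2 alpha * alpha_mul_beta_mul_gamma

theorem dilate_two_beta : dilate 2 beta = mu * alpha := by
  rw [mu]; linear_combination dilate 2 beta * alpha_mul_beta_mul_gamma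

theorem dilate_two_gamma : dilate 2 gamma = nu * beta := by
  rw [nu]; linear_combination dilate 2 gamma * alpha_mul_beta_mul_gamma

theorem lam_mul_mu_mul_nu : lam * mu * nu = 1 := by
  have h := congrArg (dilate 2) alpha_mul_beta_mul_gamma
  simp only [map_mul, map_neg, map_one, dilate_two_alpha, dilate_two_beta, dilate_two_gamma] at h
  linear_combination -h + lam * mu * nu * alpha_mul_beta_mul_gamma

theorem eliminationSystem : EliminationSystem (alpha ^ 3 * beta) (beta ^ 3 * gamma)
    (gamma ^ 3 * alpha) lam mu nu (-phiPart 2 * alpha) (-phiPart 1 * beta)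
    (-phiPart 4 * gamma) := by
  obtain ⟨h, hc, ha, hb⟩ := alpha_beta_gamma_relations
  obtain ⟨-, hu, hv, hA, hw, hB, hC⟩ := phiPart_relations
  rw [dilate_two_gamma] at hu hA hC
  rw [dilate_two_beta] at hv hB hC
  rw [dilate_two_alpha] at hA hw hB
  have hlmn := lam_mul_mu_mul_nu
  generalize alpha = a, beta = b, gamma = c, lam = l, mu = m, nu = n, phiPart 1 = u,
    phiPart 2 = v, phiPart 4 = w at *
  exact {
    prod_ABC := by linear_combination (a * b * c - 1) * ((a * b * c) ^ 2 + 1) * h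
    prod_lmn := hlmn
    rel_BC := by linear_combination -b * c * hb + (b ^ 2 * c ^ 3 + 1) * h
    rel_CA := by linear_combination -c * a * hc + (c ^ 2 * a ^ 3 + 1) * h
    rel_AB := by linear_combination -a * b * ha + (a ^ 2 * b ^ 3 + 1) * h
    linear_u := by linear_combination -a * hv + (2 - m * a ^ 2 * w) * h
    linear_v := by linear_combination -b * hu + (2 - n * b ^ 2 * v) * h
    linear_w := by linear_combination -c * hw + (2 - l * c ^ 2 * u) * h
    quadratic_u := by
      linear_combination -b * c * hB + (-2 - m + l * v * b * c ^ 2 * (a * b * c - 1)) * h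
    quadratic_v := by
      linear_combination -c * a * hC + (-2 - n + m * u * c * a ^ 2 * (a * b * c - 1)) * h
    quadratic_w := by
      linear_combination -a * b * hA + (-2 - l + n * w * a * b ^ 2 * (a * b * c - 1)) * h }

theorem HasLowestTerm.two_sub_ne_zero {n : ℤ} {f : LaurentSeries ℤ} (hf : HasLowestTerm n 1 f) :
    2 - f ≠ 0 := fun h => by
  have hcoeff := hf.coeff_eq
  rw [← sub_eq_zero.1 h, ← one_add_one_eq_two, HahnSeries.coeff_add] at hcoeff
  omega

theorem hasLowestTerm_alpha_pow : HasLowestTerm (-7) 1 (alpha ^ 3 * beta * mu) := by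
  rw [show alpha ^ 3 * beta * mu = alpha ^ 2 * beta * dilate 2 beta by rw [dilate_two_beta]; ring]
  simpa using
    ((hasLowestTerm_alpha.pow 2).mul hasLowestTerm_beta).mul (hasLowestTerm_beta.dilate 2)

theorem hasLowestTerm_beta_pow : HasLowestTerm 7 1 (beta ^ 3 * gamma * nu) := by
  rw [show beta ^ 3 * gamma * nu = beta ^ 2 * gamma * dilate 2 gamma by
    rw [dilate_two_gamma]; ring]
  simpa using
    ((hasLowestTerm_beta.pow 2).mul hasLowestTerm_gamma).mul (hasLowestTerm_gamma.dilate 2)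

theorem hasLowestTerm_gamma_pow : HasLowestTerm 0 1 (gamma ^ 3 * alpha * lam) := by
  rw [show gamma ^ 3 * alpha * lam = gamma ^ 2 * alpha * dilate 2 alpha by
    rw [dilate_two_alpha]; ring]
  simpa using
    ((hasLowestTerm_gamma.pow 2).mul hasLowestTerm_alpha).mul (hasLowestTerm_alpha.dilate 2)

theorem eliminationSystem_solution :
    (alpha ^ 3 * beta * mu = 1 + lam ∧ beta ^ 3 * gamma * nu = 1 + mu ∧
      gamma ^ 3 * alpha * lam = 1 + nu) ∧
    -phiPart 2 * alpha = -1 - nu - lam * nu ∧ -phiPart 1 * beta = -1 - lam - mu * lam ∧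
      -phiPart 4 * gamma = -1 - mu - nu * mu := by
  refine eliminationSystem.solution two_ne_zero hasLowestTerm_alpha_pow.two_sub_ne_zero
    hasLowestTerm_beta_pow.two_sub_ne_zero hasLowestTerm_gamma_pow.two_sub_ne_zero fun h => ?_
  have hcoeff := congrArg (HahnSeries.coeff · 0) h
  simp [hasLowestTerm_gamma_pow.coeff_eq,
    (hasLowestTerm_beta_pow.mul hasLowestTerm_gamma_pow).coeff_eq_zero (m := 0) (by decide)]
    at hcoeff

theorem cyclicTriple : CyclicTriple lam mu nu where
  prod_eq := lam_mul_mu_mul_nu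
  sum_eq := by
    obtain ⟨⟨hl, hm, hn⟩, -⟩ := eliminationSystem_solution
    have hprod : (1 + lam) * (1 + mu) * (1 + nu) = 1 := by
      rw [← hl, ← hm, ← hn]
      linear_combination eliminationSystem.prod_mul_prod
    linear_combination hprod - lam_mul_mu_mul_nu

theorem dissectionTriple : DissectionTriple lam mu nu alpha beta gamma := by
  obtain ⟨⟨hl, hm, hn⟩, -⟩ := eliminationSystem_solution
  have h := alpha_mul_beta_mul_gamma
  have hlmn := lam_mul_mu_mul_nu
  refine ⟨cyclicTriple, h, ?_, ?_, ?_⟩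
  · linear_combination -(lam * nu * gamma * hl) + gamma * alpha ^ 3 * beta * hlmn + alpha ^ 2 * h
  · linear_combination -(lam * mu * alpha * hm) + alpha * beta ^ 3 * gamma * hlmn + beta ^ 2 * h
  · linear_combination -(mu * nu * beta * hn) + beta * gamma ^ 3 * alpha * hlmn + gamma ^ 2 * h

end

/-! ### Norms of power series -/

section

open PowerSeries Topology
open Filter (Tendsto atTop)
open scoped PowerSeries.WithPiTopology
open HahnSeries (ofPowerSeries single)

section CyclicNorm

variable {R : Type*} [CommRing R]

/-- The product of the `d` conjugates `f(ζʲ q)` of the power series `f(q)`. For a primitive `d`-th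
root of unity `ζ` it is the norm of `f` down to the power series in `q ^ d`. -/
def cyclicNorm (ζ : R) (d : ℕ) : R⟦X⟧ →* R⟦X⟧ where
  toFun f := ∏ j ∈ Finset.range d, rescale (ζ ^ j) f
  map_one' := by simp
  map_mul' f g := by simp [Finset.prod_mul_distrib]

theorem cyclicNorm_apply (ζ : R) (d : ℕ) (f : R⟦X⟧) :
    cyclicNorm ζ d f = ∏ j ∈ Finset.range d, rescale (ζ ^ j) f := rfl

theorem rescale_expand {ζ : R} {d : ℕ} (hd : d ≠ 0) (hζ : ζ ^ d = 1) (f : R⟦X⟧) :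
    rescale ζ (expand d hd f) = expand d hd f := by
  ext n
  rw [coeff_rescale]
  by_cases hdvd : d ∣ n
  · obtain ⟨m, rfl⟩ := hdvd
    rw [pow_mul, hζ, one_pow, one_mul]
  · rw [coeff_expand_of_not_dvd d hd f hdvd, mul_zero]

theorem cyclicNorm_expand {ζ : R} {d : ℕ} (hd : d ≠ 0) (hζ : ζ ^ d = 1) (f : R⟦X⟧) :
    cyclicNorm ζ d (expand d hd f) = expand d hd f ^ d := by
  have hζj (j : ℕ) : (ζ ^ j) ^ d = 1 := by rw [pow_right_comm, hζ, one_pow]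
  simp [cyclicNorm_apply, rescale_expand hd (hζj _)]

theorem cyclicNorm_X {ζ : R} {d : ℕ} (hζ : ζ ^ d = 1) (hd : Odd d) : cyclicNorm ζ d X = X ^ d := by
  have hsum : d * ((d - 1) / 2) = ∑ j ∈ Finset.range d, j := by
    rw [Finset.sum_range_id, Nat.mul_div_assoc _ (Nat.Odd.sub_odd hd odd_one).two_dvd]
  have hone : ∏ j ∈ Finset.range d, ζ ^ j = 1 := by
    rw [Finset.prod_pow_eq_pow_sum, ← hsum, pow_mul, hζ, one_pow]
  simp only [cyclicNorm_apply, rescale_X, Finset.prod_mul_distrib, ← map_prod, hone]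
  simp

theorem tendsto_cyclicNorm [TopologicalSpace R] [IsTopologicalSemiring R] (ζ : R) (d : ℕ)
    {f : ℕ → R⟦X⟧} {g : R⟦X⟧} {k : ℕ → ℕ} (hk : Tendsto k atTop atTop)
    (h : ∀ N, X ^ k N ∣ f N - g) :
    Tendsto (fun N => cyclicNorm ζ d (f N)) atTop (𝓝 (cyclicNorm ζ d g)) := by
  simp only [cyclicNorm_apply]
  refine tendsto_finsetProd _ fun j _ => tendsto_of_X_pow_dvd_sub hk fun N => ?_
  rw [← map_sub]
  refine dvd_trans ?_ (map_dvd (rescale (ζ ^ j)) (h N))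
  rw [map_pow, rescale_X, mul_pow]
  exact dvd_mul_left _ _

variable [IsDomain R] {ζ : R} {d : ℕ}

theorem cyclicNorm_one_sub_X_pow (hζ : IsPrimitiveRoot ζ d) (hd : d ≠ 0) {n : ℕ}
    (hn : n.Coprime d) : cyclicNorm ζ d (1 - X ^ n) = 1 - X ^ (d * n) := by
  have hprim : IsPrimitiveRoot (C (ζ ^ n) : R⟦X⟧) d :=
    (hζ.pow_of_coprime n hn).map_of_injective C_injective
  have hprod := congrArg (Polynomial.eval 1)
    (X_pow_sub_C_eq_prod hprim (Nat.pos_of_ne_zero hd) (α := X ^ n) rfl)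
  simp only [Polynomial.eval_sub, Polynomial.eval_pow, Polynomial.eval_X, Polynomial.eval_C,
    Polynomial.eval_prod, one_pow] at hprod
  rw [mul_comm d n, pow_mul, hprod, cyclicNorm_apply]
  refine Finset.prod_congr rfl fun j _ => ?_
  rw [map_sub, map_one, map_pow, rescale_X, mul_pow, ← map_pow, ← map_pow, pow_right_comm]

/-- The conjugates of a root of a polynomial over the power series in `q ^ d` are the roots of that
polynomial, so Vieta's formula yields the norm. -/
theorem cyclicNorm_eq_of_root (hζ : ζ ^ d = 1) (hd : d ≠ 0) {p : Polynomial R⟦X⟧} (hp : p.Monic)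
    (hdeg : p.natDegree = d) {x : R⟦X⟧}
    (hx : (p.map (RingHomClass.toRingHom (expand d hd))).eval x = 0)
    (hinj : Set.InjOn (fun j => rescale (ζ ^ j) x) (Finset.range d)) :
    cyclicNorm ζ d x = (-1) ^ d * expand d hd (p.coeff 0) := by
  set P := p.map (RingHomClass.toRingHom (expand d hd)) with hP
  have hfix (j : ℕ) : P.map (rescale (ζ ^ j)) = P := by
    ext1 i
    have hζj : (ζ ^ j) ^ d = 1 := by rw [pow_right_comm, hζ, one_pow]
    simp [hP, rescale_expand hd hζj]
  have hroot (j : ℕ) : P.eval (rescale (ζ ^ j) x) = 0 := by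
    rw [← hfix j, Polynomial.eval_map_apply, hx, map_zero]
  have hmonic : P.Monic := hp.map _
  have hPdeg : P.degree = d := by
    rw [Polynomial.degree_eq_natDegree hmonic.ne_zero, hp.natDegree_map, hdeg]
  have hnodal : P = Lagrange.nodal (Finset.range d) fun j => rescale (ζ ^ j) x := by
    refine Polynomial.eq_of_degree_le_of_eval_index_eq _ hinj (by simp [hPdeg]) ?_ ?_ fun j hj => ?_
    · rw [hPdeg, Lagrange.degree_nodal, Finset.card_range]
    · rw [hmonic.leadingCoeff, Lagrange.nodal_monic.leadingCoeff]
    · exact (hroot j).trans (Lagrange.eval_nodal_at_node (v := fun j => rescale (ζ ^ j) x) hj).symm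
  have hzero : P.coeff 0 = ∏ j ∈ Finset.range d, (0 - rescale (ζ ^ j) x) := by
    rw [Polynomial.coeff_zero_eq_eval_zero, hnodal, Lagrange.eval_nodal]
  have hcoeff : P.coeff 0 = expand d hd (p.coeff 0) := Polynomial.coeff_map _ _
  rw [← hcoeff, hzero, cyclicNorm_apply]
  simp only [zero_sub, Finset.prod_neg, Finset.card_range, ← mul_assoc, ← mul_pow]
  simp

end CyclicNorm

theorem prod_range_mul_mul_prod_of_eq {M : Type*} [CommMonoid M] {d : ℕ} (hd : d ≠ 0)
    {f g : ℕ → M} (h : ∀ n, ¬d ∣ n → f n = g n) (N : ℕ) :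
    (∏ k ∈ Finset.range (d * N), f (k + 1)) * ∏ k ∈ Finset.range N, g (d * (k + 1)) =
      (∏ k ∈ Finset.range N, f (d * (k + 1))) * ∏ k ∈ Finset.range (d * N), g (k + 1) := by
  obtain ⟨e, rfl⟩ : ∃ e, d = e + 1 := ⟨d - 1, by omega⟩
  induction N with
  | zero => simp
  | succ N ih =>
    have hsplit (F : ℕ → M) : ∏ k ∈ Finset.range ((e + 1) * (N + 1)), F (k + 1) =
        (∏ k ∈ Finset.range ((e + 1) * N), F (k + 1)) *
          ((∏ i ∈ Finset.range e, F ((e + 1) * N + i + 1)) * F ((e + 1) * (N + 1))) := by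
      rw [mul_add_one (e + 1) N, Finset.prod_range_add, Finset.prod_range_succ _ e, ← add_assoc]
    have hblock : ∏ i ∈ Finset.range e, f ((e + 1) * N + i + 1) =
        ∏ i ∈ Finset.range e, g ((e + 1) * N + i + 1) := by
      refine Finset.prod_congr rfl fun i hi => h _ fun hdvd => ?_
      rw [add_assoc, Nat.dvd_add_right (dvd_mul_right _ _)] at hdvd
      have := Nat.le_of_dvd i.succ_pos hdvd
      have := Finset.mem_range.1 hi
      omega
    rw [hsplit, hsplit, hblock, Finset.prod_range_succ _ N, Finset.prod_range_succ _ N,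
      mul_mul_mul_comm, ih, mul_mul_mul_comm, mul_mul_mul_comm]
    ac_rfl

theorem cyclicNorm_prod_one_sub_X_pow {R : Type*} [CommRing R] [IsDomain R] {ζ : R} {p : ℕ}
    (hp : p.Prime) (hζ : IsPrimitiveRoot ζ p) (N : ℕ) :
    cyclicNorm ζ p (∏ k ∈ Finset.range (p * N), (1 - X ^ (k + 1))) *
        ∏ k ∈ Finset.range N, (1 - X ^ (p * p * (k + 1))) =
      (∏ k ∈ Finset.range N, (1 - X ^ (p * (k + 1)))) ^ p *
        ∏ k ∈ Finset.range (p * N), (1 - X ^ (p * (k + 1))) := by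
  have hcoprime (n : ℕ) (hn : ¬p ∣ n) : cyclicNorm ζ p (1 - X ^ n) = 1 - X ^ (p * n) :=
    cyclicNorm_one_sub_X_pow hζ hp.ne_zero ((hp.coprime_iff_not_dvd.2 hn).symm)
  have hdvd (n : ℕ) : cyclicNorm ζ p (1 - X ^ (p * n)) = (1 - X ^ (p * n)) ^ p := by
    have hexpand : expand p hp.ne_zero (1 - X ^ n : R⟦X⟧) = 1 - X ^ (p * n) := by
      rw [map_sub, map_one, map_pow, expand_X, ← pow_mul]
    rw [← hexpand, cyclicNorm_expand hp.ne_zero hζ.pow_eq_one]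
  simpa only [map_prod, hdvd, Finset.prod_pow, ← mul_assoc] using
    prod_range_mul_mul_prod_of_eq hp.ne_zero hcoprime N

theorem X_pow_dvd_prod_sub_map_J {b : ℕ} (hb : b ≠ 0) (N : ℕ) : (X : ℂ⟦X⟧) ^ N ∣
    ∏ k ∈ Finset.range N, (1 - X ^ (b * (k + 1))) - map (Int.castRingHom ℂ) (J b) := by
  have hdvd := map_dvd (map (Int.castRingHom ℂ)) (X_pow_dvd_qPochhammer_sub_qProd b hb N)
  rw [← J_eq_qProd, map_sub, map_qPochhammer] at hdvd
  simpa only [qPochhammer, map_pow, map_X, ← pow_mul, ← pow_add, add_comm b, ← mul_add_one]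
    using hdvd

theorem cyclicNorm_J_one {ζ : ℂ} {p : ℕ} (hp : p.Prime) (hζ : IsPrimitiveRoot ζ p) :
    cyclicNorm ζ p (map (Int.castRingHom ℂ) (J 1)) * map (Int.castRingHom ℂ) (J (p * p)) =
      map (Int.castRingHom ℂ) (J p) ^ (p + 1) := by
  have hlim {b : ℕ} (hb : b ≠ 0) :=
    tendsto_of_X_pow_dvd_sub Filter.tendsto_id (X_pow_dvd_prod_sub_map_J hb)
  have hsubseq : Tendsto (fun N => p * N) atTop atTop :=
    Filter.tendsto_id.const_mul_atTop' hp.pos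
  refine tendsto_nhds_unique ((tendsto_cyclicNorm ζ p hsubseq fun N =>
    X_pow_dvd_prod_sub_map_J one_ne_zero (p * N)).mul (hlim (mul_ne_zero hp.ne_zero hp.ne_zero))) ?_
  rw [pow_succ]
  refine (((hlim hp.ne_zero).pow p).mul ((hlim hp.ne_zero).comp hsubseq)).congr fun N => ?_
  simpa only [one_mul, Function.comp_apply] using (cyclicNorm_prod_one_sub_X_pow hp hζ N).symm

end

/-! ### The modular function `t` -/

section

open PowerSeries
open HahnSeries (ofPowerSeries single)

/-- The value of `hInv` on the 7-dissection of `J₁`. It is `1 / t`, a Hauptmodul of `Γ₀(7)`. -/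
def hauptmodul : LaurentSeries ℤ := hInv (decimate 7 lam) (decimate 7 mu) (decimate 7 nu)

theorem dilate_hauptmodul_eq_hInv : dilate 7 hauptmodul = hInv lam mu nu := by
  simp only [hauptmodul, hInv, map_sub, map_add, map_mul, map_pow, map_ofNat,
    dilate_decimate lam_mem, dilate_decimate mu_mem, dilate_decimate nu_mem]

theorem dilate_hauptmodul_eq_alpha_beta_gamma : dilate 7 hauptmodul =
    -(alpha ^ 3 * beta + beta ^ 3 * gamma + gamma ^ 3 * alpha) - 8 := by
  obtain ⟨⟨hl, hm, hn⟩, -⟩ := eliminationSystem_solution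
  rw [dilate_hauptmodul_eq_hInv, hInv]
  linear_combination cyclicTriple.sum_eq -
    (alpha ^ 3 * beta + beta ^ 3 * gamma + gamma ^ 3 * alpha) * lam_mul_mu_mul_nu +
    lam * nu * hl + lam * mu * hm + mu * nu * hn

theorem hasLowestTerm_hauptmodul : HasLowestTerm (-1) 1 hauptmodul := by
  have hα : HasLowestTerm (-7) (-1) (alpha ^ 3 * beta) := by
    simpa using (hasLowestTerm_alpha.pow 3).mul hasLowestTerm_beta
  have hβ : HasLowestTerm 0 (-1) (beta ^ 3 * gamma) := by
    simpa [pow_succ] using (hasLowestTerm_beta.pow 3).mul hasLowestTerm_gamma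
  have hγ : HasLowestTerm 7 1 (gamma ^ 3 * alpha) := by
    simpa using (hasLowestTerm_gamma.pow 3).mul hasLowestTerm_alpha
  have h8 {m : ℤ} (hm : m < 0) : (8 : LaurentSeries ℤ).coeff m = 0 := by
    simpa only [map_ofNat] using coeff_ofPowerSeries_of_neg (8 : ℤ⟦X⟧) hm
  have hcoeff (m : ℤ) : hauptmodul.coeff m =
      (-(alpha ^ 3 * beta + beta ^ 3 * gamma + gamma ^ 3 * alpha) - 8).coeff (7 * m) := by
    rw [← dilate_hauptmodul_eq_alpha_beta_gamma]
    exact (coeff_dilate_mul 7 _ _).symm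
  refine .of_coeff (fun m hm => ?_) ?_
  · simp [hcoeff, hα.coeff_eq_zero (m := 7 * m) (by omega),
      hβ.coeff_eq_zero (m := 7 * m) (by omega), hγ.coeff_eq_zero (m := 7 * m) (by omega),
      h8 (m := 7 * m) (by omega)]
  · simp [hcoeff, hα.coeff_eq, hβ.coeff_eq_zero (m := -7) (by decide),
      hγ.coeff_eq_zero (m := -7) (by decide), h8 (m := -7) (by decide)]

section ModularPolynomial

variable {R S : Type*} [CommRing R] [CommRing S]

/-- The polynomial whose root is `q⁷ J₁ / (q² J₄₉)` once `q` is replaced by `q⁷` in its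
coefficients, where `k = q h`: this is `DissectionTriple.modular_equation` cleared of the
denominators. -/
def modularPolynomial (k : R⟦X⟧) : Polynomial R⟦X⟧ :=
  .X ^ 7 + .C (7 * X) * .X ^ 6 + .C (21 * X ^ 2) * .X ^ 5 + .C (49 * X ^ 3) * .X ^ 4 +
    .C (7 * k * X ^ 3 + 147 * X ^ 4) * .X ^ 3 + .C (35 * k * X ^ 4 + 343 * X ^ 5) * .X ^ 2 +
    .C (49 * k * X ^ 5 + 343 * X ^ 6) * .X + .C (-(k ^ 2 * X ^ 5))

theorem modularPolynomial_monic (k : R⟦X⟧) : (modularPolynomial k).Monic := by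
  unfold modularPolynomial
  monicity!

theorem natDegree_modularPolynomial [Nontrivial R] (k : R⟦X⟧) :
    (modularPolynomial k).natDegree = 7 := by
  unfold modularPolynomial
  compute_degree!

theorem coeff_zero_modularPolynomial (k : R⟦X⟧) :
    (modularPolynomial k).coeff 0 = -(k ^ 2 * X ^ 5) := by
  simp [modularPolynomial, Polynomial.coeff_zero_eq_eval_zero]

theorem map_modularPolynomial (f : R →+* S) (k : R⟦X⟧) :
    (modularPolynomial k).map (map f) = modularPolynomial (map f k) := by
  simp [modularPolynomial, map_ofNat]

end ModularPolynomial

theorem eval_modularPolynomial {k x : ℤ⟦X⟧}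
    (hk : hauptmodul = single (-1) 1 * ofPowerSeries ℤ ℤ k)
    (hx : x * (X ^ 2 * J 49) = X ^ 7 * J 1) :
    ((modularPolynomial k).map (RingHomClass.toRingHom (expand 7 (by decide)))).eval x = 0 := by
  have hmod := dissectionTriple.modular_equation jUnit_one_div_pivot dilate_hauptmodul_eq_hInv
  set H := dilate 7 hauptmodul with hH
  set Y : LaurentSeries ℤ := ↑(pivot⁻¹ * jUnit 1) with hY
  have hK : ofPowerSeries ℤ ℤ (expand 7 (by decide) k) = ofPowerSeries ℤ ℤ X ^ 7 * H := by
    rw [hH, hk, map_mul, dilate_single, dilate_ofPowerSeries, ← map_pow,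
      HahnSeries.ofPowerSeries_X_pow, ← mul_assoc, HahnSeries.single_mul_single]
    simp
  have hXY : ofPowerSeries ℤ ℤ x = ofPowerSeries ℤ ℤ X ^ 7 * Y := by
    rw [hY, Units.val_mul, mul_left_comm, ← map_pow, val_jUnit, ← map_mul, ← hx, map_mul,
      ← val_pivot, mul_left_comm, Units.inv_mul, mul_one]
  apply HahnSeries.ofPowerSeries_injective (Γ := ℤ)
  simp only [modularPolynomial, Polynomial.eval_map, Polynomial.eval₂_add, Polynomial.eval₂_mul,
    Polynomial.eval₂_X_pow, Polynomial.eval₂_X, Polynomial.eval₂_C]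
  simp only [RingHom.coe_coe, map_add, map_mul, map_pow, map_neg, map_ofNat, expand_X, map_zero,
    hK, hXY]
  linear_combination ofPowerSeries ℤ ℤ X ^ 49 * hmod

theorem injOn_rescale_pow {R : Type*} [CommRing R] {ζ : R} {d m : ℕ} (hζ : IsPrimitiveRoot ζ d)
    (hm : m.Coprime d) {x : R⟦X⟧} (hx : coeff m x = 1) :
    Set.InjOn (fun j => rescale (ζ ^ j) x) (Finset.range d) := fun i hi j hj hij => by
  have hcoeff := congrArg (coeff m) hij
  simp only [coeff_rescale, hx, mul_one, pow_right_comm ζ _ m] at hcoeff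
  exact (hζ.pow_of_coprime m hm).pow_inj (Finset.mem_range.1 hi) (Finset.mem_range.1 hj) hcoeff

theorem cyclicNorm_of_eval_modularPolynomial {ζ : ℂ} (hζ : IsPrimitiveRoot ζ 7) {k x : ℤ⟦X⟧}
    (hx : ((modularPolynomial k).map (RingHomClass.toRingHom (expand 7 (by decide)))).eval x = 0)
    (hx₅ : coeff 5 x = 1) : cyclicNorm ζ 7 (map (Int.castRingHom ℂ) x) =
      map (Int.castRingHom ℂ) (expand 7 (by decide) k) ^ 2 * X ^ 35 := by
  have hcomm : (RingHomClass.toRingHom (expand 7 (by decide))).comp (map (Int.castRingHom ℂ)) =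
      (map (Int.castRingHom ℂ)).comp (RingHomClass.toRingHom (expand 7 (by decide))) := by
    ext1 f
    simp [map_expand]
  have hroot := congrArg (map (Int.castRingHom ℂ)) hx
  rw [← Polynomial.eval_map_apply, Polynomial.map_map, ← hcomm, ← Polynomial.map_map,
    map_modularPolynomial, map_zero] at hroot
  rw [cyclicNorm_eq_of_root hζ.pow_eq_one (by decide) (modularPolynomial_monic _)
    (natDegree_modularPolynomial _) hroot
    (injOn_rescale_pow hζ (m := 5) (by decide) (by simp [hx₅])),
    coeff_zero_modularPolynomial, map_expand]
  simp only [map_neg, map_mul, map_pow, expand_X, ← pow_mul]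
  ring

theorem exists_mul_J_eq : ∃ x : ℤ⟦X⟧, x * (X ^ 2 * J 49) = X ^ 7 * J 1 ∧ coeff 5 x = 1 := by
  obtain ⟨w, hw⟩ := (isUnit_J (b := 49) (by decide)).exists_right_inv
  have hw₀ : constantCoeff w = 1 := by
    simpa [constantCoeff_J] using congrArg constantCoeff hw
  refine ⟨X ^ 5 * (J 1 * w), by linear_combination X ^ 7 * J 1 * hw, ?_⟩
  simp [coeff_X_pow_mul', constantCoeff_J, hw₀]

theorem expand_seven_sq_mul_J {k : ℤ⟦X⟧}
    (hk : hauptmodul = single (-1) 1 * ofPowerSeries ℤ ℤ k) :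
    expand 7 (by decide) k ^ 2 * J 49 ^ 8 = J 7 ^ 8 := by
  obtain ⟨x, hx, hx₅⟩ := exists_mul_J_eq
  have hζ := Complex.isPrimitiveRoot_exp 7 (by decide)
  set ζ := Complex.exp (2 * Real.pi * Complex.I / (7 : ℕ))
  have hnorm := cyclicNorm_of_eval_modularPolynomial hζ (eval_modularPolynomial hk hx) hx₅
  have hJ := cyclicNorm_J_one (by decide) hζ
  have hJ₄₉ : cyclicNorm ζ 7 (map (Int.castRingHom ℂ) (J 49)) =
      map (Int.castRingHom ℂ) (J 49) ^ 7 := by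
    rw [← expand_J (b := 7) (by decide : 7 ≠ 0) (by decide), map_expand,
      cyclicNorm_expand (by decide) hζ.pow_eq_one]
  have hmul := congrArg (fun f => cyclicNorm ζ 7 (map (Int.castRingHom ℂ) f)) hx
  simp only [map_mul, map_pow, map_X, cyclicNorm_X hζ.pow_eq_one (by decide), hnorm, hJ₄₉] at hmul
  apply map_injective (Int.castRingHom ℂ) Int.cast_injective
  apply mul_left_cancel₀ (pow_ne_zero 49 X_ne_zero)
  simp only [map_mul, map_pow]
  linear_combination hmul * map (Int.castRingHom ℂ) (J 49) + X ^ 49 * hJ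

theorem expand_injective {R : Type*} [CommRing R] {d : ℕ} (hd : d ≠ 0) :
    Function.Injective (expand d hd : R⟦X⟧ → R⟦X⟧) := fun f g h => by
  ext n
  simpa only [coeff_expand_mul] using congrArg (coeff (d * n)) h

theorem mul_J_seven_pow_four {k : ℤ⟦X⟧} (hk₀ : constantCoeff k = 1)
    (hk : hauptmodul = single (-1) 1 * ofPowerSeries ℤ ℤ k) : k * J 7 ^ 4 = J 1 ^ 4 := by
  have hsq : expand 7 (by decide) (k * J 7 ^ 4) ^ 2 = expand 7 (by decide) (J 1 ^ 4) ^ 2 := by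
    have hexpand := expand_seven_sq_mul_J hk
    simp only [map_mul, map_pow, expand_J, ne_eq, OfNat.ofNat_ne_zero, not_false_eq_true,
      one_ne_zero]
    linear_combination hexpand
  rw [← map_pow, ← map_pow] at hsq
  rcases sq_eq_sq_iff_eq_or_eq_neg.1 (expand_injective _ hsq) with h | h
  · exact h
  · have h₀ := congrArg constantCoeff h
    simp [hk₀, constantCoeff_J] at h₀

/-- The series `t = q J₇⁴ / J₁⁴` as a unit of the ring of Laurent series. -/
def tUnit : (LaurentSeries ℤ)ˣ := qUnit * jUnit 7 ^ 4 * (jUnit 1 ^ 4)⁻¹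

theorem val_tUnit_inv : (↑tUnit⁻¹ : LaurentSeries ℤ) = hauptmodul := by
  obtain ⟨k, hk, hk₀⟩ := hasLowestTerm_hauptmodul
  have hJ : ofPowerSeries ℤ ℤ k * jUnit 7 ^ 4 = jUnit 1 ^ 4 := by
    simp only [val_jUnit, ← map_pow, ← map_mul, mul_J_seven_pow_four hk₀ hk]
  have hq : single (-1) 1 * (qUnit : LaurentSeries ℤ) = 1 := qUnit.inv_mul
  refine Units.inv_eq_of_mul_eq_one_left ?_
  rw [hk, tUnit, Units.val_mul, ← mul_assoc, Units.mul_inv_eq_one]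
  push_cast
  linear_combination ofPowerSeries ℤ ℤ k * jUnit 7 ^ 4 * hq + hJ

end

/-! ### The tower system of Laurent series -/

section

open PowerSeries
open HahnSeries (ofPowerSeries single)

theorem dilate_dilate {R : Type*} [CommRing R] (j k : ℕ) [NeZero j] [NeZero k]
    (f : LaurentSeries R) : dilate j (dilate k f) = dilate (j * k) f := by
  ext n
  by_cases hdvd : ((j * k : ℕ) : ℤ) ∣ n
  · obtain ⟨m, rfl⟩ := hdvd
    rw [coeff_dilate_mul, Nat.cast_mul, mul_assoc, coeff_dilate_mul, coeff_dilate_mul]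
  rw [coeff_dilate_of_not_dvd _ _ hdvd]
  by_cases hj : (j : ℤ) ∣ n
  · obtain ⟨m, rfl⟩ := hj
    rw [coeff_dilate_mul, coeff_dilate_of_not_dvd]
    exact fun hk => hdvd (by simpa using mul_dvd_mul_left (j : ℤ) hk)
  · exact coeff_dilate_of_not_dvd _ _ hj

theorem cyclicTriple_decimate :
    CyclicTriple (decimate 7 lam) (decimate 7 mu) (decimate 7 nu) where
  prod_eq := dilate_injective 7 <| by
    simpa only [map_mul, map_one, dilate_decimate lam_mem, dilate_decimate mu_mem,
      dilate_decimate nu_mem] using cyclicTriple.prod_eq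
  sum_eq := dilate_injective 7 <| by
    simpa only [map_add, map_mul, map_neg, map_one, dilate_decimate lam_mem,
      dilate_decimate mu_mem, dilate_decimate nu_mem] using cyclicTriple.sum_eq

theorem hInvTwo_decimate :
    hInvTwo (decimate 7 lam) (decimate 7 mu) (decimate 7 nu) = dilate 2 hauptmodul := by
  obtain ⟨⟨hl, hm, hn⟩, -⟩ := eliminationSystem_solution
  apply dilate_injective 7
  have hcomm : dilate 7 (dilate 2 hauptmodul) = dilate 2 (dilate 7 hauptmodul) :=
    (dilate_dilate 7 2 _).trans (dilate_dilate 2 7 _).symm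
  rw [hcomm, dilate_hauptmodul_eq_alpha_beta_gamma]
  simp only [hInvTwo, map_sub, map_add, map_neg, map_mul, map_pow, map_ofNat,
    dilate_decimate lam_mem, dilate_decimate mu_mem, dilate_decimate nu_mem, dilate_two_alpha,
    dilate_two_beta, dilate_two_gamma]
  linear_combination lam ^ 2 * mu * hn + mu ^ 2 * nu * hl + nu ^ 2 * lam * hm +
    (lam + mu + nu) * lam_mul_mu_mul_nu

/-- The eta quotient `q² J₁₄⁷ J₁ / (J₇⁷ J₂)`. -/
def vUnit : (LaurentSeries ℤ)ˣ := qUnit ^ 2 * (jUnit 14 ^ 7 * jUnit 1 * (jUnit 7 ^ 7 * jUnit 2)⁻¹)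

theorem vInv_decimate : vInv (decimate 7 lam) (decimate 7 mu) (decimate 7 nu) = 8 * ↑vUnit := by
  obtain ⟨-, hα, hβ, hγ⟩ := eliminationSystem_solution
  have hunits : dilateUnits 7 vUnit =
      qUnit ^ 14 * (jUnit 98 ^ 7 * jUnit 7 * (jUnit 49 ^ 7 * jUnit 14)⁻¹) := by
    simp only [vUnit, map_mul, map_inv, map_pow, dilateUnits_jUnit, dilateUnits_qUnit, ← pow_mul]
  apply dilate_injective 7
  rw [map_mul, map_ofNat, ← val_dilateUnits, hunits, ← phiPart_prod]
  simp only [vInv, map_sub, map_neg, map_one, map_mul, dilate_decimate lam_mem,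
    dilate_decimate mu_mem, dilate_decimate nu_mem]
  rw [mul_comm lam mu, mul_comm mu nu, ← hα, ← hβ, ← hγ]
  linear_combination -phiPart 1 * phiPart 2 * phiPart 4 * alpha_mul_beta_mul_gamma

/-- The series `J₂ / (q⁴ J₉₈)`. -/
def zUnit : (LaurentSeries ℤ)ˣ := (qUnit ^ 4)⁻¹ * jUnit 2 * (jUnit 98)⁻¹

theorem val_zUnit : (zUnit : LaurentSeries ℤ) = dilate 7 (decimate 7 mu) * alpha +
    dilate 7 (decimate 7 nu) * beta + dilate 7 (decimate 7 lam) * gamma - 1 := by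
  rw [zUnit, dilate_decimate lam_mem, dilate_decimate mu_mem, dilate_decimate nu_mem,
    ← dilate_two_jUnit_one_div_pivot, dilate_two_alpha, dilate_two_beta, dilate_two_gamma]
  ring

/-- The series `q² J₄₉ / J₁`. -/
def yUnit : (LaurentSeries ℤ)ˣ := pivot * (jUnit 1)⁻¹

theorem val_yUnit_inv : (↑yUnit⁻¹ : LaurentSeries ℤ) = alpha + beta + gamma - 1 := by
  rw [← jUnit_one_div_pivot, yUnit, mul_inv_rev, inv_inv, mul_comm]

theorem decimate_mul_eq_zero {r s : ZMod 7} {f g : LaurentSeries ℤ} (hf : f ∈ residueClass ℤ r)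
    (hg : g ∈ residueClass ℤ s) (hrs : r + s ≠ 0) : decimate 7 (f * g) = 0 :=
  decimate_eq_zero (SetLike.mul_mem_graded hf hg) hrs

/-- The series `p₁ = J₂⁴ J₇⁴ / (q J₁⁴ J₁₄⁴)` as a unit of the ring of Laurent series. -/
def pOneUnit : (LaurentSeries ℤ)ˣ :=
  jUnit 2 ^ 4 * jUnit 7 ^ 4 * (qUnit * jUnit 1 ^ 4 * jUnit 14 ^ 4)⁻¹

/-- The series `(1 + 7 p₀) / 8 = J₂⁷ J₇ / (J₁⁷ J₁₄)` as a unit of the ring of Laurent series. -/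
def pZeroUnit : (LaurentSeries ℤ)ˣ := jUnit 2 ^ 7 * jUnit 7 * (jUnit 1 ^ 7 * jUnit 14)⁻¹

theorem tUnit_eq : tUnit = dilateUnits 7 tUnit⁻¹ * yUnit ^ 4 := by
  simp only [tUnit, yUnit, pivot, map_mul, map_inv, map_pow, dilateUnits_jUnit, dilateUnits_qUnit]
  apply Additive.ofMul.injective
  simp only [ofMul_mul, ofMul_pow, ofMul_inv]
  abel

theorem dilateUnits_mul_pOneUnit : dilateUnits 7 (dilateUnits 2 tUnit⁻¹) * pOneUnit =
    dilateUnits 7 tUnit⁻¹ * zUnit ^ 4 * yUnit ^ 4 := by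
  simp only [tUnit, pOneUnit, yUnit, zUnit, pivot, map_mul, map_inv, map_pow, dilateUnits_jUnit,
    dilateUnits_qUnit]
  apply Additive.ofMul.injective
  simp only [ofMul_mul, ofMul_pow, ofMul_inv]
  abel

theorem pZeroUnit_eq_dilateUnits_vUnit_mul :
    pZeroUnit = dilateUnits 7 vUnit * zUnit ^ 7 * yUnit ^ 7 := by
  simp only [pZeroUnit, vUnit, yUnit, zUnit, pivot, map_mul, map_inv, map_pow, dilateUnits_jUnit,
    dilateUnits_qUnit]
  apply Additive.ofMul.injective
  simp only [ofMul_mul, ofMul_pow, ofMul_inv]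
  abel

theorem pOneUnit_eq : pOneUnit = tUnit * dilateUnits 2 tUnit⁻¹ := by
  simp only [tUnit, pOneUnit, map_mul, map_inv, map_pow, dilateUnits_jUnit, dilateUnits_qUnit]
  apply Additive.ofMul.injective
  simp only [ofMul_mul, ofMul_pow, ofMul_inv]
  abel

theorem pZeroUnit_eq_vUnit_mul : pZeroUnit = vUnit * dilateUnits 2 tUnit⁻¹ ^ 2 * tUnit ^ 2 := by
  simp only [tUnit, pZeroUnit, vUnit, map_mul, map_inv, map_pow, dilateUnits_jUnit,
    dilateUnits_qUnit]
  apply Additive.ofMul.injective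
  simp only [ofMul_mul, ofMul_pow, ofMul_inv]
  abel

/-- The tower system formed by the 7-dissection of `J₁` in the ring of Laurent series. -/
def towerSystem (p₀ : LaurentSeries ℤ) (hp₀ : 1 + 7 * p₀ = 8 * ↑pZeroUnit) :
    TowerSystem (LaurentSeries ℤ) where
  V := dilate 7
  U := decimate 7
  l := decimate 7 lam
  m := decimate 7 mu
  n := decimate 7 nu
  a := alpha
  b := beta
  c := gamma
  t := tUnit
  y := yUnit
  p₀ := p₀
  p₁ := pOneUnit
  U_V_mul := decimate_dilate_mul 7
  U_one := by simpa using decimate_dilate 7 (1 : LaurentSeries ℤ)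
  U_a := decimate_eq_zero alpha_mem (by decide)
  U_b := decimate_eq_zero beta_mem (by decide)
  U_c := decimate_eq_zero gamma_mem (by decide)
  U_ab := decimate_mul_eq_zero alpha_mem beta_mem (by decide)
  U_bc := decimate_mul_eq_zero beta_mem gamma_mem (by decide)
  U_ca := decimate_mul_eq_zero gamma_mem alpha_mem (by decide)
  cyclic := cyclicTriple_decimate
  dissection := by
    rw [dilate_decimate lam_mem, dilate_decimate mu_mem, dilate_decimate nu_mem]
    exact dissectionTriple
  t_mul_h := by rw [← hauptmodul, ← val_tUnit_inv, Units.mul_inv]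
  y_mul_Y := by rw [← val_yUnit_inv, Units.mul_inv]
  t_eq := by
    rw [← hauptmodul, ← val_tUnit_inv, ← val_dilateUnits]
    exact_mod_cast congrArg Units.val tUnit_eq
  h₂_mul_p₁ := by
    rw [hInvTwo_decimate, ← hauptmodul, ← val_tUnit_inv, ← val_zUnit]
    simp only [← val_dilateUnits]
    exact_mod_cast congrArg Units.val dilateUnits_mul_pOneUnit
  one_add_p₀ := by
    rw [hp₀, vInv_decimate, ← val_zUnit, pZeroUnit_eq_dilateUnits_vUnit_mul, map_mul, map_ofNat,
      ← val_dilateUnits]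
    push_cast
    ring
  p₁_eq := by
    rw [hInvTwo_decimate, ← val_tUnit_inv, ← val_dilateUnits, pOneUnit_eq, Units.val_mul]
  one_add_p₀_eq := by
    rw [hp₀, hInvTwo_decimate, vInv_decimate, ← val_tUnit_inv, ← val_dilateUnits,
      pZeroUnit_eq_vUnit_mul]
    push_cast
    ring
  h₂_ne_zero := by
    rw [hInvTwo_decimate, ← val_tUnit_inv, ← val_dilateUnits]
    exact Units.ne_zero _

end

/-! ### Expansions in powers of `t` -/

section

open PowerSeries
open HahnSeries (ofPowerSeries)

theorem tpowSum_add (t : ℤ⟦X⟧) (c d : ℕ → ℤ) :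
    tpowSum t (fun n => c n + d n) = tpowSum t c + tpowSum t d := by
  ext m
  simp only [tpowSum, map_add, coeff_mk, add_mul, Finset.sum_add_distrib]

theorem tpowSum_single {t : ℤ⟦X⟧} (ht : X ∣ t) (M : ℕ) (c : ℤ) :
    tpowSum t (Pi.single M c) = C c * t ^ M := by
  ext m
  simp only [tpowSum, coeff_mk, Pi.single_apply, coeff_C_mul, ite_mul, zero_mul,
    Finset.sum_ite_eq', Finset.mem_range]
  split_ifs with hm
  · rfl
  · rw [X_pow_dvd_iff.1 (pow_dvd_pow_of_dvd ht M) m (by omega), mul_zero]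

/-- The series `∑_{n ≥ 4} d(n) 7 ^ ⌊(7 n - k) / 4⌋ tⁿ`, as an additive function of `d`. The
subtraction is truncated, which is harmless for `k ≤ 28`. -/
def weightedSum (t : ℤ⟦X⟧) (k : ℕ) : (ℕ → ℤ) →+ ℤ⟦X⟧ :=
  AddMonoidHom.mk' (fun d => tpowSum t fun n => if 4 ≤ n then d n * 7 ^ ((7 * n - k) / 4) else 0)
    fun c d => by
      rw [← tpowSum_add]
      congr 1
      ext n
      split_ifs <;> simp [add_mul]

theorem weightedSum_single {t : ℤ⟦X⟧} (ht : X ∣ t) (k : ℕ) {M : ℕ} (hM : 4 ≤ M) (c : ℤ) :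
    weightedSum t k (Pi.single M c) = C (c * 7 ^ ((7 * M - k) / 4)) * t ^ M := by
  rw [← tpowSum_single ht]
  refine congrArg (tpowSum t) (funext fun n => ?_)
  rcases eq_or_ne n M with rfl | hn
  · simp [hM]
  · simp [hn]

/-- The expansion of the theorem as an additive function of the integers `d(3, 0)` and
`d(n, i)`. -/
def oddExpansion (t p₀ : ℤ⟦X⟧) (p₁ : LaurentSeries ℤ) :
    ℤ × (ℕ → ℕ → ℤ) →+ LaurentSeries ℤ :=
  AddMonoidHom.mk'
    (fun x =>
      ((7 * x.1 : ℤ) : LaurentSeries ℤ) * ((ofPowerSeries ℤ ℤ p₀ + p₁) * ofPowerSeries ℤ ℤ t ^ 3) +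
        ofPowerSeries ℤ ℤ (p₀ * weightedSum t 20 fun n => x.2 n 0) +
        p₁ * ofPowerSeries ℤ ℤ (weightedSum t 24 fun n => x.2 n 1) +
        ofPowerSeries ℤ ℤ (weightedSum t 24 fun n => x.2 n 2))
    fun x y => by
      have weightedSum_add (k i : ℕ) : (weightedSum t k fun n => (x + y).2 n i) =
          (weightedSum t k fun n => x.2 n i) + weightedSum t k fun n => y.2 n i :=
        map_add (weightedSum t k) _ _
      simp only [weightedSum_add, map_add, mul_add, Prod.fst_add, Int.cast_add]
      ring

theorem term_mem_range_oddExpansion {t p₀ : ℤ⟦X⟧} (ht : X ∣ t) (p₁ : LaurentSeries ℤ) {M : ℕ}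
    (hM : 4 ≤ M) {a b c : ℤ} (ha : 7 ^ ((7 * M - 20) / 4) ∣ a) (hb : 7 ^ ((7 * M - 24) / 4) ∣ b)
    (hc : 7 ^ ((7 * M - 24) / 4) ∣ c) :
    (a * ofPowerSeries ℤ ℤ p₀ + b * p₁ + c) * ofPowerSeries ℤ ℤ t ^ M ∈
      (oddExpansion t p₀ p₁).range := by
  obtain ⟨u, rfl⟩ := ha
  obtain ⟨v, rfl⟩ := hb
  obtain ⟨w, rfl⟩ := hc
  refine ⟨(0, fun n i =>
    Pi.single (M := fun _ => ℤ) M (if i = 0 then u else if i = 1 then v else w) n), ?_⟩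
  have ofPowerSeries_C (z : ℤ) : ofPowerSeries ℤ ℤ (C z) = (z : LaurentSeries ℤ) := by
    rw [eq_intCast C, map_intCast]
  simp only [oddExpansion, AddMonoidHom.mk'_apply, weightedSum_single ht _ hM, map_mul, map_pow,
    ofPowerSeries_C, reduceIte, one_ne_zero, OfNat.ofNat_ne_zero, OfNat.ofNat_ne_one]
  push_cast
  ring

theorem coeffSpan_oddCondition_le_range_oddExpansion {t p₀ : ℤ⟦X⟧} (hX : X ∣ t)
    (p₁ : LaurentSeries ℤ) {u : (LaurentSeries ℤ)ˣ} (hu : ↑u = ofPowerSeries ℤ ℤ t) :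
    coeffSpan u (ofPowerSeries ℤ ℤ p₀) p₁ OddCondition ≤ (oddExpansion t p₀ p₁).range := by
  refine (AddSubgroup.closure_le _).2 ?_
  rintro _ ⟨m, a, b, c, ⟨hlt, heq, da, db, dc⟩, rfl⟩
  rcases lt_or_ge m 3 with hm | hm
  · obtain ⟨rfl, rfl, rfl⟩ := hlt hm
    simp only [Int.cast_zero, zero_mul, add_zero]
    exact zero_mem _
  obtain ⟨M, rfl⟩ := Int.eq_ofNat_of_zero_le (show 0 ≤ m by omega)
  rw [zpow_natCast, Units.val_pow_eq_pow_val, hu]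
  rcases (show M = 3 ∨ 4 ≤ M by omega) with rfl | hM
  · obtain ⟨rfl, rfl⟩ := heq rfl
    obtain ⟨d, rfl⟩ : 7 ∣ b := by simpa using da
    refine ⟨(d, 0), ?_⟩
    have weightedSum_zero (k : ℕ) : (weightedSum t k fun _ => 0) = 0 := map_zero _
    simp only [oddExpansion, AddMonoidHom.mk'_apply, Pi.zero_apply, weightedSum_zero, mul_zero,
      map_zero]
    push_cast
    ring
  · exact term_mem_range_oddExpansion hX p₁ hM ((pow_dvd_pow 7 (by omega)).trans da)
      ((pow_dvd_pow 7 (by omega)).trans db) ((pow_dvd_pow 7 (by omega)).trans dc)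

theorem X_dvd_of_mul_J_pow {t : ℤ⟦X⟧} (ht : t * J 1 ^ 4 = X * J 7 ^ 4) : X ∣ t :=
  ((isUnit_J one_ne_zero).pow 4).dvd_mul_right.1 ⟨_, ht⟩

theorem val_tUnit {t : ℤ⟦X⟧} (ht : t * J 1 ^ 4 = X * J 7 ^ 4) :
    ↑tUnit = ofPowerSeries ℤ ℤ t := by
  rw [tUnit, Units.val_mul, Units.mul_inv_eq_iff_eq_mul]
  simp only [Units.val_mul, Units.val_pow_eq_pow_val, val_jUnit, val_qUnit, ← map_mul,
    ← map_pow, ht]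

theorem val_pOneUnit {p₁ : LaurentSeries ℤ}
    (hp₁ : p₁ * ofPowerSeries ℤ ℤ (X * J 1 ^ 4 * J 14 ^ 4) =
      ofPowerSeries ℤ ℤ (J 2 ^ 4 * J 7 ^ 4)) :
    ↑pOneUnit = p₁ := by
  rw [pOneUnit, Units.val_mul, Units.mul_inv_eq_iff_eq_mul]
  simp only [Units.val_mul, Units.val_pow_eq_pow_val, val_jUnit, val_qUnit, ← map_mul,
    ← map_pow, hp₁]

theorem val_pZeroUnit {p₀ : ℤ⟦X⟧} (hp₀ : (1 + 7 * p₀) * (J 1 ^ 7 * J 14) = 8 * J 2 ^ 7 * J 7) :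
    1 + 7 * ofPowerSeries ℤ ℤ p₀ = 8 * ↑pZeroUnit := by
  rw [pZeroUnit, Units.val_mul, ← mul_assoc, Units.eq_mul_inv_iff_mul_eq]
  simpa only [Units.val_mul, Units.val_pow_eq_pow_val, val_jUnit, map_mul, map_pow, map_add,
    map_one, map_ofNat, mul_assoc] using congrArg (ofPowerSeries ℤ ℤ) hp₀

theorem zUnit_pow_mul_yUnit_pow : zUnit ^ 5 * yUnit ^ 16 =
    qUnit ^ 12 * jUnit 2 ^ 5 * jUnit 49 ^ 16 * (jUnit 1 ^ 16 * jUnit 98 ^ 5)⁻¹ := by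
  rw [zUnit, yUnit, pivot]
  apply Additive.ofMul.injective
  simp only [ofMul_mul, ofMul_pow, ofMul_inv]
  abel

theorem twist_towerSystem {A p₀ : LaurentSeries ℤ} (hp₀ : 1 + 7 * p₀ = 8 * ↑pZeroUnit)
    (hA : A * ofPowerSeries ℤ ℤ (J 1 ^ 16 * J 98 ^ 5) =
      ofPowerSeries ℤ ℤ (X ^ 12 * J 2 ^ 5 * J 49 ^ 16)) :
    (towerSystem p₀ hp₀).twist 5 16 = A := by
  have twist_eq : (towerSystem p₀ hp₀).twist 5 16 = ↑(zUnit ^ 5 * yUnit ^ 16) := by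
    rw [Units.val_mul, Units.val_pow_eq_pow_val, val_zUnit, Units.val_pow_eq_pow_val]
    rfl
  rw [twist_eq, zUnit_pow_mul_yUnit_pow, Units.val_mul, Units.mul_inv_eq_iff_eq_mul]
  simp only [Units.val_mul, Units.val_pow_eq_pow_val, val_jUnit, val_qUnit, ← map_mul,
    ← map_pow, hA]

end

end D5Tower

/-- in the d₅ tower, for every `α ≥ 1` there are integers `d(3,0)`, `d(n,i)`
with `L_{2α−1} = 7·d(3,0)·(p₀+p₁)·t³ + p₀·∑_{n≥4} d(n,0)·7^{⌊(7n−20)/4⌋}·tⁿ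
 + p₁·∑_{n≥4} d(n,1)·7^{⌊(7n−24)/4⌋}·tⁿ + ∑_{n≥4} d(n,2)·7^{⌊(7n−24)/4⌋}·tⁿ`.
Here `t = q·J_7^4/J_1^4`, `p₀ = (8·J_2^7·J_7/(J_1^7·J_14) − 1)/7`,
`p₁ = q⁻¹·J_2^4·J_7^4/(J_1^4·J_14^4)`, all given by their defining equations. -/
theorem stmt15
    (t : PowerSeries ℤ) (ht : t * (J 1) ^ 4 = PowerSeries.X * (J 7) ^ 4)
    (p0 : PowerSeries ℤ)
    (hp0 : (1 + 7 * p0) * ((J 1) ^ 7 * J 14) = 8 * (J 2) ^ 7 * J 7)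
    (p1 : LaurentSeries ℤ)
    (hp1 : p1 * HahnSeries.ofPowerSeries ℤ ℤ (PowerSeries.X * (J 1) ^ 4 * (J 14) ^ 4)
        = HahnSeries.ofPowerSeries ℤ ℤ ((J 2) ^ 4 * (J 7) ^ 4))
    (U : LaurentSeries ℤ → LaurentSeries ℤ)
    (hU : ∀ (f : LaurentSeries ℤ) (n : ℤ), (U f).coeff n = f.coeff (7 * n))
    (A5 : LaurentSeries ℤ)
    (hA5 : A5 * HahnSeries.ofPowerSeries ℤ ℤ ((J 1) ^ 16 * (J 98) ^ 5)
        = HahnSeries.ofPowerSeries ℤ ℤ (PowerSeries.X ^ 12 * (J 2) ^ 5 * (J 49) ^ 16))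
    (L : ℕ → LaurentSeries ℤ) (hL0 : L 0 = 1)
    (hLodd : ∀ β : ℕ, L (2 * β + 1) = U (A5 * L (2 * β)))
    (hLeven : ∀ β : ℕ, L (2 * β + 2) = U (L (2 * β + 1)))
    (α : ℕ) (hα : 1 ≤ α) :
    ∃ d30 : ℤ, ∃ d : ℕ → ℕ → ℤ,
      L (2 * α - 1)
        = ((7 * d30 : ℤ) : LaurentSeries ℤ) *
            ((HahnSeries.ofPowerSeries ℤ ℤ p0 + p1) *
              (HahnSeries.ofPowerSeries ℤ ℤ t) ^ 3)
        + HahnSeries.ofPowerSeries ℤ ℤ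
            (p0 * tpowSum t fun n =>
              if 4 ≤ n then d n 0 * 7 ^ ((7 * n - 20) / 4) else 0)
        + p1 * HahnSeries.ofPowerSeries ℤ ℤ
            (tpowSum t fun n =>
              if 4 ≤ n then d n 1 * 7 ^ ((7 * n - 24) / 4) else 0)
        + HahnSeries.ofPowerSeries ℤ ℤ
            (tpowSum t fun n =>
              if 4 ≤ n then d n 2 * 7 ^ ((7 * n - 24) / 4) else 0) := by
  obtain rfl : U = D5Tower.decimate 7 := funext fun f => HahnSeries.ext <| funext <| hU f
  obtain rfl := D5Tower.val_pOneUnit hp1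
  have hp₀ := D5Tower.val_pZeroUnit hp0
  obtain rfl := D5Tower.twist_towerSystem hp₀ hA5
  obtain ⟨i, rfl⟩ := Nat.exists_eq_add_of_le' hα
  have mem : L (2 * i + 1) ∈ (D5Tower.towerSystem (HahnSeries.ofPowerSeries ℤ ℤ p0) hp₀).span
      D5Tower.OddCondition :=
    D5Tower.TowerSystem.odd_mem_span_oddCondition _ hL0 hLodd hLeven i
  obtain ⟨⟨d30, d⟩, expansion⟩ := D5Tower.coeffSpan_oddCondition_le_range_oddExpansion
    (D5Tower.X_dvd_of_mul_J_pow ht) _ (D5Tower.val_tUnit ht) mem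
  exact ⟨d30, d, expansion.symm⟩
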